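/- arXiv:2508.08870 — 2 statements merged into one kernel-verified Lean document; each statement's English description precedes it below -/
import Mathlib

section
/- Let b = 1/48 and fix an integer d ≥ 2. Identify each norm on ℝ^d with its unit ball and endow the space of all norms on ℝ^d with the topology induced by the Hausdorff distance between unit balls. Then the set of norms ‖·‖ on ℝ^d failing the following property is meagre: for every ε > 0 there exists n₀ such that for every n > n₀, every set P of n points in ℝ^d whose affine span is all of ℝ^d determines at least (b·d − ε)·n distinct distances with respect to ‖·‖. -/
/-- The space of norms on `ℝ^d`, each norm represented by a seminorm that
vanishes only at `0`. -/
def NormOn (d : ℕ) : Type :=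
  {N : Seminorm ℝ (EuclideanSpace ℝ (Fin d)) // ∀ x, N x = 0 → x = 0}

/-- The unit ball of a norm on `ℝ^d`. -/
def NormOn.unitBall {d : ℕ} (N : NormOn d) : Set (EuclideanSpace ℝ (Fin d)) :=
  {x | N.1 x ≤ 1}

/-- The space of norms on `ℝ^d`, with the topology induced by the Hausdorff
distance between unit balls. -/
noncomputable instance (d : ℕ) : PseudoEMetricSpace (NormOn d) where
  edist N M := EMetric.hausdorffEdist N.unitBall M.unitBall
  edist_self N := EMetric.hausdorffEdist_self
  edist_comm N M := EMetric.hausdorffEdist_comm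
  edist_triangle N M K := EMetric.hausdorffEdist_triangle

section PartP1

open scoped ENNReal

lemma NormOn.exists_upper {d : ℕ} (N : Seminorm ℝ (EuclideanSpace ℝ (Fin d))) :
    ∃ C : ℝ, 0 < C ∧ ∀ x, N x ≤ C * ‖x‖ := by
  refine ⟨1 + ∑ i, N (EuclideanSpace.single i (1:ℝ)), ?_, ?_⟩
  · have : 0 ≤ ∑ i, N (EuclideanSpace.single i (1:ℝ)) := Finset.sum_nonneg (fun i _ => apply_nonneg N _)
    linarith
  · intro x
    have hx : x = ∑ i, x i • EuclideanSpace.single i (1:ℝ) := by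
      ext j
      simp [Finset.sum_apply, Pi.single_apply]
    have h1 : N x ≤ ∑ i, N (x i • EuclideanSpace.single i (1:ℝ)) := by
      conv_lhs => rw [hx]
      exact map_sum_le_sum N _ Finset.univ
    have h2 : ∑ i, N (x i • EuclideanSpace.single i (1:ℝ)) ≤ ∑ i, N (EuclideanSpace.single i (1:ℝ)) * ‖x‖ := by
      apply Finset.sum_le_sum
      intro i _
      rw [map_smul_eq_mul, mul_comm]
      exact mul_le_mul_of_nonneg_left (PiLp.norm_apply_le x i) (apply_nonneg N _)
    rw [← Finset.sum_mul] at h2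
    nlinarith [norm_nonneg x]
where
  map_sum_le_sum (N : Seminorm ℝ (EuclideanSpace ℝ (Fin d))) (f : Fin d → EuclideanSpace ℝ (Fin d))
    (s : Finset (Fin d)) : N (∑ i ∈ s, f i) ≤ ∑ i ∈ s, N (f i) := by
    classical
    induction s using Finset.induction_on with
    | empty => simp
    | insert a s ha ih =>
      rw [Finset.sum_insert ha, Finset.sum_insert ha]
      exact (map_add_le_add N _ _).trans (by linarith)

lemma NormOn.continuous_semi {d : ℕ} (N : Seminorm ℝ (EuclideanSpace ℝ (Fin d))) : Continuous N := by
  obtain ⟨C, hC, h⟩ := NormOn.exists_upper N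
  rw [Metric.continuous_iff]
  intro b ε hε
  refine ⟨ε / C, by positivity, fun a ha => ?_⟩
  rw [dist_eq_norm] at ha
  rw [Real.dist_eq]
  have h1 : |N a - N b| ≤ N (a - b) := abs_sub_map_le_sub N a b
  have h2 := h (a - b)
  have : C * ‖a - b‖ < ε := by rwa [lt_div_iff₀' hC] at ha
  linarith

lemma NormOn.exists_lower {d : ℕ} (N : NormOn d) :
    ∃ c : ℝ, 0 < c ∧ ∀ x, c * ‖x‖ ≤ N.1 x := by
  by_cases hne : (Metric.sphere (0 : EuclideanSpace ℝ (Fin d)) 1).Nonempty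
  · obtain ⟨x0, hx0, hmin⟩ := (isCompact_sphere (0 : EuclideanSpace ℝ (Fin d)) 1).exists_isMinOn hne
      (NormOn.continuous_semi N.1).continuousOn
    have hx0' : x0 ≠ 0 := by
      rintro rfl; simp at hx0
    have hpos : 0 < N.1 x0 := lt_of_le_of_ne (apply_nonneg N.1 _) (fun h => hx0' (N.2 _ h.symm))
    refine ⟨N.1 x0, hpos, fun x => ?_⟩
    by_cases hx : x = 0
    · subst hx; simp
    have hxn : 0 < ‖x‖ := norm_pos_iff.mpr hx
    have hm : (‖x‖⁻¹ • x) ∈ Metric.sphere (0 : EuclideanSpace ℝ (Fin d)) 1 := by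
      simp [norm_smul, hxn.ne']
    have := hmin hm
    simp only [Set.mem_ofPred_eq, map_smul_eq_mul, norm_inv, norm_norm] at this
    rw [inv_mul_eq_div, le_div_iff₀ hxn] at this
    exact this
  · refine ⟨1, one_pos, fun x => ?_⟩
    by_cases hx : x = 0
    · subst hx; simp
    have hxn : 0 < ‖x‖ := norm_pos_iff.mpr hx
    exact absurd ⟨‖x‖⁻¹ • x, by simp [norm_smul, hxn.ne']⟩ hne

lemma NormOn.edist_def' {d : ℕ} (N M : NormOn d) :
    edist N M = Metric.hausdorffEDist N.unitBall M.unitBall := rfl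

lemma NormOn.close_of_edist {d : ℕ} (N : NormOn d) {ε : ℝ} (hε : 0 < ε) :
    ∃ δ : ℝ≥0∞, 0 < δ ∧ ∀ M : NormOn d, edist M N < δ → ∀ x, |M.1 x - N.1 x| ≤ ε * ‖x‖ := by
  obtain ⟨C, hC, hCN⟩ := NormOn.exists_upper N.1
  obtain ⟨c, hc, hcN⟩ := NormOn.exists_lower N
  set δ : ℝ := min (1 / (2 * C)) (ε / (2 * C * C)) with hδ
  have hδ0 : 0 < δ := by positivity
  have hδ1 : C * δ ≤ 1 / 2 := by
    have : δ ≤ 1 / (2 * C) := min_le_left _ _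
    calc C * δ ≤ C * (1 / (2 * C)) := by gcongr
      _ = 1 / 2 := by field_simp
  have hδ2 : 2 * C * C * δ ≤ ε := by
    have : δ ≤ ε / (2 * C * C) := min_le_right _ _
    calc 2 * C * C * δ ≤ 2 * C * C * (ε / (2 * C * C)) := by gcongr
      _ = ε := by field_simp
  refine ⟨ENNReal.ofReal δ, by simpa using hδ0, fun M hM => ?_⟩
  rw [NormOn.edist_def'] at hM
  -- basic facts
  have hA : ∀ y, M.1 y ≤ 1 → ∃ x, N.1 x ≤ 1 ∧ ‖y - x‖ ≤ δ := by
    intro y hy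
    obtain ⟨x, hx, hxy⟩ := Metric.exists_edist_lt_of_hausdorffEDist_lt (show y ∈ M.unitBall from hy) hM
    refine ⟨x, hx, ?_⟩
    rw [edist_dist, ENNReal.ofReal_lt_ofReal_iff hδ0, dist_eq_norm] at hxy
    exact hxy.le
  rw [Metric.hausdorffEDist_comm] at hM
  have hB : ∀ y, N.1 y ≤ 1 → ∃ x, M.1 x ≤ 1 ∧ ‖y - x‖ ≤ δ := by
    intro y hy
    obtain ⟨x, hx, hxy⟩ := Metric.exists_edist_lt_of_hausdorffEDist_lt (show y ∈ N.unitBall from hy) hM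
    refine ⟨x, hx, ?_⟩
    rw [edist_dist, ENNReal.ofReal_lt_ofReal_iff hδ0, dist_eq_norm] at hxy
    exact hxy.le
  -- homogeneity
  have hom : ∀ (P Q : NormOn d) (s : ℝ), (∀ y, P.1 y ≤ 1 → Q.1 y ≤ s) → ∀ y, Q.1 y ≤ s * P.1 y := by
    intro P Q s h y
    by_cases hy : y = 0
    · subst hy; simp
    have hp : 0 < P.1 y := lt_of_le_of_ne (apply_nonneg P.1 _) (fun h => hy (P.2 _ h.symm))
    have := h ((P.1 y)⁻¹ • y) (by
      rw [map_smul_eq_mul, Real.norm_of_nonneg (by positivity)]; field_simp; exact le_rfl)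
    rw [map_smul_eq_mul, Real.norm_of_nonneg (by positivity), inv_mul_eq_div, div_le_iff₀ hp] at this
    exact this
  have h1 : ∀ y, N.1 y ≤ (1 + C * δ) * M.1 y := by
    apply hom
    intro y hy
    obtain ⟨x, hx, hxy⟩ := hA y hy
    have e : N.1 y ≤ N.1 x + N.1 (y - x) := by
      have := map_add_le_add N.1 x (y - x); simpa using this
    have := hCN (y - x)
    nlinarith
  -- sup
  obtain ⟨CM, hCM, hCMM⟩ := NormOn.exists_upper M.1
  have hbdd : BddAbove ((fun x => M.1 x) '' {x | N.1 x ≤ 1}) := by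
    refine ⟨CM / c, ?_⟩
    rintro _ ⟨x, hx, rfl⟩
    have h2 := hcN x
    have h3 := hCMM x
    simp only [Set.mem_ofPred_eq] at hx ⊢
    rw [le_div_iff₀ hc]
    nlinarith
  set S := sSup ((fun x => M.1 x) '' {x | N.1 x ≤ 1}) with hS
  have hMS : ∀ y, N.1 y ≤ 1 → M.1 y ≤ S := fun y hy => le_csSup hbdd ⟨y, hy, rfl⟩
  have hS0 : 0 ≤ S := by simpa using hMS 0 (by simp)
  have hMS' := hom N M S hMS
  have hS1 : S ≤ 1 + S * (C * δ) := by
    apply csSup_le (show ((fun x => M.1 x) '' {x | N.1 x ≤ 1}).Nonempty from ⟨_, 0, by simp, rfl⟩)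
    rintro _ ⟨y, hy, rfl⟩
    obtain ⟨x, hx, hxy⟩ := hB y hy
    have e : M.1 y ≤ M.1 x + M.1 (y - x) := by
      have := map_add_le_add M.1 x (y - x); simpa using this
    have h4 := hMS' (y - x)
    have h5 := hCN (y - x)
    have h6 : N.1 (y - x) ≤ C * δ := h5.trans (by gcongr)
    have h7 : S * N.1 (y - x) ≤ S * (C * δ) := by gcongr
    simp only
    linarith
  have hS2 : S ≤ 2 := by nlinarith
  intro x
  have g1 := h1 x
  have g2 := hMS' x
  have g3 := hCN x
  have g0 : 0 ≤ N.1 x := apply_nonneg N.1 x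
  have gS : S ≤ 1 + 2 * (C * δ) := by nlinarith [mul_pos hC hδ0]
  have k1 : M.1 x - N.1 x ≤ 2 * (C * δ) * N.1 x := by nlinarith
  have k2 : N.1 x - M.1 x ≤ (C * δ) * (2 * N.1 x) := by
    have : M.1 x ≤ 2 * N.1 x := by nlinarith
    have := mul_le_mul_of_nonneg_left this (mul_pos hC hδ0).le
    linarith
  have k3 : 2 * (C * δ) * N.1 x ≤ 2 * (C * δ) * (C * ‖x‖) :=
    mul_le_mul_of_nonneg_left g3 (by positivity)
  have k4 : 2 * C * C * δ * ‖x‖ ≤ ε * ‖x‖ := mul_le_mul_of_nonneg_right hδ2 (norm_nonneg x)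
  rw [abs_le]
  constructor <;> linarith

lemma NormOn.edist_of_close {d : ℕ} (N : NormOn d) {r : ℝ≥0∞} (hr : 0 < r) :
    ∃ ε : ℝ, 0 < ε ∧ ∀ M : NormOn d, (∀ x, |M.1 x - N.1 x| ≤ ε * ‖x‖) → edist M N < r := by
  obtain ⟨c, hc, hcN⟩ := NormOn.exists_lower N
  obtain ⟨r', hr'0, hr'⟩ : ∃ r' : ℝ, 0 < r' ∧ ENNReal.ofReal r' < r := by
    obtain ⟨q, hq0, hq⟩ := ENNReal.lt_iff_exists_nnreal_btwn.mp hr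
    refine ⟨q, by exact_mod_cast hq0, by simpa using hq⟩
  set ε := min (c / 2) (r' * c ^ 2 / 4) with hε
  have hε0 : 0 < ε := by positivity
  have hε1 : ε ≤ c / 2 := min_le_left _ _
  have hε2 : 4 * ε / c ^ 2 ≤ r' := by
    have : ε ≤ r' * c ^ 2 / 4 := min_le_right _ _
    rw [div_le_iff₀ (by positivity)]; linarith
  refine ⟨ε, hε0, fun M hM => lt_of_le_of_lt ?_ hr'⟩
  rw [NormOn.edist_def']
  set t := 2 * ε / c with ht
  have ht0 : 0 < t := by positivity
  -- general
  have key : ∀ (P Q : NormOn d), (∀ x, P.1 x ≤ 1 → ‖x‖ ≤ 2 / c) → (∀ x, |P.1 x - Q.1 x| ≤ ε * ‖x‖) →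
      ∀ x ∈ P.unitBall, ∃ y ∈ Q.unitBall, edist x y ≤ ENNReal.ofReal r' := by
    intro P Q hP hPQ x hx
    have hx2 := hP x hx
    have hx3 : P.1 x ≤ 1 := hx
    refine ⟨(1 + t)⁻¹ • x, ?_, ?_⟩
    · change Q.1 _ ≤ 1
      rw [map_smul_eq_mul, Real.norm_of_nonneg (by positivity), inv_mul_eq_div, div_le_iff₀ (by positivity)]
      have h1 := (abs_le.mp (hPQ x)).1
      have h2 : ε * ‖x‖ ≤ ε * (2 / c) := by gcongr
      have h3 : ε * (2 / c) = t := by rw [ht]; ring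
      linarith
    · rw [edist_dist, dist_eq_norm]
      apply ENNReal.ofReal_le_ofReal
      have : x - (1 + t)⁻¹ • x = (t / (1 + t)) • x := by
        rw [show t / (1 + t) = 1 - (1 + t)⁻¹ by field_simp; ring, sub_smul, one_smul]
      rw [this, norm_smul, Real.norm_of_nonneg (by positivity)]
      calc t / (1 + t) * ‖x‖ ≤ t * (2 / c) := by
            gcongr
            apply div_le_self ht0.le; linarith
        _ = 4 * ε / c ^ 2 := by rw [ht]; field_simp; ring
        _ ≤ r' := hε2
  apply Metric.hausdorffEDist_le_of_mem_edist
  · apply key M N _ hM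
    intro x hx
    have h1 := (abs_le.mp (hM x)).1
    have h2 := hcN x
    have h3 : ε * ‖x‖ ≤ c / 2 * ‖x‖ := by gcongr
    rw [le_div_iff₀ hc]
    linarith
  · apply key N M
    · intro x hx
      have h2 := hcN x
      rw [le_div_iff₀ hc]
      linarith
    · intro x; rw [abs_sub_comm]; exact hM x

end PartP1

section PartP3

lemma trdeg_count {ι J : Type} [Fintype ι] [Fintype J] (g : ι → ℝ) (hg : AlgebraicIndependent ℚ g)
    (z : J → ℝ) (h : ∀ i, g i ∈ IntermediateField.adjoin ℚ (Set.range z)) :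
    Fintype.card ι ≤ Fintype.card J := by
  classical
  have hinj : Function.Injective g := hg.injective
  have h1 : (AlgebraicIndependent.matroid ℚ ℝ).Indep (Set.range g) := by
    rw [AlgebraicIndependent.matroid_indep_iff]
    exact hg.coe_range
  obtain ⟨I, hI⟩ := (AlgebraicIndependent.matroid ℚ ℝ).exists_isBasis (Set.range z)
  have hsub : Set.range g ⊆ (AlgebraicIndependent.matroid ℚ ℝ).closure (Set.range z) := by
    rw [AlgebraicIndependent.matroid_closure_eq]
    rintro _ ⟨i, rfl⟩
    have hz : ∀ x ∈ Algebra.adjoin ℚ (Set.range z), IsAlgebraic (Algebra.adjoin ℚ (Set.range z)) x :=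
      fun x hx => isAlgebraic_algebraMap (⟨x, hx⟩ : Algebra.adjoin ℚ (Set.range z))
    obtain ⟨r, s, hr⟩ := (IntermediateField.mem_adjoin_range_iff ℚ z (g i)).mp (h i)
    change IsAlgebraic _ _
    have mem : ∀ r : MvPolynomial J ℚ, MvPolynomial.aeval z r ∈ Algebra.adjoin ℚ (Set.range z) := by
      intro r
      rw [Algebra.adjoin_range_eq_range_aeval]
      exact ⟨r, rfl⟩
    rw [hr, div_eq_mul_inv]
    exact (hz _ (mem r)).mul (hz _ (mem s)).inv
  have h2 := (AlgebraicIndependent.matroid ℚ ℝ).eRk_mono hsub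
  rw [Matroid.eRk_closure_eq, h1.eRk_eq_encard] at h2
  have h3 := h2.trans ((AlgebraicIndependent.matroid ℚ ℝ).eRk_le_encard _)
  have e1 : (Set.range g).encard = Fintype.card ι := by
    rw [← Set.image_univ, hinj.encard_image, Set.encard_univ, ENat.card_eq_coe_fintype_card]
  have e2 : (Set.range z).encard ≤ Fintype.card J := by
    rw [← Set.image_univ]
    refine (Set.encard_image_le _ _).trans ?_
    rw [Set.encard_univ, ENat.card_eq_coe_fintype_card]
  rw [e1] at h3
  exact_mod_cast h3.trans e2

lemma exists_algInd (ι : Type) [Fintype ι] : ∃ g : ι → ℝ, AlgebraicIndependent ℚ g := by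
  obtain ⟨s, hs⟩ := exists_isTranscendenceBasis ℚ ℝ
  have hinf : Infinite s := by
    by_contra hfin
    rw [not_infinite_iff_finite] at hfin
    rcases isEmpty_or_nonempty s with he | hne
    · have halg := hs.isAlgebraic
      have : Set.range ((↑) : s → ℝ) = ∅ := Set.range_eq_empty _
      have h1 := Algebra.IsAlgebraic.cardinalMk_le_max (Algebra.adjoin ℚ (Set.range ((↑) : s → ℝ))) ℝ
      have : Countable (Algebra.adjoin ℚ (Set.range ((↑) : s → ℝ))) := by
        rw [this, Algebra.adjoin_empty]
        exact (Algebra.botEquivOfInjective (FaithfulSMul.algebraMap_injective ℚ ℝ)).toEquiv.injective.countable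
      have h2 : Cardinal.mk ℝ ≤ Cardinal.aleph0 := h1.trans (max_le (Cardinal.mk_le_aleph0_iff.mpr this) le_rfl)
      rw [Cardinal.mk_real] at h2
      exact absurd h2 (not_le.mpr Cardinal.aleph0_lt_continuum)
    · have h1 := hs.lift_cardinalMk_eq_max_lift
      have : Cardinal.mk ℝ ≤ Cardinal.aleph0 := by
        simp only [Cardinal.lift_id] at h1
        rw [h1]
        simp [Cardinal.mk_le_aleph0]
      rw [Cardinal.mk_real] at this
      exact absurd this (not_le.mpr Cardinal.aleph0_lt_continuum)
  obtain ⟨e⟩ : Nonempty (ι ↪ s) := by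
    exact ⟨((Fintype.equivFin ι).toEmbedding.trans Fin.valEmbedding).trans (Infinite.natEmbedding s)⟩
  exact ⟨fun i => (e i : ℝ), hs.1.comp e e.injective⟩

lemma count3 {d l M k : ℕ} (g : Fin l × Fin d → ℝ) (hg : AlgebraicIndependent ℚ g)
    (q : Fin l × Fin d → ℚ) (x : Fin l → Fin d → ℝ) (hx : ∀ i, ∃ c, x i c ≠ 0)
    (z : Fin M → ℝ) (hz : ∀ i c, x i c ∈ IntermediateField.adjoin ℚ (Set.range z))
    (r : Fin k → ℝ) (κ : Fin l → Fin k)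
    (h : ∀ i, |∑ c, (g (i, c) + q (i, c)) * x i c| = r (κ i)) : l ≤ M + k := by
  classical
  choose c0 hc0 using hx
  let J := Fin M ⊕ Fin k ⊕ (Σ i : Fin l, {c : Fin d // c ≠ c0 i})
  let y : J → ℝ := Sum.elim z (Sum.elim r (fun p => g (p.1, p.2.1)))
  set F := IntermediateField.adjoin ℚ (Set.range y) with hF
  have hzF : ∀ i c, x i c ∈ F := by
    intro i c
    refine IntermediateField.adjoin.mono ℚ _ _ ?_ (hz i c)
    rintro _ ⟨m, rfl⟩
    exact ⟨Sum.inl m, rfl⟩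
  have hrF : ∀ m, r m ∈ F := fun m => IntermediateField.subset_adjoin ℚ _ ⟨Sum.inr (Sum.inl m), rfl⟩
  have hgF : ∀ i c, c ≠ c0 i → g (i, c) ∈ F := fun i c hc =>
    IntermediateField.subset_adjoin ℚ _ ⟨Sum.inr (Sum.inr ⟨i, c, hc⟩), rfl⟩
  have hqF : ∀ s : ℚ, (s : ℝ) ∈ F := fun s => by
    simp
  have hall : ∀ p, g p ∈ F := by
    rintro ⟨i, c⟩
    by_cases hc : c = c0 i
    · subst hc
      have hs : ∑ c, (g (i, c) + q (i, c)) * x i c ∈ F := by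
        have := h i
        rcases abs_choice (∑ c, (g (i, c) + q (i, c)) * x i c) with h1 | h1
        · rw [h1] at this; rw [this]; exact hrF _
        · rw [h1] at this
          rw [← neg_neg (∑ c, (g (i, c) + q (i, c)) * x i c), this]
          exact neg_mem (hrF _)
      rw [← Finset.add_sum_erase _ _ (Finset.mem_univ (c0 i))] at hs
      have hrest : ∑ c ∈ Finset.univ.erase (c0 i), (g (i, c) + q (i, c)) * x i c ∈ F :=
        sum_mem (fun c hc => mul_mem (add_mem (hgF i c (Finset.ne_of_mem_erase hc)) (hqF _)) (hzF i c))
      have h4 := sub_mem hs hrest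
      rw [add_sub_cancel_right] at h4
      have h5 := sub_mem (div_mem h4 (hzF i (c0 i))) (hqF (q (i, c0 i)))
      rwa [mul_div_cancel_right₀ _ (hc0 i), add_sub_cancel_right] at h5
    · exact hgF i c hc
  have := trdeg_count g hg y hall
  simp only [J, Fintype.card_prod, Fintype.card_fin, Fintype.card_sum, Fintype.card_sigma] at this
  have e : ∀ i, Fintype.card {c : Fin d // c ≠ c0 i} = d - 1 := by
    intro i
    simp
  simp only [e, Finset.sum_const, Finset.card_univ, Fintype.card_fin, smul_eq_mul] at this
  rcases Nat.eq_zero_or_pos l with rfl | hl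
  · omega
  have hd : 1 ≤ d := by
    have := (c0 ⟨0, hl⟩).2
    omega
  obtain ⟨d, rfl⟩ := Nat.exists_eq_add_of_le hd
  simp only [add_tsub_cancel_left] at this
  nlinarith

end PartP3

section PartP2

lemma exists_supporting {d : ℕ} (p : Seminorm ℝ (EuclideanSpace ℝ (Fin d)))
    (u : EuclideanSpace ℝ (Fin d)) :
    ∃ φ : EuclideanSpace ℝ (Fin d) →ₗ[ℝ] ℝ, φ u = p u ∧ ∀ x, |φ x| ≤ p x := by
  by_cases hu : u = 0
  · subst hu
    exact ⟨0, by simp, fun x => by simp⟩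
  obtain ⟨g, hg1, hg2⟩ := exists_extension_of_le_sublinear
    (LinearPMap.mkSpanSingleton (σ := RingHom.id ℝ) u (p u) hu) p
    (fun c hc x => by rw [map_smul_eq_mul, Real.norm_of_nonneg hc.le])
    (fun x y => map_add_le_add p x y) (by
      rintro ⟨x, hx⟩
      obtain ⟨c, rfl⟩ := Submodule.mem_span_singleton.mp hx
      rw [LinearPMap.mkSpanSingleton'_apply]
      simp only [RingHom.id_apply, smul_eq_mul, map_smul_eq_mul]
      exact mul_le_mul_of_nonneg_right (le_abs_self c) (apply_nonneg p u))
  refine ⟨g, ?_, ?_⟩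
  · have := hg1 ⟨u, Submodule.mem_span_singleton_self u⟩
    rw [LinearPMap.mkSpanSingleton_apply] at this
    exact this
  · intro x
    rw [abs_le]
    have h1 := hg2 (-x)
    rw [map_neg, map_neg_eq_map] at h1
    exact ⟨by linarith, hg2 x⟩

/-- squared area of the parallelogram -/
noncomputable def gram2 {d : ℕ} (x y : EuclideanSpace ℝ (Fin d)) : ℝ :=
  ‖x‖ ^ 2 * ‖y‖ ^ 2 - (inner ℝ x y) ^ 2

lemma gram2_le {d : ℕ} (x y : EuclideanSpace ℝ (Fin d)) (t : ℝ)
    (h : ‖x‖ + ‖y‖ - ‖x + y‖ ≤ t * (‖x‖ + ‖y‖)) :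
    gram2 x y ≤ 2 * t * (‖x‖ * ‖y‖ * (‖x‖ + ‖y‖) ^ 2) := by
  have h1 : ‖x + y‖ ^ 2 = ‖x‖ ^ 2 + 2 * inner ℝ x y + ‖y‖ ^ 2 := norm_add_sq_real x y
  have h2 := abs_le.mp (abs_real_inner_le_norm x y)
  have h3 : ‖x + y‖ ≤ ‖x‖ + ‖y‖ := norm_add_le x y
  unfold gram2
  set a := ‖x‖
  set b := ‖y‖
  set s := ‖x + y‖
  set i : ℝ := inner ℝ x y
  have ha : 0 ≤ a := norm_nonneg _
  have hb : 0 ≤ b := norm_nonneg _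
  have hs : 0 ≤ s := norm_nonneg _
  have e : a ^ 2 * b ^ 2 - i ^ 2 = 1 / 2 * ((a + b - s) * (a + b + s)) * (a * b + i) := by
    have : (a + b - s) * (a + b + s) = 2 * (a * b - i) := by
      linear_combination -h1
    rw [this]; ring
  rw [e]
  have e1 : (a + b - s) * (a + b + s) ≤ t * (a + b) * (2 * (a + b)) := by
    apply mul_le_mul h (by linarith) (by linarith)
    linarith
  have e2 : 0 ≤ (a + b - s) * (a + b + s) := by
    apply mul_nonneg <;> linarith
  calc 1 / 2 * ((a + b - s) * (a + b + s)) * (a * b + i)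
      ≤ 1 / 2 * ((a + b - s) * (a + b + s)) * (2 * (a * b)) := by
        apply mul_le_mul_of_nonneg_left _ (by linarith); linarith [h2.2]
    _ ≤ 1 / 2 * (t * (a + b) * (2 * (a + b))) * (2 * (a * b)) := by gcongr
    _ = _ := by ring

lemma gram2_neg_right {d : ℕ} (x y : EuclideanSpace ℝ (Fin d)) : gram2 x (-y) = gram2 x y := by
  simp [gram2]

lemma exists_poly_approx {d : ℕ} (hd : 1 ≤ d) (p : Seminorm ℝ (EuclideanSpace ℝ (Fin d)))
    {τ : ℝ} (hτ : 0 < τ) :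
    ∃ (ι : Type) (_ : Fintype ι) (g : ι × Fin d → ℝ) (q : ι × Fin d → ℚ)
      (p1 : Seminorm ℝ (EuclideanSpace ℝ (Fin d))),
      AlgebraicIndependent ℚ g ∧ (∀ x, |p1 x - p x| ≤ τ * ‖x‖) ∧
      (∀ x, ∃ a, p1 x = |∑ c, (g (a, c) + q (a, c)) * x c|) ∧
      (∀ x a, |∑ c, (g (a, c) + q (a, c)) * x c| ≤ p1 x) := by
  classical
  obtain ⟨C, hC, hCp⟩ := NormOn.exists_upper p
  set ρ : ℝ := τ / (4 * C) with hρ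
  have hρ0 : 0 < ρ := by positivity
  have hd0 : (0:ℝ) < d := by exact_mod_cast hd
  set σ : ℝ := τ / (2 * d) with hσ
  have hσ0 : 0 < σ := by positivity
  obtain ⟨T, hTs, hTfin, hTcov⟩ := finite_cover_balls_of_compact
    (isCompact_sphere (0 : EuclideanSpace ℝ (Fin d)) 1) hρ0
  have hsph : EuclideanSpace.single (⟨0, hd⟩ : Fin d) (1:ℝ) ∈ Metric.sphere (0 : EuclideanSpace ℝ (Fin d)) 1 := by
    simp
  have : Fintype T := hTfin.fintype
  have hne : Nonempty T := by
    have := hTcov hsph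
    simp only [Set.mem_iUnion] at this
    obtain ⟨u, hu, _⟩ := this
    exact ⟨⟨u, hu⟩⟩
  choose φ hφ1 hφ2 using exists_supporting p
  obtain ⟨g, hg⟩ := exists_algInd (T × Fin d)
  have hq : ∀ a : T × Fin d, ∃ q : ℚ, |g a + q - φ a.1 (EuclideanSpace.single a.2 1)| ≤ σ := by
    intro a
    obtain ⟨q, hq⟩ := exists_rat_near (φ a.1 (EuclideanSpace.single a.2 1) - g a) hσ0
    refine ⟨q, ?_⟩
    rw [abs_sub_comm] at hq
    have : g a + q - φ a.1 (EuclideanSpace.single a.2 1) = q - (φ a.1 (EuclideanSpace.single a.2 1) - g a) := by ring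
    rw [this]; exact hq.le
  choose q hq using hq
  let f : T → EuclideanSpace ℝ (Fin d) →ₗ[ℝ] ℝ := fun a =>
    ∑ c, (g (a, c) + q (a, c)) • (EuclideanSpace.proj c : EuclideanSpace ℝ (Fin d) →L[ℝ] ℝ).toLinearMap
  have hf : ∀ a x, f a x = ∑ c, (g (a, c) + q (a, c)) * x c := by
    intro a x
    simp [f, LinearMap.sum_apply]
  have hfφ : ∀ a x, |f a x - φ a x| ≤ τ / 2 * ‖x‖ := by
    intro a x
    have hx : x = ∑ i, x i • EuclideanSpace.single i (1:ℝ) := by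
      ext j
      simp [Finset.sum_apply, Pi.single_apply]
    have e : φ a x = ∑ c, x c * φ a (EuclideanSpace.single c 1) := by
      conv_lhs => rw [hx]
      simp [map_sum]
    rw [hf, e, ← Finset.sum_sub_distrib]
    calc |∑ c, ((g (a, c) + q (a, c)) * x c - x c * φ a (EuclideanSpace.single c 1))|
        ≤ ∑ c, |(g (a, c) + q (a, c)) * x c - x c * φ a (EuclideanSpace.single c 1)| := Finset.abs_sum_le_sum_abs _ _
      _ ≤ ∑ c : Fin d, σ * ‖x‖ := by
          apply Finset.sum_le_sum
          intro c _
          have := hq (a, c)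
          have e2 : (g (a, c) + q (a, c)) * x c - x c * φ a (EuclideanSpace.single c 1) =
            (g (a, c) + q (a, c) - φ a (EuclideanSpace.single c 1)) * x c := by ring
          rw [e2, abs_mul]
          exact mul_le_mul this (PiLp.norm_apply_le x c) (abs_nonneg _) hσ0.le
      _ = τ / 2 * ‖x‖ := by
          rw [Finset.sum_const, Finset.card_univ, Fintype.card_fin, nsmul_eq_mul, hσ]; field_simp
  let P : T → Seminorm ℝ (EuclideanSpace ℝ (Fin d)) := fun a => (normSeminorm ℝ ℝ).comp (f a)
  have hP : ∀ a x, P a x = |f a x| := fun a x => by simp [P]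
  refine ⟨T, inferInstance, g, q, Finset.univ.sup P, hg, ?_, ?_, ?_⟩
  · intro x
    rw [abs_le]
    constructor
    · by_cases hx : x = 0
      · subst hx; simp
      have hxn : 0 < ‖x‖ := norm_pos_iff.mpr hx
      have hm : (‖x‖⁻¹ • x) ∈ Metric.sphere (0 : EuclideanSpace ℝ (Fin d)) 1 := by
        simp [norm_smul, hxn.ne']
      have := hTcov hm
      simp only [Set.mem_iUnion] at this
      obtain ⟨u, hu, hux⟩ := this
      rw [Metric.mem_ball, dist_eq_norm] at hux
      set v := ‖x‖⁻¹ • x with hv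
      have hxv : x = ‖x‖ • v := by rw [hv, smul_smul, mul_inv_cancel₀ hxn.ne', one_smul]
      have k1 : P ⟨u, hu⟩ x ≤ Finset.univ.sup P x := Seminorm.le_finset_sup_apply (Finset.mem_univ _)
      have k2 : |φ u (v - u)| ≤ C * ρ :=
        (hφ2 u _).trans ((hCp _).trans (by gcongr))
      have k3 : p v ≤ p u + C * ρ := by
        have e := map_add_le_add p u (v - u)
        rw [add_sub_cancel] at e
        exact e.trans (by have := (hCp (v - u)).trans (show _ ≤ C * ρ by gcongr); linarith)
      have k4 : φ u v = φ u u + φ u (v - u) := by rw [← map_add, add_sub_cancel]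
      have k5 : p v - τ / 2 ≤ φ u v := by
        have e1 := (abs_le.mp k2).1
        have e2 := hφ1 u
        have e3 : C * ρ = τ / 4 := by rw [hρ]; field_simp
        linarith
      have k6 : p x - τ / 2 * ‖x‖ ≤ φ u x := by
        have e1 : p x = ‖x‖ * p v := by
          conv_lhs => rw [hxv, map_smul_eq_mul, norm_norm]
        have e2 : φ u x = ‖x‖ * φ u v := by
          conv_lhs => rw [hxv, map_smul, smul_eq_mul]
        rw [e1, e2]
        nlinarith
      rw [hP] at k1
      have k7 := (abs_le.mp (hfφ ⟨u, hu⟩ x)).1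
      have k8 := le_abs_self (f ⟨u, hu⟩ x)
      simp only at k7
      linarith
    · have : Finset.univ.sup P x ≤ p x + τ * ‖x‖ := by
        apply Seminorm.finset_sup_apply_le
        · have := apply_nonneg p x; positivity
        · intro a _
          rw [hP]
          have k1 := hfφ a x
          have k2 := hφ2 a x
          have k3 : |f a x| ≤ |f a x - φ a x| + |φ a x| := by
            have := abs_add_le (f a x - φ a x) (φ a x); simpa using this
          nlinarith [norm_nonneg x]
      linarith
  · intro x
    obtain ⟨a, _, ha⟩ := Seminorm.exists_apply_eq_finset_sup P (Finset.univ_nonempty) x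
    exact ⟨a, by rw [ha, hP, hf]⟩
  · intro x a
    rw [← hf, ← hP]
    exact Seminorm.le_finset_sup_apply (Finset.mem_univ _)

lemma exists_poly_norm {d : ℕ} (hd : 1 ≤ d) (N0 : NormOn d) {r : ENNReal} (hr : 0 < r)
    {γ : ℝ} (hγ : 0 < γ) :
    ∃ N1 : NormOn d, edist N1 N0 < r ∧
    ∃ (ι : Type) (_ : Fintype ι) (g : ι × Fin d → ℝ) (q : ι × Fin d → ℚ),
      AlgebraicIndependent ℚ g ∧
      (∀ x, ∃ a, N1.1 x = |∑ c, (g (a, c) + q (a, c)) * x c|) ∧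
      (∀ x y a, N1.1 x = |∑ c, (g (a, c) + q (a, c)) * x c| →
        N1.1 y = |∑ c, (g (a, c) + q (a, c)) * y c| →
        gram2 x y ≤ γ * (‖x‖ * ‖y‖ * (‖x‖ + ‖y‖) ^ 2)) := by
  obtain ⟨ε, hε, hε'⟩ := NormOn.edist_of_close N0 hr
  set η := ε / 2 with hη
  have hη0 : 0 < η := by positivity
  set τ := min (η / 2) (γ * η / 4) with hτ
  have hτ0 : 0 < τ := by positivity
  have hτ1 : τ ≤ η / 2 := min_le_left _ _
  have hτ2 : τ ≤ γ * η / 4 := min_le_right _ _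
  let p : Seminorm ℝ (EuclideanSpace ℝ (Fin d)) := N0.1 + (Real.toNNReal η) • normSeminorm ℝ (EuclideanSpace ℝ (Fin d))
  have hp : ∀ x, p x = N0.1 x + η * ‖x‖ := by
    intro x
    simp only [p, Seminorm.add_apply, Seminorm.smul_apply, coe_normSeminorm, NNReal.smul_def, Real.coe_toNNReal η hη0.le, smul_eq_mul]
  obtain ⟨ι, hι, g, q, p1, hg, happ, hatt, hle⟩ := exists_poly_approx hd p hτ0
  have hdef : ∀ x, p1 x = 0 → x = 0 := by
    intro x hx
    have h1 := (abs_le.mp (happ x)).1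
    rw [hx, hp] at h1
    have h2 := apply_nonneg N0.1 x
    by_contra hne
    have hxn : 0 < ‖x‖ := norm_pos_iff.mpr hne
    nlinarith
  refine ⟨⟨p1, hdef⟩, ?_, ι, hι, g, q, hg, hatt, ?_⟩
  · apply hε'
    intro x
    have h1 := abs_le.mp (happ x)
    rw [hp] at h1
    have := norm_nonneg x
    rw [abs_le]
    simp only
    constructor <;> nlinarith
  · -- main
    have main : ∀ x y a, p1 x = |∑ c, (g (a, c) + q (a, c)) * x c| →
        p1 y = |∑ c, (g (a, c) + q (a, c)) * y c| →
        0 ≤ (∑ c, (g (a, c) + q (a, c)) * x c) * (∑ c, (g (a, c) + q (a, c)) * y c) →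
        gram2 x y ≤ γ * (‖x‖ * ‖y‖ * (‖x‖ + ‖y‖) ^ 2) := by
      intro x y a hx hy hpos
      have hadd : p1 x + p1 y ≤ p1 (x + y) := by
        have h1 := hle (x + y) a
        have e : ∑ c, (g (a, c) + q (a, c)) * (x + y) c =
          (∑ c, (g (a, c) + q (a, c)) * x c) + (∑ c, (g (a, c) + q (a, c)) * y c) := by
          rw [← Finset.sum_add_distrib]
          apply Finset.sum_congr rfl
          intro c _
          simp only [PiLp.add_apply]; ring
        rw [e] at h1
        rw [hx, hy]
        rwa [(abs_add_eq_add_abs_iff _ _).mpr] at h1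
        rcases mul_nonneg_iff.mp hpos with h | h
        · exact Or.inl h
        · exact Or.inr h
      have h1 := abs_le.mp (happ x)
      have h2 := abs_le.mp (happ y)
      have h3 := abs_le.mp (happ (x + y))
      have h4 := map_add_le_add N0.1 x y
      have h5 : ‖x + y‖ ≤ ‖x‖ + ‖y‖ := norm_add_le x y
      rw [hp] at h1 h2 h3
      have h6 : η * (‖x‖ + ‖y‖ - ‖x + y‖) ≤ 2 * τ * (‖x‖ + ‖y‖) := by
        nlinarith
      have h7 : ‖x‖ + ‖y‖ - ‖x + y‖ ≤ (γ / 2) * (‖x‖ + ‖y‖) := by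
        have : 0 ≤ ‖x‖ + ‖y‖ := by positivity
        have h8 : 2 * τ * (‖x‖ + ‖y‖) ≤ η * ((γ / 2) * (‖x‖ + ‖y‖)) := by nlinarith
        exact le_of_mul_le_mul_left (h6.trans h8) hη0
      have := gram2_le x y _ h7
      calc gram2 x y ≤ _ := this
        _ = _ := by ring
    intro x y a hx hy
    rcases le_total 0 ((∑ c, (g (a, c) + q (a, c)) * x c) * (∑ c, (g (a, c) + q (a, c)) * y c)) with h | h
    · exact main x y a hx hy h
    · have e : ∑ c, (g (a, c) + q (a, c)) * (-y) c = - ∑ c, (g (a, c) + q (a, c)) * y c := by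
        simp
      have := main x (-y) a hx (by rw [map_neg_eq_map, e, abs_neg]; exact hy) (by rw [e]; linarith)
      rwa [gram2_neg_right, norm_neg] at this

end PartP2

section PartP4

open Filter Topology

lemma gram2_continuous {d : ℕ} : Continuous (fun p : EuclideanSpace ℝ (Fin d) × EuclideanSpace ℝ (Fin d) => gram2 p.1 p.2) := by
  unfold gram2
  fun_prop

lemma nowhereDense_aux {d l M k : ℕ} (hd : 1 ≤ d) (X : Set (Fin l → EuclideanSpace ℝ (Fin d)))
    (hX : IsCompact X) (B : ℝ) (hB : 0 < B)
    (h0 : ∀ x ∈ X, ∀ i, x i ≠ 0) (hBd : ∀ x ∈ X, ∀ i, ‖x i‖ ≤ B)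
    (hgr : ∀ x ∈ X, ∀ i j, i ≠ j → 1 / B ≤ gram2 (x i) (x j))
    (hz : ∀ x ∈ X, ∃ z : Fin M → ℝ, ∀ i c, x i c ∈ IntermediateField.adjoin ℚ (Set.range z))
    (κ : Fin l → Fin k) (hlt : M + k < l) :
    IsNowhereDense {N : NormOn d | ∃ x ∈ X, ∀ i j, κ i = κ j → N.1 (x i) = N.1 (x j)} := by
  have hclosed : IsClosed {N : NormOn d | ∃ x ∈ X, ∀ i j, κ i = κ j → N.1 (x i) = N.1 (x j)} := by
    rw [← isOpen_compl_iff, EMetric.isOpen_iff]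
    intro N1 hN1
    rcases X.eq_empty_or_nonempty with rfl | hne
    · refine ⟨1, one_pos, ?_⟩
      rintro M _ ⟨x, hx, _⟩
      exact hx
    let Φ : (Fin l → EuclideanSpace ℝ (Fin d)) → ℝ := fun x =>
      ∑ i, ∑ j, if κ i = κ j then |N1.1 (x i) - N1.1 (x j)| else 0
    have hΦ : Continuous Φ := by
      have hc := NormOn.continuous_semi N1.1
      refine continuous_finsetSum _ (fun i _ => continuous_finsetSum _ (fun j _ => ?_))
      split_ifs
      · exact ((hc.comp (continuous_apply i)).sub (hc.comp (continuous_apply j))).abs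
      · exact continuous_const
    obtain ⟨x0, hx0, hmin⟩ := hX.exists_isMinOn hne hΦ.continuousOn
    have hpos : 0 < Φ x0 := by
      have hnn : ∀ i j, 0 ≤ (if κ i = κ j then |N1.1 (x0 i) - N1.1 (x0 j)| else 0) := by
        intro i j; split_ifs <;> simp
      rcases (Finset.sum_nonneg (fun i _ => Finset.sum_nonneg (fun j _ => hnn i j)) : 0 ≤ Φ x0).lt_or_eq with h | h
      · exact h
      · exfalso
        apply hN1
        refine ⟨x0, hx0, fun i j hij => ?_⟩
        have h1 := (Finset.sum_eq_zero_iff_of_nonneg (fun i _ => Finset.sum_nonneg (fun j _ => hnn i j))).mp h.symm i (Finset.mem_univ _)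
        have h2 := (Finset.sum_eq_zero_iff_of_nonneg (fun j _ => hnn i j)).mp h1 j (Finset.mem_univ _)
        rw [if_pos hij, abs_eq_zero, sub_eq_zero] at h2
        exact h2
    have hl : (0:ℝ) < l := by
      have : 0 < l := by omega
      exact_mod_cast this
    obtain ⟨δ, hδ, hδ'⟩ := NormOn.close_of_edist N1 (ε := Φ x0 / (4 * B * l * l)) (by positivity)
    refine ⟨δ, hδ, ?_⟩
    rintro N2 hN2 ⟨x, hx, hxκ⟩
    have hcl := hδ' N2 hN2
    have h1 : Φ x0 ≤ Φ x := hmin hx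
    have h2 : Φ x ≤ ∑ i : Fin l, ∑ j : Fin l, Φ x0 / (2 * l * l) := by
      refine Finset.sum_le_sum (fun i _ => Finset.sum_le_sum (fun j _ => ?_))
      split_ifs with hij
      · have e := hxκ i j hij
        have key : ∀ i, |N2.1 (x i) - N1.1 (x i)| ≤ Φ x0 / (4 * l * l) := by
          intro i
          calc _ ≤ _ := hcl (x i)
            _ ≤ Φ x0 / (4 * B * l * l) * B := by
              apply mul_le_mul_of_nonneg_left (hBd x hx i); positivity
            _ = _ := by field_simp
        have k1 := abs_le.mp (key i)
        have k2 := abs_le.mp (key j)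
        have k3 : Φ x0 / (2 * l * l) = Φ x0 / (4 * l * l) + Φ x0 / (4 * l * l) := by field_simp; ring
        rw [k3, abs_le]
        constructor <;> linarith
      · positivity
    simp only [Finset.sum_const, Finset.card_univ, Fintype.card_fin, nsmul_eq_mul] at h2
    have h3 : (l:ℝ) * (l * (Φ x0 / (2 * l * l))) = Φ x0 / 2 := by field_simp
    linarith
  rw [hclosed.isNowhereDense_iff]
  rw [Set.eq_empty_iff_forall_notMem]
  intro N0 hN0
  rw [mem_interior_iff_mem_nhds, EMetric.mem_nhds_iff] at hN0
  obtain ⟨r, hr, hsub⟩ := hN0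
  obtain ⟨N1, hN1, ι, hι, g, q, hg, hatt, hgram⟩ := exists_poly_norm hd N0 hr (γ := 1 / (8 * B ^ 5)) (by positivity)
  obtain ⟨x, hx, hxκ⟩ := hsub (show N1 ∈ Metric.eball N0 r from hN1)
  choose a ha using fun i => hatt (x i)
  have hinj : Function.Injective a := by
    intro i j hij
    by_contra hne
    have h1 := hgr x hx i j hne
    have h2 := hgram (x i) (x j) (a i) (ha i) (by rw [hij]; exact ha j)
    have hi := hBd x hx i
    have hj := hBd x hx j
    have h3 : ‖x i‖ * ‖x j‖ * (‖x i‖ + ‖x j‖) ^ 2 ≤ B * B * (B + B) ^ 2 := by gcongr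
    have h4 : 1 / (8 * B ^ 5) * (‖x i‖ * ‖x j‖ * (‖x i‖ + ‖x j‖) ^ 2) ≤ 1 / (8 * B ^ 5) * (B * B * (B + B) ^ 2) := by
      gcongr
    have h5 : 1 / (8 * B ^ 5) * (B * B * (B + B) ^ 2) = 1 / B / 2 := by field_simp; ring
    have h6 : 0 < 1 / B := by positivity
    linarith
  obtain ⟨z, hz⟩ := hz x hx
  have hcount := count3 (d := d) (l := l) (M := M) (k := k) (fun p => g (a p.1, p.2))
    (hg.comp (fun p : Fin l × Fin d => (a p.1, p.2)) (by
      rintro ⟨i, c⟩ ⟨i', c'⟩ h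
      simp only [Prod.mk.injEq] at h
      rw [hinj h.1, h.2])) (fun p => q (a p.1, p.2)) (fun i c => x i c)
    (by
      intro i
      by_contra hcon
      push Not at hcon
      apply h0 x hx i
      ext c
      simpa using hcon c) z hz
    (fun m => if h : ∃ i, κ i = m then N1.1 (x h.choose) else 0) κ (by
      intro i
      have hex : ∃ j, κ j = κ i := ⟨i, rfl⟩
      rw [dif_pos hex, hxκ _ _ hex.choose_spec]
      exact (ha i).symm)
  omega

/-- the genericity property -/
def GoodNorm {d : ℕ} (N : NormOn d) : Prop :=
  ∀ (M l k : ℕ) (z : Fin M → ℝ) (x : Fin l → EuclideanSpace ℝ (Fin d)) (κ : Fin l → Fin k),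
    (∀ i c, x i c ∈ IntermediateField.adjoin ℚ (Set.range z)) → (∀ i, x i ≠ 0) →
    (∀ i j, i ≠ j → 0 < gram2 (x i) (x j)) → (∀ i j, κ i = κ j → N.1 (x i) = N.1 (x j)) →
    l ≤ M + k

instance mvPolyCountable (M : ℕ) : Countable (MvPolynomial (Fin M) ℚ) := by
  rw [← Cardinal.mk_le_aleph0_iff]
  refine MvPolynomial.cardinalMk_le_max_lift.trans ?_
  simp

lemma aeval_cont {M : ℕ} (p : MvPolynomial (Fin M) ℚ) :
    Continuous (fun z : Fin M → ℝ => MvPolynomial.aeval z p) := by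
  have : (fun z : Fin M → ℝ => MvPolynomial.aeval z p) =
      fun z => MvPolynomial.eval z (MvPolynomial.map (algebraMap ℚ ℝ) p) := by
    ext z
    rw [MvPolynomial.aeval_def, MvPolynomial.eval₂_eq_eval_map]
  rw [this]
  exact MvPolynomial.continuous_eval _

/-- compact data sets -/
def dataSet {d M l : ℕ} (num den : Fin l → Fin d → MvPolynomial (Fin M) ℚ) (B : ℕ) :
    Set ((Fin M → ℝ) × (Fin l → EuclideanSpace ℝ (Fin d))) :=
  {p | (∀ m, |p.1 m| ≤ B) ∧ (∀ i, ‖p.2 i‖ ≤ B) ∧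
    (∀ i c, MvPolynomial.aeval p.1 (den i c) * p.2 i c = MvPolynomial.aeval p.1 (num i c)) ∧
    (∀ i c, 1 / (B:ℝ) ≤ |MvPolynomial.aeval p.1 (den i c)|) ∧
    (∀ i, 1 / (B:ℝ) ≤ ‖p.2 i‖) ∧ (∀ i j, i ≠ j → 1 / (B:ℝ) ≤ gram2 (p.2 i) (p.2 j))}

lemma dataSet_compact {d M l : ℕ} (num den : Fin l → Fin d → MvPolynomial (Fin M) ℚ) (B : ℕ) :
    IsCompact (dataSet num den B) := by
  have hc : IsClosed (dataSet num den B) := by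
    have hap : ∀ q : MvPolynomial (Fin M) ℚ, Continuous
        (fun p : (Fin M → ℝ) × (Fin l → EuclideanSpace ℝ (Fin d)) => MvPolynomial.aeval p.1 q) :=
      fun q => (aeval_cont q).comp continuous_fst
    have hx : ∀ i, Continuous (fun p : (Fin M → ℝ) × (Fin l → EuclideanSpace ℝ (Fin d)) => p.2 i) :=
      fun i => (continuous_apply i).comp continuous_snd
    have hxc : ∀ i c, Continuous (fun p : (Fin M → ℝ) × (Fin l → EuclideanSpace ℝ (Fin d)) => p.2 i c) :=
      fun i c => (EuclideanSpace.proj (𝕜 := ℝ) c).continuous.comp (hx i)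
    have hgr : ∀ i j, Continuous (fun p : (Fin M → ℝ) × (Fin l → EuclideanSpace ℝ (Fin d)) => gram2 (p.2 i) (p.2 j)) := by
      intro i j
      unfold gram2
      exact (((hx i).norm.pow 2).mul ((hx j).norm.pow 2)).sub (((hx i).inner (hx j)).pow 2)
    unfold dataSet
    simp only [Set.ofPred_and, Set.ofPred_forall]
    refine IsClosed.inter ?_ (IsClosed.inter ?_ (IsClosed.inter ?_ (IsClosed.inter ?_ (IsClosed.inter ?_ ?_))))
    · exact isClosed_iInter fun m => isClosed_le ((continuous_apply m).comp continuous_fst).abs continuous_const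
    · exact isClosed_iInter fun m => isClosed_le (hx m).norm continuous_const
    · exact isClosed_iInter fun i => isClosed_iInter fun c => isClosed_eq ((hap _).mul (hxc i c)) (hap _)
    · exact isClosed_iInter fun i => isClosed_iInter fun c => isClosed_le continuous_const (hap _).abs
    · exact isClosed_iInter fun m => isClosed_le continuous_const (hx m).norm
    · exact isClosed_iInter fun i => isClosed_iInter fun j => isClosed_iInter fun _ =>
        isClosed_le continuous_const (hgr i j)
  refine Metric.isCompact_of_isClosed_isBounded hc ?_
  refine (Metric.isBounded_closedBall (x := 0) (r := (B:ℝ))).subset ?_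
  rintro ⟨z, x⟩ ⟨h1, h2, _⟩
  rw [mem_closedBall_zero_iff, Prod.norm_def, max_le_iff, pi_norm_le_iff_of_nonneg (by positivity),
    pi_norm_le_iff_of_nonneg (by positivity)]
  exact ⟨h1, h2⟩

lemma meagre_notGood {d : ℕ} (hd : 1 ≤ d) : IsMeagre {N : NormOn d | ¬ GoodNorm N} := by
  have hsub : {N : NormOn d | ¬ GoodNorm N} ⊆
      ⋃ (M : ℕ) (l : ℕ) (k : ℕ) (κ : Fin l → Fin k) (num : Fin l → Fin d → MvPolynomial (Fin M) ℚ)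
        (den : Fin l → Fin d → MvPolynomial (Fin M) ℚ) (B : ℕ),
        {N : NormOn d | M + k < l ∧ 0 < B ∧ ∃ x ∈ Prod.snd '' dataSet num den B, ∀ i j, κ i = κ j → N.1 (x i) = N.1 (x j)} := by
    intro N hN
    simp only [Set.mem_ofPred_eq, GoodNorm] at hN
    push Not at hN
    obtain ⟨M, l, k, z, x, κ, hz, h0, hgr, hκ, hlt⟩ := hN
    have hnd : ∀ i c, ∃ nd : MvPolynomial (Fin M) ℚ × MvPolynomial (Fin M) ℚ,
        MvPolynomial.aeval z nd.2 ≠ 0 ∧ MvPolynomial.aeval z nd.2 * x i c = MvPolynomial.aeval z nd.1 := by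
      intro i c
      obtain ⟨r, s, hr⟩ := (IntermediateField.mem_adjoin_range_iff ℚ z (x i c)).mp (hz i c)
      by_cases hs : MvPolynomial.aeval z s = 0
      · refine ⟨(0, 1), by simp, ?_⟩
        rw [hr, hs]; simp
      · refine ⟨(r, s), hs, ?_⟩
        rw [hr]
        simp only
        field_simp
    choose nd hnd0 hnd1 using hnd
    have hev : ∀ c : ℝ, ∀ᶠ B : ℕ in atTop, c ≤ (B:ℝ) := fun c =>
      tendsto_natCast_atTop_atTop.eventually_ge_atTop c
    have hev' : ∀ c : ℝ, 0 < c → ∀ᶠ B : ℕ in atTop, 1 / (B:ℝ) ≤ c := fun c hc => by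
      filter_upwards [hev (1 / c), eventually_gt_atTop 0] with B hB hB0
      have : (0:ℝ) < B := by exact_mod_cast hB0
      rw [div_le_iff₀ hc] at hB
      rw [div_le_iff₀ this]; linarith
    have hall : ∀ᶠ B : ℕ in atTop, 0 < B ∧ (z, x) ∈ dataSet (fun i c => (nd i c).1) (fun i c => (nd i c).2) B := by
      refine (eventually_gt_atTop 0).and ?_
      refine Eventually.and ?_ (Eventually.and ?_ (Eventually.and ?_ (Eventually.and ?_ (Eventually.and ?_ ?_))))
      · exact eventually_all.mpr fun m => hev _
      · exact eventually_all.mpr fun m => hev _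
      · exact Eventually.of_forall fun _ => hnd1
      · exact eventually_all.mpr fun i => eventually_all.mpr fun c => hev' _ (abs_pos.mpr (hnd0 i c))
      · exact eventually_all.mpr fun i => hev' _ (norm_pos_iff.mpr (h0 i))
      · refine eventually_all.mpr fun i => eventually_all.mpr fun j => ?_
        by_cases hij : i = j
        · exact Eventually.of_forall fun _ h => absurd hij h
        · exact (hev' _ (hgr i j hij)).mono fun B hB _ => hB
    obtain ⟨B, hB0, hB⟩ := hall.exists
    simp only [Set.mem_iUnion]
    exact ⟨M, l, k, κ, _, _, B, hlt, hB0, x, ⟨(z, x), hB, rfl⟩, hκ⟩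
  refine IsMeagre.mono hsub ?_
  refine isMeagre_iUnion fun M => isMeagre_iUnion fun l => isMeagre_iUnion fun k =>
    isMeagre_iUnion fun κ => isMeagre_iUnion fun num => isMeagre_iUnion fun den => isMeagre_iUnion fun B => ?_
  by_cases h : M + k < l ∧ 0 < B
  · have hB : (0:ℝ) < B := by exact_mod_cast h.2
    have := nowhereDense_aux hd (Prod.snd '' dataSet num den B)
      ((dataSet_compact num den B).image continuous_snd) B hB
      (by
        rintro _ ⟨⟨z, x⟩, ⟨h1, h2, h3, h4, h5, h6⟩, rfl⟩ i
        have : 0 < ‖x i‖ := lt_of_lt_of_le (by positivity) (h5 i)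
        exact norm_pos_iff.mp this)
      (by
        rintro _ ⟨⟨z, x⟩, ⟨h1, h2, h3, h4, h5, h6⟩, rfl⟩ i
        exact h2 i)
      (by
        rintro _ ⟨⟨z, x⟩, ⟨h1, h2, h3, h4, h5, h6⟩, rfl⟩ i j hij
        exact h6 i j hij)
      (by
        rintro _ ⟨⟨z, x⟩, ⟨h1, h2, h3, h4, h5, h6⟩, rfl⟩
        refine ⟨z, fun i c => ?_⟩
        have hne : MvPolynomial.aeval z (den i c) ≠ 0 :=
          abs_pos.mp (lt_of_lt_of_le (by positivity) (h4 i c))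
        rw [IntermediateField.mem_adjoin_range_iff]
        refine ⟨num i c, den i c, ?_⟩
        rw [eq_div_iff hne, mul_comm]
        exact h3 i c) κ h.1
    refine IsMeagre.mono ?_ this.isMeagre
    rintro N ⟨_, _, hN⟩
    exact hN
  · convert IsMeagre.empty using 1
    rw [Set.eq_empty_iff_forall_notMem]
    rintro N ⟨h1, h2, _⟩
    exact h ⟨h1, h2⟩

end PartP4

section PartP5

lemma layer_cake {ι : Type*} [Fintype ι] (I : Finset ι) (lam : ℝ) :
    ∀ (n : ℕ) (g : ι → ℝ), (∀ i, 0 ≤ g i) →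
    (Finset.univ.filter (fun i => 0 < g i)).card ≤ n →
    (∀ t : ℝ, 0 < t → ((Finset.univ.filter (fun i => t ≤ g i)).card : ℝ) ≤
      lam * (I.filter (fun i => t ≤ g i)).card) →
    ∑ i, g i ≤ lam * ∑ i ∈ I, g i := by
  intro n
  induction n with
  | zero =>
    intro g hg hc _
    have h0 : ∀ i, g i = 0 := by
      intro i
      have hE : Finset.univ.filter (fun i => 0 < g i) = ∅ := Finset.card_eq_zero.mp (Nat.le_zero.mp hc)
      by_contra hne
      have hm : i ∈ Finset.univ.filter (fun i => 0 < g i) := by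
        simp only [Finset.mem_filter, Finset.mem_univ, true_and]
        exact lt_of_le_of_ne (hg i) (Ne.symm hne)
      rw [hE] at hm
      exact absurd hm (Finset.notMem_empty _)
    simp [h0]
  | succ n ih =>
    intro g hg hc hyp
    by_cases hemp : (Finset.univ.filter (fun i => 0 < g i)).Nonempty
    · obtain ⟨i0, hi0, hmin⟩ := Finset.exists_min_image _ g hemp
      set m := g i0 with hm
      have hm0 : 0 < m := by simpa using hi0
      have hmin' : ∀ i, 0 < g i → m ≤ g i := fun i hi => hmin i (by simpa using hi)
      let g' : ι → ℝ := fun i => if 0 < g i then g i - m else 0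
      have hg'0 : ∀ i, 0 ≤ g' i := by
        intro i
        simp only [g']
        split_ifs with h
        · linarith [hmin' i h]
        · exact le_rfl
      have hiff : ∀ i t, 0 < t → (t ≤ g' i ↔ t + m ≤ g i) := by
        intro i t ht
        simp only [g']
        split_ifs with h
        · constructor <;> intro h' <;> linarith
        · constructor <;> intro h' <;> linarith
      have := ih g' hg'0 (by
        have hss : Finset.univ.filter (fun i => 0 < g' i) ⊂ Finset.univ.filter (fun i => 0 < g i) := by
          rw [Finset.ssubset_iff_of_subset]
          · refine ⟨i0, hi0, ?_⟩
            simp [g', hm]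
          · intro i
            simp only [Finset.mem_filter, Finset.mem_univ, true_and, g']
            split_ifs with h
            · intro _; exact h
            · intro h'; exact absurd h' (lt_irrefl _)
        have := Finset.card_lt_card hss
        omega) (by
        intro t ht
        have := hyp (t + m) (by linarith)
        simpa only [hiff _ t ht] using this)
      have hsplit : ∀ i, g i = g' i + (if m ≤ g i then m else 0) := by
        intro i
        simp only [g']
        by_cases h : 0 < g i
        · rw [if_pos h, if_pos (hmin' i h)]; ring
        · rw [if_neg h, if_neg (by linarith)]
          linarith [hg i]
      have hs : ∀ S : Finset ι, ∑ i ∈ S, g i = ∑ i ∈ S, g' i + m * (S.filter (fun i => m ≤ g i)).card := by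
        intro S
        rw [Finset.sum_congr rfl (fun i _ => hsplit i), Finset.sum_add_distrib]
        congr 1
        rw [← Finset.sum_filter, Finset.sum_const, nsmul_eq_mul, mul_comm m]
      rw [hs, hs]
      have h2 := hyp m hm0
      have h3 := mul_le_mul_of_nonneg_left h2 hm0.le
      linarith
    · rw [Finset.not_nonempty_iff_eq_empty] at hemp
      exact ih g hg (by rw [hemp]; simp) hyp

lemma greedy_basis {ι V : Type*} [AddCommGroup V] [Module ℝ V] [DecidableEq ι]
    (v : ι → V) (g : ι → ℝ) (s : Finset ι) :
    ∃ I : Finset ι, I ⊆ s ∧ LinearIndepOn ℝ v (I : Set ι) ∧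
      ∀ j ∈ s, v j ∈ Submodule.span ℝ (v '' {i | i ∈ I ∧ g j ≤ g i}) := by
  induction s using Finset.induction_on_min_value g with
  | empty => exact ⟨∅, by simp, by simp, by simp⟩
  | insert a s ha hmin ih =>
    obtain ⟨I, hIs, hI, hsp⟩ := ih
    by_cases hva : v a ∈ Submodule.span ℝ (v '' (I : Set ι))
    · refine ⟨I, hIs.trans (Finset.subset_insert _ _), hI, ?_⟩
      intro j hj
      rcases Finset.mem_insert.mp hj with rfl | hj
      · convert hva using 3
        ext i
        simp only [Set.mem_ofPred_eq, Finset.mem_coe, and_iff_left_iff_imp]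
        exact fun hi => hmin i (hIs hi)
      · exact hsp j hj
    · refine ⟨insert a I, Finset.insert_subset_insert _ hIs, ?_, ?_⟩
      · rw [Finset.coe_insert, linearIndepOn_insert]
        · exact ⟨hI, hva⟩
        · exact fun h => ha (hIs h)
      · intro j hj
        rcases Finset.mem_insert.mp hj with rfl | hj
        · exact Submodule.subset_span ⟨j, ⟨Finset.mem_insert_self _ _, le_rfl⟩, rfl⟩
        · refine Submodule.span_mono (Set.image_mono ?_) (hsp j hj)
          rintro i ⟨hi, h⟩
          exact ⟨Finset.mem_insert_of_mem hi, h⟩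

lemma hadamard_const {ι : Type*} [DecidableEq ι] {D : ℕ} (v : ι → EuclideanSpace ℝ (Fin D)) (I : Finset ι)
    (hI : LinearIndepOn ℝ v (I : Set ι)) :
    ∃ C : ℝ, 0 < C ∧ ∀ T : EuclideanSpace ℝ (Fin D) →ₗ[ℝ] EuclideanSpace ℝ (Fin D),
      (∀ x, ‖T x‖ ≤ ‖x‖) → |LinearMap.det T| ≤ C * ∏ i ∈ I, ‖T (v i)‖ := by
  classical
  have hI' : LinearIndepOn ℝ id (v '' (I : Set ι)) := hI.id_image
  have hinj : Set.InjOn v (I : Set ι) := hI.injOn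
  obtain ⟨J, b, hb, hsJ⟩ : ∃ (J : Set (EuclideanSpace ℝ (Fin D))) (b : Module.Basis J ℝ (EuclideanSpace ℝ (Fin D))),
      (∀ x, b x = x) ∧ v '' (I : Set ι) ⊆ J :=
    ⟨_, Module.Basis.extend hI', Module.Basis.extend_apply_self hI', hI'.subset_extend _⟩
  have : Fintype J := FiniteDimensional.fintypeBasisIndex b
  have hcard : Fintype.card J = D := by
    rw [← Module.finrank_eq_card_basis b]; simp
  let e : Fin D ≃ J := (Fintype.equivFinOfCardEq hcard).symm
  let b' := b.reindex e.symm
  have hb' : ∀ k, b' k = (e k : EuclideanSpace ℝ (Fin D)) := by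
    intro k
    simp only [b', Module.Basis.reindex_apply, Equiv.symm_symm]
    exact hb (e k)
  let o := (EuclideanSpace.basisFun (Fin D) ℝ)
  have : Fact (Module.finrank ℝ (EuclideanSpace ℝ (Fin D)) = D) := ⟨by simp⟩
  have hvol : o.toBasis.orientation.volumeForm = o.toBasis.det :=
    Orientation.volumeForm_robust _ o rfl
  have hdet0 : o.toBasis.det b' ≠ 0 := (o.toBasis.isUnit_det b').ne_zero
  have hJs : (I.image v) ⊆ J.toFinset := by
    intro x hx
    rw [Set.mem_toFinset]
    apply hsJ
    simpa using hx
  refine ⟨(∏ x ∈ J.toFinset \ I.image v, ‖x‖) / |o.toBasis.det b'|, ?_, ?_⟩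
  · apply div_pos _ (abs_pos.mpr hdet0)
    apply Finset.prod_pos
    intro x hx
    rw [Finset.mem_sdiff, Set.mem_toFinset] at hx
    rw [norm_pos_iff]
    have := b'.ne_zero (e.symm ⟨x, hx.1⟩)
    rw [hb'] at this
    simpa using this
  · intro T hT
    have h1 : o.toBasis.det (T ∘ b') = LinearMap.det T * o.toBasis.det b' := Module.Basis.det_comp _ _ _
    have h2 : |o.toBasis.det (T ∘ b')| ≤ ∏ k, ‖T (b' k)‖ := by
      rw [← hvol]
      exact Orientation.abs_volumeForm_apply_le _ _
    have h3 : ∏ k, ‖T (b' k)‖ = (∏ x ∈ J.toFinset \ I.image v, ‖T x‖) * ∏ i ∈ I, ‖T (v i)‖ := by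
      rw [← Finset.prod_image (s := I) (g := v) (f := fun x => ‖T x‖) (fun i hi j hj h => hinj hi hj h),
        Finset.prod_sdiff hJs]
      simp only [hb']
      rw [Equiv.prod_comp e (fun x : J => ‖T (x : EuclideanSpace ℝ (Fin D))‖)]
      exact (Finset.prod_subtype J.toFinset (by simp) (fun x => ‖T x‖)).symm
    have h4 : (∏ x ∈ J.toFinset \ I.image v, ‖T x‖) ≤ ∏ x ∈ J.toFinset \ I.image v, ‖x‖ :=
      Finset.prod_le_prod (fun _ _ => norm_nonneg _) (fun x _ => hT x)
    rw [h1, h3, abs_mul] at h2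
    rw [div_mul_eq_mul_div, le_div_iff₀ (abs_pos.mpr hdet0)]
    refine h2.trans ?_
    gcongr

lemma radial_lower {ι : Type*} [Fintype ι] {D : ℕ} (v : ι → EuclideanSpace ℝ (Fin D)) (hv : ∀ i, v i ≠ 0)
    (lam : ℝ) (hlam : 0 < lam)
    (H : ∀ U : Submodule ℝ (EuclideanSpace ℝ (Fin D)),
      (Set.ncard {i | v i ∈ U} : ℝ) ≤ lam * Module.finrank ℝ U) :
    ∃ L : ℝ, ∀ T : EuclideanSpace ℝ (Fin D) →ₗ[ℝ] EuclideanSpace ℝ (Fin D), LinearMap.det T ≠ 0 →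
      (∀ x, ‖T x‖ ≤ ‖x‖) → L ≤ ∑ i, Real.log ‖T (v i)‖ - lam * Real.log |LinearMap.det T| := by
  classical
  have hC : ∀ I : Finset ι, ∃ C : ℝ, 0 < C ∧ (LinearIndepOn ℝ v (I : Set ι) →
      ∀ T : EuclideanSpace ℝ (Fin D) →ₗ[ℝ] EuclideanSpace ℝ (Fin D),
      (∀ x, ‖T x‖ ≤ ‖x‖) → |LinearMap.det T| ≤ C * ∏ i ∈ I, ‖T (v i)‖) := by
    intro I
    by_cases h : LinearIndepOn ℝ v (I : Set ι)
    · obtain ⟨C, hC, h'⟩ := hadamard_const v I h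
      exact ⟨C, hC, fun _ => h'⟩
    · exact ⟨1, one_pos, fun h' => absurd h' h⟩
  choose C hC0 hC using hC
  -- constant for each I
  let K : Finset ι → ℝ := fun I => ∑ i, Real.log ‖v i‖ - lam * (Real.log (C I) + ∑ i ∈ I, Real.log ‖v i‖)
  refine ⟨- ∑ I, |K I|, ?_⟩
  intro T hT hcon
  have hinj : Function.Injective T := by
    rw [← LinearMap.ker_eq_bot]
    by_contra hne
    exact hT (LinearMap.det_eq_zero_iff_ker_ne_bot.mpr hne)
  have hTv : ∀ i, 0 < ‖T (v i)‖ := fun i => by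
    rw [norm_pos_iff]; intro h; exact hv i (hinj (by rw [h, map_zero]))
  have hvn : ∀ i, 0 < ‖v i‖ := fun i => norm_pos_iff.mpr (hv i)
  let g : ι → ℝ := fun i => Real.log ‖v i‖ - Real.log ‖T (v i)‖
  have hg0 : ∀ i, 0 ≤ g i := fun i => sub_nonneg.mpr (Real.log_le_log (hTv i) (hcon _))
  obtain ⟨I, -, hI, hsp⟩ := greedy_basis v g Finset.univ
  have hlc := layer_cake I lam _ g hg0 le_rfl (by
    intro t ht
    let U := Submodule.span ℝ (v '' {i | i ∈ I ∧ t ≤ g i})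
    have h1 : (Finset.univ.filter (fun i => t ≤ g i)).card ≤ Set.ncard {i | v i ∈ U} := by
      rw [← Set.ncard_coe_finset]
      apply Set.ncard_le_ncard _ (Set.toFinite _)
      intro j hj
      simp only [Finset.coe_filter, Finset.mem_univ, true_and, Set.mem_ofPred_eq] at hj ⊢
      refine Submodule.span_mono (Set.image_mono ?_) (hsp j (Finset.mem_univ _))
      rintro i ⟨hi, h⟩
      exact ⟨hi, hj.trans h⟩
    have h2 : Module.finrank ℝ U ≤ (I.filter (fun i => t ≤ g i)).card := by
      have e : v '' {i | i ∈ I ∧ t ≤ g i} = ((I.filter (fun i => t ≤ g i)).image v : Finset _) := by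
        ext x; simp
      have e2 : U = Submodule.span ℝ (((I.filter (fun i => t ≤ g i)).image v : Finset _) : Set _) := by
        simp only [U]; rw [e]
      rw [e2]
      exact (finrank_span_finset_le_card _).trans Finset.card_image_le
    calc ((Finset.univ.filter (fun i => t ≤ g i)).card : ℝ) ≤ Set.ncard {i | v i ∈ U} := by exact_mod_cast h1
      _ ≤ lam * Module.finrank ℝ U := H U
      _ ≤ _ := by
        apply mul_le_mul_of_nonneg_left _ hlam.le
        exact_mod_cast h2)
  have hdet := hC I hI T hcon
  have hlog : Real.log |LinearMap.det T| ≤ Real.log (C I) + ∑ i ∈ I, Real.log ‖T (v i)‖ := by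
    rw [← Real.log_prod (fun i _ => (hTv i).ne'), ← Real.log_mul (hC0 I).ne' (Finset.prod_ne_zero_iff.mpr (fun i _ => (hTv i).ne'))]
    exact Real.log_le_log (abs_pos.mpr hT) hdet
  have hK : K I ≤ ∑ i, Real.log ‖T (v i)‖ - lam * Real.log |LinearMap.det T| := by
    simp only [K]
    simp only [g, Finset.sum_sub_distrib] at hlc
    have := mul_le_mul_of_nonneg_left hlog hlam.le
    linarith
  have h1 : |K I| ≤ ∑ I, |K I| := Finset.single_le_sum (f := fun I => |K I|) (fun _ _ => abs_nonneg _) (Finset.mem_univ I)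
  have h2 := neg_abs_le (K I)
  linarith

lemma radial_isotropy {ι : Type*} [Fintype ι] {D : ℕ} (v : ι → EuclideanSpace ℝ (Fin D)) (hv : ∀ i, v i ≠ 0)
    (lam lam' : ℝ) (hlam : 0 < lam) (hlt : lam < lam')
    (H : ∀ U : Submodule ℝ (EuclideanSpace ℝ (Fin D)),
      (Set.ncard {i | v i ∈ U} : ℝ) ≤ lam * Module.finrank ℝ U) :
    ∃ T : EuclideanSpace ℝ (Fin D) →ₗ[ℝ] EuclideanSpace ℝ (Fin D), Function.Injective T ∧
      ∀ w, ‖w‖ = 1 → ∑ i, (inner ℝ (T (v i)) w) ^ 2 / ‖T (v i)‖ ^ 2 ≤ lam' := by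
  obtain ⟨L, hL⟩ := radial_lower v hv lam hlam H
  let Ψ : (EuclideanSpace ℝ (Fin D) →ₗ[ℝ] EuclideanSpace ℝ (Fin D)) → ℝ := fun T =>
    ∑ i, Real.log ‖T (v i)‖ - lam * Real.log |LinearMap.det T|
  let 𝒯 : Set (EuclideanSpace ℝ (Fin D) →ₗ[ℝ] EuclideanSpace ℝ (Fin D)) :=
    {T | LinearMap.det T ≠ 0 ∧ ∀ x, ‖T x‖ ≤ ‖x‖}
  have hne : (Ψ '' 𝒯).Nonempty := ⟨_, LinearMap.id, ⟨by simp, fun x => le_rfl⟩, rfl⟩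
  have hbdd : BddBelow (Ψ '' 𝒯) := ⟨L, by rintro _ ⟨T, ⟨h1, h2⟩, rfl⟩; exact hL T h1 h2⟩
  set κ := (lam' - lam) / (lam + lam') with hκ
  have hκ0 : 0 < κ := div_pos (by linarith) (by linarith)
  have h1κ : 1 - κ = 2 * lam / (lam + lam') := by
    have : lam + lam' ≠ 0 := by linarith
    rw [hκ]; field_simp; ring
  have h1κ0 : 0 < 1 - κ := by rw [h1κ]; apply div_pos <;> linarith
  set η := κ * (lam' - lam) / 4 with hη
  have hη0 : 0 < η := by have : 0 < lam' - lam := by linarith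
                         positivity
  obtain ⟨_, ⟨T, ⟨hT, hcon⟩, rfl⟩, hTη⟩ := exists_lt_of_csInf_lt hne (show sInf (Ψ '' 𝒯) < sInf (Ψ '' 𝒯) + η by linarith)
  have hmin : ∀ T' ∈ 𝒯, Ψ T - η ≤ Ψ T' := by
    intro T' hT'
    have := csInf_le hbdd ⟨T', hT', rfl⟩
    linarith
  have hinj : Function.Injective T := by
    rw [← LinearMap.ker_eq_bot]
    by_contra hne
    exact hT (LinearMap.det_eq_zero_iff_ker_ne_bot.mpr hne)
  refine ⟨T, hinj, ?_⟩
  intro w hw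
  have hTv : ∀ i, 0 < ‖T (v i)‖ := fun i => by
    rw [norm_pos_iff]; intro h; exact hv i (hinj (by rw [h, map_zero]))
  set s := Real.sqrt (1 - κ) with hs
  have hs2 : s ^ 2 = 1 - κ := Real.sq_sqrt h1κ0.le
  have hs0 : 0 < s := Real.sqrt_pos.mpr h1κ0
  set A := LinearMap.transvection (innerₗ (EuclideanSpace ℝ (Fin D)) w) ((s - 1) • w) with hA
  have hAx : ∀ x, A x = x + (inner ℝ w x * (s - 1)) • w := by
    intro x
    rw [hA, LinearMap.transvection.apply, smul_smul]
    simp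
  have hAdet : LinearMap.det A = s := by
    rw [hA, LinearMap.transvection.det]
    simp [hw]
  have hAn : ∀ x, ‖A x‖ ^ 2 = ‖x‖ ^ 2 - κ * (inner ℝ x w) ^ 2 := by
    intro x
    rw [hAx, norm_add_sq_real, inner_smul_right, norm_smul, mul_pow, hw, Real.norm_eq_abs, sq_abs,
      real_inner_comm x w]
    have : κ = 1 - s ^ 2 := by rw [hs2]; ring
    rw [this]; ring
  have hT'mem : A ∘ₗ T ∈ 𝒯 := by
    refine ⟨?_, fun x => ?_⟩
    · rw [LinearMap.det_comp, hAdet]; exact mul_ne_zero hs0.ne' hT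
    · refine le_trans ?_ (hcon x)
      apply le_of_sq_le_sq _ (norm_nonneg _)
      rw [LinearMap.comp_apply, hAn]
      have : 0 ≤ κ * (inner ℝ (T x) w) ^ 2 := by positivity
      linarith
  have hkey := hmin _ hT'mem
  set c : ι → ℝ := fun i => (inner ℝ (T (v i)) w) ^ 2 / ‖T (v i)‖ ^ 2 with hc
  have hc0 : ∀ i, 0 ≤ c i := fun i => by positivity
  have hc1 : ∀ i, c i ≤ 1 := by
    intro i
    rw [hc]
    simp only
    rw [div_le_one (by have := hTv i; positivity)]
    have := abs_real_inner_le_norm (T (v i)) w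
    rw [hw, mul_one] at this
    rw [← sq_abs]
    gcongr
  have hlogi : ∀ i, Real.log ‖(A ∘ₗ T) (v i)‖ ≤ Real.log ‖T (v i)‖ - κ / 2 * c i := by
    intro i
    have e : ‖(A ∘ₗ T) (v i)‖ ^ 2 = ‖T (v i)‖ ^ 2 * (1 - κ * c i) := by
      rw [LinearMap.comp_apply, hAn, hc]
      have := (hTv i).ne'
      simp only
      field_simp
    have hp : 0 < 1 - κ * c i := by nlinarith [hc0 i, hc1 i]
    have e2 : 2 * Real.log ‖(A ∘ₗ T) (v i)‖ = 2 * Real.log ‖T (v i)‖ + Real.log (1 - κ * c i) := by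
      have := congrArg Real.log e
      rw [Real.log_pow, Real.log_mul (by have := hTv i; positivity) hp.ne', Real.log_pow] at this
      exact_mod_cast this
    have e3 := Real.log_le_sub_one_of_pos hp
    linarith
  have hsum : ∑ i, Real.log ‖(A ∘ₗ T) (v i)‖ ≤ ∑ i, Real.log ‖T (v i)‖ - κ / 2 * ∑ i, c i := by
    rw [Finset.mul_sum, ← Finset.sum_sub_distrib]
    exact Finset.sum_le_sum (fun i _ => hlogi i)
  have hdetlog : Real.log |LinearMap.det (A ∘ₗ T)| = Real.log s + Real.log |LinearMap.det T| := by
    rw [LinearMap.det_comp, hAdet, abs_mul, abs_of_pos hs0, Real.log_mul hs0.ne' (abs_pos.mpr hT).ne']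
  have hlogs : -(κ / (1 - κ)) ≤ 2 * Real.log s := by
    have e : 2 * Real.log s = Real.log (1 - κ) := by rw [← hs2, Real.log_pow]; norm_num
    rw [e]
    have e2 := Real.one_sub_inv_le_log_of_pos h1κ0
    have e3 : 1 - (1 - κ)⁻¹ = -(κ / (1 - κ)) := by field_simp; ring
    linarith
  simp only [Ψ] at hkey
  rw [hdetlog] at hkey
  have hfin : κ / 2 * ∑ i, c i ≤ κ / 2 * lam' := by
    have e1 : lam * (κ / (1 - κ)) = κ * ((lam + lam') / 2) := by
      rw [h1κ]; have : lam + lam' ≠ 0 := by linarith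
      field_simp
    have e2 := mul_le_mul_of_nonneg_left hlogs hlam.le
    have e3 : η = κ * (lam' - lam) / 4 := hη
    nlinarith
  exact le_of_mul_le_mul_left hfin (by positivity)

end PartP5

section PartP6

/-- The lift of a point to the hyperplane at height one. -/
def liftPt {d : ℕ} (p : EuclideanSpace ℝ (Fin d)) : EuclideanSpace ℝ (Fin d) × ℝ := (p, 1)

lemma lift_span_top {d : ℕ} (Q : Finset (EuclideanSpace ℝ (Fin d)))
    (hQ : affineSpan ℝ (Q : Set (EuclideanSpace ℝ (Fin d))) = ⊤) :
    Submodule.span ℝ (liftPt '' (Q : Set (EuclideanSpace ℝ (Fin d)))) = ⊤ := by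
  have hne : (Q : Set (EuclideanSpace ℝ (Fin d))).Nonempty := by
    rw [Set.nonempty_iff_ne_empty]
    intro h
    rw [h, AffineSubspace.span_empty] at hQ
    exact AffineSubspace.bot_ne_top ℝ (EuclideanSpace ℝ (Fin d)) _ hQ
  obtain ⟨q0, hq0⟩ := hne
  have hv := AffineSubspace.vectorSpan_eq_top_of_affineSpan_eq_top ℝ _ _ hQ
  set S := Submodule.span ℝ (liftPt '' (Q : Set (EuclideanSpace ℝ (Fin d)))) with hS
  have hle : vectorSpan ℝ (Q : Set (EuclideanSpace ℝ (Fin d))) ≤ S.comap (LinearMap.inl ℝ _ ℝ) := by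
    rw [vectorSpan_def, Submodule.span_le]
    rintro _ ⟨p, hp, q, hq, rfl⟩
    have := S.sub_mem (Submodule.subset_span (Set.mem_image_of_mem liftPt hp))
      (Submodule.subset_span (Set.mem_image_of_mem liftPt hq))
    simpa [liftPt] using this
  rw [hv] at hle
  rw [eq_top_iff]
  rintro ⟨x, t⟩ -
  have h1 : ((x - t • q0, 0) : EuclideanSpace ℝ (Fin d) × ℝ) ∈ S := hle (x := x - t • q0) trivial
  have h2 := S.smul_mem t (Submodule.subset_span (Set.mem_image_of_mem liftPt hq0))
  have := S.add_mem h1 h2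
  simpa [liftPt] using this

lemma W_lemma {d : ℕ} (Q : Finset (EuclideanSpace ℝ (Fin d)))
    (hQ : affineSpan ℝ (Q : Set (EuclideanSpace ℝ (Fin d))) = ⊤)
    (W : Submodule ℝ (EuclideanSpace ℝ (Fin d) × ℝ)) :
    ∃ B : Finset (EuclideanSpace ℝ (Fin d)), B ⊆ Q ∧ B.card + Module.finrank ℝ W = d + 1 ∧
      (∀ b ∈ B, liftPt b ∉ W) ∧
      ∀ b ∈ B, ∀ b' ∈ B, ∀ a a', liftPt a ∈ W → liftPt a' ∈ W → ∀ c : ℝ,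
        b - a = c • (b' - a') → b = b' ∧ a = a' := by
  classical
  let v : EuclideanSpace ℝ (Fin d) → (EuclideanSpace ℝ (Fin d) × ℝ) ⧸ W := fun p => W.mkQ (liftPt p)
  obtain ⟨B, hBQ, hB, hsp⟩ := greedy_basis v (fun _ => (0 : ℝ)) Q
  have hB' : LinearIndependent ℝ (fun b : B => v b) := hB
  have hspan : Submodule.span ℝ (v '' (B : Set _)) = ⊤ := by
    have h1 : Submodule.map W.mkQ (Submodule.span ℝ (liftPt '' (Q : Set (EuclideanSpace ℝ (Fin d))))) = ⊤ := by
      rw [lift_span_top Q hQ, Submodule.map_top, Submodule.range_mkQ]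
    rw [eq_top_iff, ← h1, Submodule.map_span, Submodule.span_le]
    rintro _ ⟨_, ⟨q, hq, rfl⟩, rfl⟩
    refine Submodule.span_mono (Set.image_mono ?_) (hsp q hq)
    rintro i ⟨hi, -⟩
    exact hi
  have hcard : B.card = Module.finrank ℝ ((EuclideanSpace ℝ (Fin d) × ℝ) ⧸ W) := by
    have h2 := finrank_span_eq_card hB'
    have h3 : Set.range (fun b : B => v b) = v '' (B : Set _) := by
      ext x; simp
    rw [h3, hspan, finrank_top, Fintype.card_coe] at h2
    exact h2.symm
  have hne0 : ∀ b ∈ B, v b ≠ 0 := fun b hb => hB'.ne_zero ⟨b, hb⟩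
  refine ⟨B, hBQ, ?_, ?_, ?_⟩
  · rw [hcard, Submodule.finrank_quotient_add_finrank]
    simp
  · intro b hb h
    exact hne0 b hb ((Submodule.Quotient.mk_eq_zero W).mpr h)
  · intro b hb b' hb' a a' ha ha' c h
    have e : liftPt b - liftPt a = c • (liftPt b' - liftPt a') := by
      simp only [liftPt, Prod.mk_sub_mk, Prod.smul_mk, sub_self, smul_zero, h]
    have e1 : v b = c • v b' := by
      have := congrArg W.mkQ e
      have ha0 : W.mkQ (liftPt a) = 0 := (Submodule.Quotient.mk_eq_zero W).mpr ha
      have ha0' : W.mkQ (liftPt a') = 0 := (Submodule.Quotient.mk_eq_zero W).mpr ha'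
      rw [map_smul, map_sub, map_sub, ha0, ha0', sub_zero, sub_zero] at this
      exact this
    have hbb : b = b' := by
      by_contra hne
      have hp := (LinearIndependent.pair_iff (R := ℝ) (x := v b) (y := v b')).mp
        (by
          have := hB'.comp (![(⟨b, hb⟩ : B), ⟨b', hb'⟩]) (by
            intro i j hij
            fin_cases i <;> fin_cases j <;> simp_all)
          have hE : (fun b : B => v b) ∘ ![(⟨b, hb⟩ : B), ⟨b', hb'⟩] = ![v b, v b'] := by
            funext i
            fin_cases i <;> rfl
          rw [hE] at this
          exact this) 1 (-c) (by rw [e1]; simp)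
      exact one_ne_zero hp.1
    subst hbb
    refine ⟨rfl, ?_⟩
    have hc : c = 1 := by
      have : (c - 1) • v b = 0 := by rw [sub_smul, one_smul, ← e1, sub_self]
      rcases smul_eq_zero.mp this with h | h
      · linarith
      · exact absurd h (hne0 b hb)
    rw [hc, one_smul] at h
    exact sub_right_injective h

open Classical in
/-- The set of directions determined by a finite set of points. -/
noncomputable def dirs {d : ℕ} (Q : Finset (EuclideanSpace ℝ (Fin d))) :
    Finset (Submodule ℝ (EuclideanSpace ℝ (Fin d))) :=
  Q.offDiag.image (fun x => Submodule.span ℝ {x.1 - x.2})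

lemma span_single_eq {E : Type*} [AddCommGroup E] [Module ℝ E] {x y : E} (hx : x ≠ 0)
    (h : x ∈ Submodule.span ℝ {y}) : Submodule.span ℝ {x} = Submodule.span ℝ {y} := by
  obtain ⟨c, rfl⟩ := Submodule.mem_span_singleton.mp h
  have hc : c ≠ 0 := by rintro rfl; simp at hx
  exact Submodule.span_singleton_smul_eq (IsUnit.mk0 c hc) y

lemma dirs_ge_W {d : ℕ} (Q : Finset (EuclideanSpace ℝ (Fin d)))
    (hQ : affineSpan ℝ (Q : Set (EuclideanSpace ℝ (Fin d))) = ⊤)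
    (W : Submodule ℝ (EuclideanSpace ℝ (Fin d) × ℝ)) [DecidablePred (fun p => liftPt p ∈ W)] :
    (Q.filter (fun p => liftPt p ∈ W)).card * (d + 1 - Module.finrank ℝ W) ≤ (dirs Q).card := by
  classical
  obtain ⟨B, hBQ, hBc, hBW, hB⟩ := W_lemma Q hQ W
  have : d + 1 - Module.finrank ℝ W = B.card := by omega
  rw [this, ← Finset.card_product]
  apply Finset.card_le_card_of_injOn (fun x => Submodule.span ℝ {x.2 - x.1})
  · rintro ⟨a, b⟩ hab
    simp only [Finset.coe_product, Set.mem_prod, Finset.mem_coe, Finset.mem_filter] at hab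
    simp only [dirs, Finset.mem_coe, Finset.mem_image, Finset.mem_offDiag]
    refine ⟨(b, a), ⟨hBQ hab.2, hab.1.1, ?_⟩, rfl⟩
    intro h
    have h : b = a := h
    exact hBW b hab.2 (h ▸ hab.1.2)
  · rintro ⟨a, b⟩ hab ⟨a', b'⟩ hab' heq
    simp only [Finset.coe_product, Set.mem_prod, Finset.mem_coe, Finset.mem_filter] at hab hab'
    have h1 : b - a ∈ Submodule.span ℝ {b' - a'} := by
      have := Submodule.mem_span_singleton_self (R := ℝ) (b - a)
      simp only at heq
      rwa [heq] at this
    obtain ⟨c, hc⟩ := Submodule.mem_span_singleton.mp h1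
    obtain ⟨h2, h3⟩ := hB b hab.2 b' hab'.2 a a' hab.1.2 hab'.1.2 c hc.symm
    rw [h2, h3]

lemma pure_ineq {ι : Type*} (C : Finset ι) (a b : ι → ℝ) (h : ∀ p ∈ C, a p ^ 2 + b p ^ 2 = 1) :
    0 ≤ ∑ p ∈ C, ∑ q ∈ C, ((a p * a q + b p * b q) ^ 2 - 1 / 2) - (C.card : ℝ) / 2 + 2 * ∑ p ∈ C, a p ^ 2 := by
  rcases C.eq_empty_or_nonempty with rfl | hne
  · simp
  have hs : ∑ p ∈ C, a p ^ 2 + ∑ p ∈ C, b p ^ 2 = C.card := by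
    rw [← Finset.sum_add_distrib, Finset.sum_congr rfl h]; simp
  have hc : (1 : ℝ) ≤ C.card := by exact_mod_cast hne.card_pos
  have e : ∑ p ∈ C, ∑ q ∈ C, ((a p * a q + b p * b q) ^ 2 - 1 / 2) =
      (∑ p ∈ C, a p ^ 2) ^ 2 + (∑ p ∈ C, b p ^ 2) ^ 2 + 2 * (∑ p ∈ C, a p * b p) ^ 2 - (C.card : ℝ) ^ 2 / 2 := by
    have e1 : ∀ p q, (a p * a q + b p * b q) ^ 2 - 1 / 2 = a p ^ 2 * a q ^ 2 + b p ^ 2 * b q ^ 2 +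
      2 * ((a p * b p) * (a q * b q)) - 1 / 2 := fun p q => by ring
    simp only [e1, Finset.sum_sub_distrib, Finset.sum_add_distrib, ← Finset.mul_sum, ← Finset.sum_mul,
      Finset.sum_const, nsmul_eq_mul]
    ring
  rw [e]
  generalize (∑ p ∈ C, a p ^ 2) = X at *
  generalize (∑ p ∈ C, b p ^ 2) = Y at *
  generalize (∑ p ∈ C, a p * b p) = Z at *
  generalize (C.card : ℝ) = s at *
  subst hs
  nlinarith [sq_nonneg (X - Y + 1), sq_nonneg Z]

end PartP6

section PartP6b

lemma class_bound {d : ℕ} {F : Type*} [NormedAddCommGroup F] [InnerProductSpace ℝ F]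
    (y : EuclideanSpace ℝ (Fin d) → F) (C : Finset (EuclideanSpace ℝ (Fin d)))
    (h0 : ∀ p ∈ C, y p ≠ 0) (w : F) (hw : ‖w‖ = 1)
    (hC : ∀ p ∈ C, ∀ q ∈ C, ∃ c : ℝ, y p - y q = c • w) :
    0 ≤ ∑ x ∈ C.offDiag, ((inner ℝ (y x.1) (y x.2) / (‖y x.1‖ * ‖y x.2‖)) ^ 2 - 1 / 2) +
      2 * ∑ p ∈ C, (inner ℝ (y p) w) ^ 2 / ‖y p‖ ^ 2 := by
  classical
  rcases C.eq_empty_or_nonempty with rfl | ⟨p0, hp0⟩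
  · simp
  set G := y p0 - (inner ℝ (y p0) w) • w with hG
  have hww : inner ℝ w w = (1 : ℝ) := by rw [real_inner_self_eq_norm_sq, hw]; norm_num
  have hGw : inner ℝ G w = (0 : ℝ) := by
    rw [hG, inner_sub_left, real_inner_smul_left, hww]; ring
  have hwG : inner ℝ w G = (0 : ℝ) := by rw [real_inner_comm]; exact hGw
  have hy : ∀ p ∈ C, y p = (inner ℝ (y p) w) • w + G := by
    intro p hp
    obtain ⟨c, hc⟩ := hC p hp p0 hp0
    have e : y p = y p0 + c • w := by rw [← hc]; abel
    rw [e, inner_add_left, real_inner_smul_left, hww, hG, add_smul, mul_one]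
    abel
  have hin : ∀ p ∈ C, ∀ q ∈ C, inner ℝ (y p) (y q) = inner ℝ (y p) w * inner ℝ (y q) w + ‖G‖ ^ 2 := by
    intro p hp q hq
    generalize hα : inner ℝ (y p) w = α
    generalize hβ : inner ℝ (y q) w = β
    have h1 := hy p hp
    have h2 := hy q hq
    rw [hα] at h1
    rw [hβ] at h2
    rw [h1, h2, inner_add_left, inner_add_right, inner_add_right, real_inner_smul_left, real_inner_smul_right,
      real_inner_smul_left, real_inner_smul_right, hGw, hwG, hww, real_inner_self_eq_norm_sq]
    ring
  have hn : ∀ p ∈ C, 0 < ‖y p‖ := fun p hp => norm_pos_iff.mpr (h0 p hp)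
  have key := pure_ineq C (fun p => inner ℝ (y p) w / ‖y p‖) (fun p => ‖G‖ / ‖y p‖) (by
    intro p hp
    have := hn p hp
    have h1 := hin p hp p hp
    rw [real_inner_self_eq_norm_sq] at h1
    field_simp
    rw [h1]; ring)
  have e1 : ∀ p ∈ C, ∀ q ∈ C, (inner ℝ (y p) w / ‖y p‖ * (inner ℝ (y q) w / ‖y q‖) +
      ‖G‖ / ‖y p‖ * (‖G‖ / ‖y q‖)) = inner ℝ (y p) (y q) / (‖y p‖ * ‖y q‖) := by
    intro p hp q hq
    have h1 := hn p hp
    have h2 := hn q hq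
    rw [hin p hp q hq]
    field_simp
  have e2 : ∑ p ∈ C, ∑ q ∈ C, ((inner ℝ (y p) w / ‖y p‖ * (inner ℝ (y q) w / ‖y q‖) +
      ‖G‖ / ‖y p‖ * (‖G‖ / ‖y q‖)) ^ 2 - 1 / 2) =
      ∑ p ∈ C, ∑ q ∈ C, ((inner ℝ (y p) (y q) / (‖y p‖ * ‖y q‖)) ^ 2 - 1 / 2) :=
    Finset.sum_congr rfl (fun p hp => Finset.sum_congr rfl (fun q hq => by rw [e1 p hp q hq]))
  rw [e2, ← Finset.sum_product', ← Finset.diag_union_offDiag,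
    Finset.sum_union (Finset.disjoint_diag_offDiag C), Finset.sum_diag] at key
  have e3 : ∑ p ∈ C, ((inner ℝ (y p) (y p) / (‖y p‖ * ‖y p‖)) ^ 2 - 1 / 2) = (C.card : ℝ) / 2 := by
    rw [Finset.sum_congr rfl (g := fun _ => (1 / 2 : ℝ))]
    · rw [Finset.sum_const, nsmul_eq_mul]; ring
    · intro p hp
      have := (hn p hp).ne'
      rw [real_inner_self_eq_norm_sq]
      field_simp
      norm_num
  rw [e3] at key
  simp only [div_pow] at key ⊢
  linarith

lemma dir_bound {d : ℕ} {F : Type*} [NormedAddCommGroup F] [InnerProductSpace ℝ F]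
    (ψ : (EuclideanSpace ℝ (Fin d) × ℝ) →ₗ[ℝ] F) (Q : Finset (EuclideanSpace ℝ (Fin d)))
    (h0 : ∀ p ∈ Q, ψ (liftPt p) ≠ 0) (lam' : ℝ) (hlam : 0 ≤ lam')
    (hiso : ∀ w, ‖w‖ = 1 → ∑ p ∈ Q, (inner ℝ (ψ (liftPt p)) w) ^ 2 / ‖ψ (liftPt p)‖ ^ 2 ≤ lam') :
    (Q.card : ℝ) * (Q.card - 1) / 2 - Q.card * (lam' - 1) ≤ 2 * (dirs Q).card * lam' := by
  classical
  set y : EuclideanSpace ℝ (Fin d) → F := fun p => ψ (liftPt p) with hy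
  set G : EuclideanSpace ℝ (Fin d) × EuclideanSpace ℝ (Fin d) → ℝ :=
    fun x => (inner ℝ (y x.1) (y x.2) / (‖y x.1‖ * ‖y x.2‖)) ^ 2 - 1 / 2 with hG
  have hn : ∀ p ∈ Q, 0 < ‖y p‖ := fun p hp => norm_pos_iff.mpr (h0 p hp)
  have hyd : ∀ p q, y p - y q = ψ (p - q, 0) := by
    intro p q
    simp only [hy, liftPt]
    rw [← map_sub]; simp
  -- upper bound
  have hup : ∑ x ∈ Q.offDiag, G x ≤ Q.card * (lam' - 1) - (Q.card : ℝ) * (Q.card - 1) / 2 := by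
    have e : ∑ x ∈ Q ×ˢ Q, G x ≤ Q.card * (lam' - Q.card / 2) := by
      rw [Finset.sum_product]
      have : ∀ p ∈ Q, ∑ q ∈ Q, G (p, q) ≤ lam' - Q.card / 2 := by
        intro p hp
        have h1 := hiso ((1 / ‖y p‖) • y p) (by
          rw [norm_smul]; have := (hn p hp).ne'; simp [this])
        have h2 : ∑ q ∈ Q, G (p, q) = ∑ q ∈ Q, (inner ℝ (y q) ((1 / ‖y p‖) • y p)) ^ 2 / ‖y q‖ ^ 2 - Q.card / 2 := by
          simp only [hG, Finset.sum_sub_distrib, Finset.sum_const, nsmul_eq_mul]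
          congr 1
          · apply Finset.sum_congr rfl
            intro q hq
            rw [real_inner_smul_right, real_inner_comm]
            have := (hn p hp).ne'
            have := (hn q hq).ne'
            field_simp
          · ring
        rw [h2]; linarith
      refine (Finset.sum_le_sum this).trans ?_
      rw [Finset.sum_const, nsmul_eq_mul]
    rw [← Finset.diag_union_offDiag, Finset.sum_union (Finset.disjoint_diag_offDiag Q), Finset.sum_diag] at e
    have e3 : ∑ p ∈ Q, G (p, p) = (Q.card : ℝ) / 2 := by
      rw [Finset.sum_congr rfl (g := fun _ => (1 / 2 : ℝ))]
      · rw [Finset.sum_const, nsmul_eq_mul]; ring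
      · intro p hp
        have := (hn p hp).ne'
        simp only [hG]
        rw [real_inner_self_eq_norm_sq]
        field_simp
        norm_num
    rw [e3] at e
    linarith
  -- lower bound
  have hlow : ∀ θ ∈ dirs Q, -(2 * lam') ≤ ∑ x ∈ Q.offDiag with Submodule.span ℝ {x.1 - x.2} = θ, G x := by
    intro θ hθ
    obtain ⟨⟨r, s⟩, hrs, rfl⟩ := Finset.mem_image.mp hθ
    rw [Finset.mem_offDiag] at hrs
    simp only at hrs ⊢
    set θ := Submodule.span ℝ {r - s} with hθd
    have hrs0 : r - s ≠ 0 := sub_ne_zero.mpr hrs.2.2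
    by_cases hk : ψ (r - s, 0) = 0
    · have : ∀ x ∈ Q.offDiag.filter (fun x => Submodule.span ℝ {x.1 - x.2} = θ), 0 ≤ G x := by
        rintro ⟨p, q⟩ hx
        simp only [Finset.mem_filter, Finset.mem_offDiag] at hx
        have hpq : p - q ∈ θ := by rw [← hx.2]; exact Submodule.mem_span_singleton_self _
        obtain ⟨c, hc⟩ := Submodule.mem_span_singleton.mp hpq
        have hyy : y p = y q := by
          rw [← sub_eq_zero, hyd, ← hc]
          have : ((c • (r - s), 0) : EuclideanSpace ℝ (Fin d) × ℝ) = c • (r - s, 0) := by simp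
          rw [this, map_smul, hk, smul_zero]
        have := (hn q hx.1.2.1).ne'
        simp only [hG, hyy]
        rw [real_inner_self_eq_norm_sq]
        have e : ‖y q‖ ^ 2 / (‖y q‖ * ‖y q‖) = 1 := by field_simp
        rw [e]; norm_num
      have := Finset.sum_nonneg this
      linarith
    · set w := (1 / ‖ψ (r - s, 0)‖) • ψ (r - s, 0) with hwd
      have hkn : ‖ψ (r - s, 0)‖ ≠ 0 := norm_ne_zero_iff.mpr hk
      have hw : ‖w‖ = 1 := by rw [hwd, norm_smul]; simp [hkn]
      have hiw := hiso w hw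
      have hcls : ∀ p q, θ.mkQ p = θ.mkQ q → ∃ c : ℝ, y p - y q = c • w := by
        intro p q h
        have hpq : p - q ∈ θ := (Submodule.Quotient.eq θ).mp h
        obtain ⟨c, hc⟩ := Submodule.mem_span_singleton.mp hpq
        refine ⟨c * ‖ψ (r - s, 0)‖, ?_⟩
        rw [hyd, ← hc, hwd, smul_smul]
        have : ((c • (r - s), 0) : EuclideanSpace ℝ (Fin d) × ℝ) = c • (r - s, 0) := by simp
        rw [this, map_smul]
        congr 1
        field_simp
      have e1 : ∑ x ∈ Q.offDiag with Submodule.span ℝ {x.1 - x.2} = θ, G x =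
          ∑ c ∈ Q.image θ.mkQ, ∑ x ∈ (Q.filter (fun p => θ.mkQ p = c)).offDiag, G x := by
        rw [← Finset.sum_fiberwise_of_maps_to (g := fun x => θ.mkQ x.1) (t := Q.image θ.mkQ)]
        · apply Finset.sum_congr rfl
          intro c hc
          apply Finset.sum_congr _ (fun _ _ => rfl)
          ext ⟨p, q⟩
          simp only [Finset.mem_filter, Finset.mem_offDiag]
          constructor
          · rintro ⟨⟨⟨hp, hq, hne⟩, hs⟩, hm⟩
            refine ⟨⟨hp, hm⟩, ⟨hq, ?_⟩, hne⟩
            rw [← hm]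
            apply Eq.symm
            apply (Submodule.Quotient.eq θ).mpr
            rw [← hs]; exact Submodule.mem_span_singleton_self _
          · rintro ⟨⟨hp, hm⟩, ⟨hq, hm'⟩, hne⟩
            refine ⟨⟨⟨hp, hq, hne⟩, ?_⟩, hm⟩
            exact span_single_eq (sub_ne_zero.mpr hne) ((Submodule.Quotient.eq θ).mp (hm.trans hm'.symm))
        · rintro ⟨p, q⟩ hx
          simp only [Finset.mem_filter, Finset.mem_offDiag] at hx
          exact Finset.mem_image_of_mem _ hx.1.1
      have e2 : ∑ p ∈ Q, (inner ℝ (y p) w) ^ 2 / ‖y p‖ ^ 2 =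
          ∑ c ∈ Q.image θ.mkQ, ∑ p ∈ Q.filter (fun p => θ.mkQ p = c), (inner ℝ (y p) w) ^ 2 / ‖y p‖ ^ 2 :=
        (Finset.sum_fiberwise_of_maps_to (fun p hp => Finset.mem_image_of_mem _ hp) _).symm
      have e3 : 0 ≤ ∑ c ∈ Q.image θ.mkQ, (∑ x ∈ (Q.filter (fun p => θ.mkQ p = c)).offDiag, G x +
          2 * ∑ p ∈ Q.filter (fun p => θ.mkQ p = c), (inner ℝ (y p) w) ^ 2 / ‖y p‖ ^ 2) := by
        apply Finset.sum_nonneg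
        intro c _
        apply class_bound y _ _ w hw
        · intro p hp q hq
          rw [Finset.mem_filter] at hp hq
          exact hcls p q (hp.2.trans hq.2.symm)
        · intro p hp
          exact h0 p (Finset.mem_filter.mp hp).1
      rw [Finset.sum_add_distrib, ← Finset.mul_sum, ← e1, ← e2] at e3
      linarith
  have hlow2 : -(2 * (dirs Q).card * lam') ≤ ∑ x ∈ Q.offDiag, G x := by
    rw [← Finset.sum_fiberwise_of_maps_to (g := fun x => Submodule.span ℝ {x.1 - x.2}) (t := dirs Q)]
    · refine le_trans ?_ (Finset.sum_le_sum hlow)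
      rw [Finset.sum_const, nsmul_eq_mul]
      linarith
    · intro x hx
      exact Finset.mem_image_of_mem _ hx
  linarith

end PartP6b

section PartP6c

lemma dirs_mono {d : ℕ} {Q Q' : Finset (EuclideanSpace ℝ (Fin d))} (h : Q ⊆ Q') : dirs Q ⊆ dirs Q' := by
  classical
  unfold dirs
  exact Finset.image_subset_image (Finset.offDiag_mono h)

lemma dir_arith (d n y l lam' : ℝ) (hn0 : 0 < n) (hd : 2 ≤ d) (hy1 : 23 / 24 * n ≤ y) (hy2 : y ≤ n)
    (hlam : lam' = 12 / 10 * n / (d + 1)) (hb : y * (y - 1) / 2 - y * (lam' - 1) ≤ 2 * l * lam') :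
    d * n / 48 ≤ l := by
  have hD0 : 0 < d + 1 := by linarith
  have hy0 : 0 < y := by linarith
  have e1 : lam' * (d + 1) = 12 / 10 * n := by rw [hlam]; field_simp
  have h1 : y * (y - 1) / 2 * (d + 1) - y * (12 / 10 * n - (d + 1)) ≤ 2 * l * (12 / 10 * n) := by
    have h := mul_le_mul_of_nonneg_right hb hD0.le
    rw [← e1]
    linarith
  have h2 : y * (y * (d + 1) / 2 - 12 / 10 * n) ≤ 2 * l * (12 / 10 * n) := by
    have : 0 ≤ y * (d + 1) := by positivity
    nlinarith
  have hnd : n * 2 ≤ n * d := by gcongr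
  have h3 : 23 / 24 * n * (23 / 24 * n * (d + 1) / 2 - 12 / 10 * n) ≤ y * (y * (d + 1) / 2 - 12 / 10 * n) := by
    apply mul_le_mul hy1
    · gcongr
    · linarith
    · exact hy0.le
  have h4 : n * (23 / 24 * (23 / 24 * n * (d + 1) / 2 - 12 / 10 * n)) ≤ n * (2 * l * (12 / 10)) := by
    linarith
  have h5 := le_of_mul_le_mul_left h4 hn0
  linarith

lemma directions {d : ℕ} (hd : 2 ≤ d) (Q : Finset (EuclideanSpace ℝ (Fin d)))
    (hQ : affineSpan ℝ (Q : Set (EuclideanSpace ℝ (Fin d))) = ⊤) :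
    (d : ℝ) * Q.card / 48 ≤ (dirs Q).card := by
  classical
  set n : ℝ := (Q.card : ℝ) with hn
  have hQne : Q.Nonempty := by
    rw [Finset.nonempty_iff_ne_empty]
    intro h
    rw [h, Finset.coe_empty, AffineSubspace.span_empty] at hQ
    exact AffineSubspace.bot_ne_top ℝ (EuclideanSpace ℝ (Fin d)) _ hQ
  have hn0 : 0 < n := by rw [hn]; exact_mod_cast hQne.card_pos
  have hd' : (2 : ℝ) ≤ d := by exact_mod_cast hd
  set D : ℝ := (d : ℝ) + 1 with hD
  have hD0 : 0 < D := by linarith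
  set lam : ℝ := 11 / 10 * n / D with hlam
  set lam' : ℝ := 12 / 10 * n / D with hlam'
  have hlam0 : 0 < lam := by positivity
  have hltl : lam < lam' := by
    rw [hlam, hlam']; gcongr; norm_num
  let cnt : Submodule ℝ (EuclideanSpace ℝ (Fin d) × ℝ) → ℕ := fun W => (Q.filter (fun p => liftPt p ∈ W)).card
  have hdim : ∀ W : Submodule ℝ (EuclideanSpace ℝ (Fin d) × ℝ), Module.finrank ℝ W ≤ d + 1 := by
    intro W
    have := Submodule.finrank_le W
    simpa using this
  let f : Submodule ℝ (EuclideanSpace ℝ (Fin d) × ℝ) → ℕ × ℕ := fun W => (cnt W, Module.finrank ℝ W)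
  have hfin : (Set.range f).Finite := by
    apply Set.Finite.subset ((Set.finite_Iic Q.card).prod (Set.finite_Iic (d + 1)))
    rintro _ ⟨W, rfl⟩
    exact ⟨Finset.card_filter_le _ _, hdim W⟩
  obtain ⟨_, ⟨W, rfl⟩, hW⟩ := Set.exists_max_image (Set.range f) (fun x => (x.1 : ℝ) - lam * x.2) hfin ⟨_, ⊥, rfl⟩
  have hmax : ∀ U, (cnt U : ℝ) - lam * Module.finrank ℝ U ≤ cnt W - lam * Module.finrank ℝ W :=
    fun U => hW _ ⟨U, rfl⟩
  have hbot : 0 ≤ (cnt W : ℝ) - lam * Module.finrank ℝ W := by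
    have h1 := hmax ⊥
    rw [finrank_bot] at h1
    have h2 : (0 : ℝ) ≤ cnt ⊥ := Nat.cast_nonneg _
    simp only [Nat.cast_zero, mul_zero, sub_zero] at h1
    linarith
  have hlD : lam * D = 11 / 10 * n := by rw [hlam]; field_simp
  have hcW : (cnt W : ℝ) ≤ n := by rw [hn]; exact_mod_cast Finset.card_filter_le _ _
  set x : ℝ := (cnt W : ℝ) with hx
  have hx0 : 0 ≤ x := Nat.cast_nonneg _
  by_cases hbig : n / 24 ≤ x
  · have h1 := dirs_ge_W Q hQ W
    have h2 : (x : ℝ) * (D - Module.finrank ℝ W) ≤ (dirs Q).card := by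
      have : ((cnt W * (d + 1 - Module.finrank ℝ W) : ℕ) : ℝ) ≤ (dirs Q).card := by exact_mod_cast h1
      rw [Nat.cast_mul, Nat.cast_sub (hdim W)] at this
      push_cast at this
      exact this
    refine le_trans ?_ h2
    set k : ℝ := (Module.finrank ℝ W : ℝ) with hk
    -- lam * k ≤ x
    have h3 : k ≤ x / lam := by rw [le_div_iff₀ hlam0]; linarith
    have h4 : x / lam = x * D * 10 / (11 * n) := by rw [hlam]; field_simp
    have h5 : x * (D - x * D * 10 / (11 * n)) ≤ x * (D - k) := by
      apply mul_le_mul_of_nonneg_left _ hx0; linarith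
    refine le_trans ?_ h5
    have h6 : x * (D - x * D * 10 / (11 * n)) = D * (x * (11 * n - 10 * x)) / (11 * n) := by field_simp
    rw [h6, le_div_iff₀ (by positivity)]
    have h7 : 11 / 48 * n ^ 2 ≤ x * (11 * n - 10 * x) := by
      nlinarith [mul_nonneg (sub_nonneg.mpr hbig) (sub_nonneg.mpr hcW)]
    have h8 : d * n / 48 * (11 * n) = d * (11 / 48 * n ^ 2) := by ring
    rw [h8]
    have h9 : 0 ≤ 11 / 48 * n ^ 2 := by positivity
    calc d * (11 / 48 * n ^ 2) ≤ D * (11 / 48 * n ^ 2) := by apply mul_le_mul_of_nonneg_right _ h9; linarith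
      _ ≤ _ := mul_le_mul_of_nonneg_left h7 hD0.le
  · push Not at hbig
    set Q' := Q.filter (fun p => liftPt p ∉ W) with hQ'
    have hcard : x + Q'.card = n := by
      rw [hx, hn, hQ']
      exact_mod_cast Finset.card_filter_add_card_filter_not (s := Q) (fun p => liftPt p ∈ W)
    set m := Module.finrank ℝ ((EuclideanSpace ℝ (Fin d) × ℝ) ⧸ W) with hm
    let e : ((EuclideanSpace ℝ (Fin d) × ℝ) ⧸ W) ≃ₗ[ℝ] EuclideanSpace ℝ (Fin m) :=
      LinearEquiv.ofFinrankEq _ _ (by simp [hm])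
    let φ : (EuclideanSpace ℝ (Fin d) × ℝ) →ₗ[ℝ] EuclideanSpace ℝ (Fin m) := e.toLinearMap ∘ₗ W.mkQ
    have hφ : ∀ z, φ z = 0 ↔ z ∈ W := by
      intro z
      simp only [φ, LinearMap.comp_apply, LinearEquiv.coe_coe, LinearEquiv.map_eq_zero_iff]
      exact Submodule.Quotient.mk_eq_zero W
    obtain ⟨T, hT, hiso⟩ := radial_isotropy (fun p : Q' => φ (liftPt (p : EuclideanSpace ℝ (Fin d)))) (by
      rintro ⟨p, hp⟩ h
      exact (Finset.mem_filter.mp hp).2 ((hφ _).mp h)) lam lam' hlam0 hltl (by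
      intro U
      have h1 := hmax (U.comap φ)
      have hsub : W ≤ U.comap φ := by
        intro z hz
        rw [Submodule.mem_comap, (hφ z).mpr hz]; exact U.zero_mem
      have h2 : (cnt (U.comap φ)) = cnt W + Set.ncard {i : Q' | φ (liftPt (i : EuclideanSpace ℝ (Fin d))) ∈ U} := by
        have e1 : Set.ncard {i : Q' | φ (liftPt (i : EuclideanSpace ℝ (Fin d))) ∈ U} =
            (Q'.filter (fun p => φ (liftPt p) ∈ U)).card := by
          rw [← Set.ncard_coe_finset, ← Set.ncard_image_of_injective _ Subtype.val_injective]
          congr 1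
          ext p
          simp [and_comm]
        rw [e1]
        simp only [cnt, hQ']
        rw [← Finset.card_union_of_disjoint]
        · congr 1
          ext p
          simp only [Finset.mem_filter, Finset.mem_union, Submodule.mem_comap]
          constructor
          · rintro ⟨h, h'⟩
            by_cases hp : liftPt p ∈ W
            · exact Or.inl ⟨h, hp⟩
            · exact Or.inr ⟨⟨h, hp⟩, h'⟩
          · rintro (⟨h, h'⟩ | ⟨⟨h, -⟩, h'⟩)
            · exact ⟨h, hsub h'⟩
            · exact ⟨h, h'⟩
        · rw [Finset.disjoint_left]
          intro p hp hp'
          simp only [Finset.mem_filter] at hp hp'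
          exact hp'.1.2 hp.2
      have h3 : Module.finrank ℝ (U.comap φ) ≤ Module.finrank ℝ U + Module.finrank ℝ W := by
        rw [← LinearMap.finrank_range_add_finrank_ker (φ.domRestrict (U.comap φ))]
        apply add_le_add
        · apply Submodule.finrank_mono
          rintro _ ⟨⟨z, hz⟩, rfl⟩
          exact hz
        · have : Module.finrank ℝ (LinearMap.ker (φ.domRestrict (U.comap φ))) =
              Module.finrank ℝ ((LinearMap.ker (φ.domRestrict (U.comap φ))).map (U.comap φ).subtype) :=
            (LinearEquiv.finrank_eq (Submodule.equivMapOfInjective _ (Submodule.injective_subtype _) _))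
          rw [this]
          apply Submodule.finrank_mono
          rintro _ ⟨z, hz, rfl⟩
          exact (hφ _).mp hz
      have h3' : (Module.finrank ℝ (U.comap φ) : ℝ) ≤ Module.finrank ℝ U + Module.finrank ℝ W := by exact_mod_cast h3
      rw [h2] at h1
      push_cast at h1
      have := mul_le_mul_of_nonneg_left h3' hlam0.le
      linarith)
    have hb := dir_bound (T ∘ₗ φ) Q' (by
      intro p hp h
      rw [LinearMap.comp_apply] at h
      have : φ (liftPt p) = 0 := hT (by rw [h, map_zero])
      exact (Finset.mem_filter.mp hp).2 ((hφ _).mp this)) lam' (hlam0.le.trans hltl.le) (by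
      intro w hw
      have := hiso w hw
      rw [← Finset.sum_coe_sort]
      exact this)
    have hmono : ((dirs Q').card : ℝ) ≤ (dirs Q).card := by
      exact_mod_cast Finset.card_le_card (dirs_mono (Finset.filter_subset _ _))
    refine le_trans ?_ hmono
    exact dir_arith d n Q'.card (dirs Q').card lam' hn0 hd' (by linarith) (by linarith) hlam' hb

end PartP6c

section PartP7

lemma gram2_pos_of {d : ℕ} {x y : EuclideanSpace ℝ (Fin d)} (hx : x ≠ 0) (hy : y ≠ 0)
    (h : ∀ c : ℝ, y ≠ c • x) : 0 < gram2 x y := by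
  unfold gram2
  have h1 : |inner ℝ x y| ≤ ‖x‖ * ‖y‖ := abs_real_inner_le_norm x y
  have h2 : |inner ℝ x y| ≠ ‖x‖ * ‖y‖ := by
    intro h3
    have hpos : ‖x‖ * ‖y‖ ≠ 0 := mul_ne_zero (norm_ne_zero_iff.mpr hx) (norm_ne_zero_iff.mpr hy)
    have h4 : |inner ℝ x y / (‖x‖ * ‖y‖)| = 1 := by
      rw [abs_div, h3, abs_of_nonneg (by positivity : 0 ≤ ‖x‖ * ‖y‖), div_self hpos]
    obtain ⟨-, r, -, hr⟩ := (abs_real_inner_div_norm_mul_norm_eq_one_iff x y).mp h4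
    exact h r hr
  have h3 : |inner ℝ x y| < ‖x‖ * ‖y‖ := lt_of_le_of_ne h1 h2
  have h4 : |inner ℝ x y| ^ 2 < (‖x‖ * ‖y‖) ^ 2 := by gcongr
  rw [sq_abs] at h4
  nlinarith

lemma good_use {d : ℕ} {N : NormOn d} (hN : GoodNorm N) (X : Finset (EuclideanSpace ℝ (Fin d)))
    (Z R : Finset ℝ) (h0 : ∀ x ∈ X, x ≠ 0)
    (hZ : ∀ x ∈ X, ∀ c, x c ∈ IntermediateField.adjoin ℚ (Z : Set ℝ))
    (hpar : ∀ x ∈ X, ∀ y ∈ X, x ≠ y → ∀ c : ℝ, y ≠ c • x)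
    (hR : ∀ x ∈ X, N.1 x ∈ R) : X.card ≤ Z.card + R.card := by
  have hr : Set.range (fun i => ((Z.equivFin.symm i : Z) : ℝ)) = (Z : Set ℝ) := by
    ext t
    constructor
    · rintro ⟨i, rfl⟩; exact (Z.equivFin.symm i).2
    · intro ht; exact ⟨Z.equivFin ⟨t, ht⟩, by simp⟩
  refine hN Z.card X.card R.card (fun i => ((Z.equivFin.symm i : Z) : ℝ))
    (fun i => ((X.equivFin.symm i : X) : EuclideanSpace ℝ (Fin d)))
    (fun i => R.equivFin ⟨_, hR _ (X.equivFin.symm i).2⟩) ?_ ?_ ?_ ?_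
  · intro i c
    rw [hr]
    exact hZ _ (X.equivFin.symm i).2 c
  · intro i
    exact h0 _ (X.equivFin.symm i).2
  · intro i j hij
    apply gram2_pos_of (h0 _ (X.equivFin.symm i).2) (h0 _ (X.equivFin.symm j).2)
    apply hpar _ (X.equivFin.symm i).2 _ (X.equivFin.symm j).2
    intro h
    exact hij (X.equivFin.symm.injective (Subtype.ext h))
  · intro i j hij
    have := R.equivFin.injective hij
    exact congrArg Subtype.val this

/-- One-dimensional economical generation. -/
lemma one_dim (K : ℕ) (T : Finset ℝ) (hT : 2 * K ≤ T.card) :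
    ∃ (Z : Finset ℝ) (w : ℕ), Z.card ≤ 2 * K + w ∧ (∀ t ∈ T, t ∈ IntermediateField.adjoin ℚ (Z : Set ℝ)) ∧
      w * K ≤ (T.offDiag.image (fun x => |x.1 - x.2|)).card := by
  classical
  obtain ⟨R0, hR0T, hR0c⟩ := Finset.exists_subset_card_eq hT
  let Pr : Finset ℝ → Prop := fun R => R0 ⊆ R ∧ ∃ (Z : Finset ℝ) (w : ℕ), Z.card ≤ 2 * K + w ∧
    (∀ t ∈ R, t ∈ IntermediateField.adjoin ℚ (Z : Set ℝ)) ∧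
      w * K ≤ (R.offDiag.image (fun x => |x.1 - x.2|)).card
  have hPr0 : Pr R0 := ⟨subset_rfl, R0, 0, by omega,
    fun t ht => IntermediateField.subset_adjoin ℚ _ ht, by simp⟩
  obtain ⟨R, hR, hmax⟩ := Finset.exists_max_image (T.powerset.filter Pr) Finset.card
    ⟨R0, Finset.mem_filter.mpr ⟨Finset.mem_powerset.mpr hR0T, hPr0⟩⟩
  rw [Finset.mem_filter, Finset.mem_powerset] at hR
  obtain ⟨hRT, hR0R, Z, w, hZc, hZ, hw⟩ := hR
  have hins : ∀ t ∈ T, t ∉ R → ¬ Pr (insert t R) := by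
    intro t ht htR hPr
    have := hmax (insert t R) (Finset.mem_filter.mpr ⟨Finset.mem_powerset.mpr
      (Finset.insert_subset ht hRT), hPr⟩)
    rw [Finset.card_insert_of_notMem htR] at this
    omega
  have hTR : T ⊆ R := by
    intro t ht
    by_contra htR
    set O := R.offDiag.image (fun x => |x.1 - x.2|) with hO
    set Nw := R.image (fun r => |t - r|) with hNw
    have hsub : O ∪ Nw ⊆ (insert t R).offDiag.image (fun x => |x.1 - x.2|) := by
      apply Finset.union_subset
      · exact Finset.image_subset_image (Finset.offDiag_mono (Finset.subset_insert _ _))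
      · intro v hv
        obtain ⟨r, hr, rfl⟩ := Finset.mem_image.mp hv
        refine Finset.mem_image.mpr ⟨(t, r), ?_, rfl⟩
        rw [Finset.mem_offDiag]
        refine ⟨Finset.mem_insert_self _ _, Finset.mem_insert_of_mem hr, ?_⟩
        intro h
        exact htR ((show t = r from h) ▸ hr)
    by_cases hdis : Disjoint O Nw
    · have hcard : K ≤ Nw.card := by
        have h1 : R.card ≤ 2 * Nw.card := by
          apply Finset.card_le_mul_card_image
          intro v _
          have : R.filter (fun r => |t - r| = v) ⊆ {t - v, t + v} := by
            intro r hr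
            rw [Finset.mem_filter] at hr
            rw [Finset.mem_insert, Finset.mem_singleton]
            rcases abs_choice (t - r) with h | h
            · left; linarith [hr.2]
            · right; linarith [hr.2]
          exact (Finset.card_le_card this).trans Finset.card_le_two
        have h2 := Finset.card_le_card hR0R
        omega
      apply hins t ht htR
      refine ⟨hR0R.trans (Finset.subset_insert _ _), insert t Z, w + 1, ?_, ?_, ?_⟩
      · have := Finset.card_insert_le t Z
        omega
      · intro r hr
        rcases Finset.mem_insert.mp hr with rfl | hr
        · exact IntermediateField.subset_adjoin ℚ _ (by simp)
        · exact IntermediateField.adjoin.mono ℚ _ _ (by simp) (hZ r hr)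
      · have := Finset.card_le_card hsub
        rw [Finset.card_union_of_disjoint hdis] at this
        rw [add_mul, one_mul]
        omega
    · rw [Finset.not_disjoint_iff] at hdis
      obtain ⟨v, hvO, hvN⟩ := hdis
      obtain ⟨⟨r1, r2⟩, hr12, hv1⟩ := Finset.mem_image.mp hvO
      obtain ⟨r, hr, hv2⟩ := Finset.mem_image.mp hvN
      rw [Finset.mem_offDiag] at hr12
      simp only at hr12 hv1 hv2
      have htF : t ∈ IntermediateField.adjoin ℚ (Z : Set ℝ) := by
        have e : |t - r| = |r1 - r2| := by rw [hv1, hv2]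
        have h12 := sub_mem (hZ r1 hr12.1) (hZ r2 hr12.2.1)
        rcases abs_eq_abs.mp e with h | h
        · have : t = r + (r1 - r2) := by linarith
          rw [this]; exact add_mem (hZ r hr) h12
        · have : t = r - (r1 - r2) := by linarith
          rw [this]; exact sub_mem (hZ r hr) h12
      apply hins t ht htR
      refine ⟨hR0R.trans (Finset.subset_insert _ _), Z, w, hZc, ?_, ?_⟩
      · intro r hr
        rcases Finset.mem_insert.mp hr with rfl | hr
        · exact htF
        · exact hZ r hr
      · exact hw.trans (Finset.card_le_card (Finset.subset_union_left.trans hsub))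
  refine ⟨Z, w, hZc, fun t ht => hZ t (hTR ht), ?_⟩
  have : T = R := Finset.Subset.antisymm hTR hRT
  rw [this]; exact hw

end PartP7

section PartP7b

/-- Intersection of two lines defined over a field. -/
lemma inter_mem {d : ℕ} (F : IntermediateField ℚ ℝ) (x y u v p : EuclideanSpace ℝ (Fin d)) (s t : ℝ)
    (hx : ∀ c, x c ∈ F) (hy : ∀ c, y c ∈ F) (hu : ∀ c, u c ∈ F) (hv : ∀ c, v c ∈ F)
    (hx0 : x ≠ 0) (hpar : ∀ c : ℝ, y ≠ c • x) (h1 : p - u = s • x) (h2 : p - v = t • y) :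
    ∀ c, p c ∈ F := by
  have hmin : ∃ i j, x i * y j - x j * y i ≠ 0 := by
    by_contra hcon
    push Not at hcon
    obtain ⟨i, hi⟩ : ∃ i, x i ≠ 0 := by
      by_contra h
      push Not at h
      exact hx0 (by ext i; simpa using h i)
    apply hpar (y i / x i)
    ext j
    have := hcon i j
    simp only [PiLp.smul_apply, smul_eq_mul]
    field_simp
    linarith
  obtain ⟨i, j, hij⟩ := hmin
  have e : ∀ c, u c + s * x c = v c + t * y c := by
    intro c
    have a1 : p c - u c = s * x c := by simpa using congrArg (fun z : EuclideanSpace ℝ (Fin d) => z c) h1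
    have a2 : p c - v c = t * y c := by simpa using congrArg (fun z : EuclideanSpace ℝ (Fin d) => z c) h2
    linarith
  have hs : s = ((v i - u i) * y j - (v j - u j) * y i) / (x i * y j - x j * y i) := by
    rw [eq_div_iff hij]
    have := e i
    have := e j
    have e1 : v i - u i = s * x i - t * y i := by linarith [e i]
    have e2 : v j - u j = s * x j - t * y j := by linarith [e j]
    rw [e1, e2]; ring
  have hsF : s ∈ F := by
    rw [hs]
    exact div_mem (sub_mem (mul_mem (sub_mem (hv i) (hu i)) (hy j)) (mul_mem (sub_mem (hv j) (hu j)) (hy i)))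
      (sub_mem (mul_mem (hx i) (hy j)) (mul_mem (hx j) (hy i)))
  intro c
  have a1 : p c - u c = s * x c := by simpa using congrArg (fun z : EuclideanSpace ℝ (Fin d) => z c) h1
  have : p c = u c + s * x c := by linarith
  rw [this]
  exact add_mem (hu c) (mul_mem hsF (hx c))

open Classical in
/-- The set of distances determined by a finite set. -/
noncomputable def dists {d : ℕ} (N : NormOn d) (P : Finset (EuclideanSpace ℝ (Fin d))) : Finset ℝ :=
  P.offDiag.image (fun x => N.1 (x.1 - x.2))

/-- All the coordinates of the points of a finite set. -/
noncomputable def coords {d : ℕ} (P : Finset (EuclideanSpace ℝ (Fin d))) : Finset ℝ :=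
  P.biUnion (fun p => Finset.univ.image (fun c => p c))

lemma coords_card {d : ℕ} (P : Finset (EuclideanSpace ℝ (Fin d))) : (coords P).card ≤ P.card * d := by
  unfold coords
  apply Finset.card_biUnion_le_card_mul
  intro p _
  simpa using Finset.card_image_le (s := (Finset.univ : Finset (Fin d))) (f := fun c => p c)

lemma coords_mem {d : ℕ} {P : Finset (EuclideanSpace ℝ (Fin d))} {p} (hp : p ∈ P) (c : Fin d) :
    p c ∈ coords P := by
  unfold coords
  exact Finset.mem_biUnion.mpr ⟨p, hp, Finset.mem_image_of_mem _ (Finset.mem_univ c)⟩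

/-- Most points on a line. -/
lemma line_case {d : ℕ} {N : NormOn d} (hN : GoodNorm N) (K : ℕ) (hK : 1 ≤ K)
    (P : Finset (EuclideanSpace ℝ (Fin d))) (hP : affineSpan ℝ (P : Set (EuclideanSpace ℝ (Fin d))) = ⊤)
    (p0 p1 : EuclideanSpace ℝ (Fin d)) (hp : p1 - p0 ≠ 0) (A : Finset (EuclideanSpace ℝ (Fin d)))
    (hAP : A ⊆ P) (hA : ∀ a ∈ A, a - p0 ∈ Submodule.span ℝ {p1 - p0}) (hAc : 2 * K ≤ A.card) :
    ∃ B : ℕ, d ≤ B + 1 ∧ B * A.card ≤ 2 * d + B * d + 2 * K + 2 * (dists N P).card := by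
  classical
  have hs : ∀ a, ∃ s : ℝ, a ∈ A → a = p0 + s • (p1 - p0) := by
    intro a
    by_cases ha : a ∈ A
    · obtain ⟨s, hs⟩ := Submodule.mem_span_singleton.mp (hA a ha)
      exact ⟨s, fun _ => by rw [hs]; abel⟩
    · exact ⟨0, fun h => absurd h ha⟩
  choose s hs using hs
  have hsinj : Set.InjOn s (A : Set (EuclideanSpace ℝ (Fin d))) := by
    intro a ha b hb h
    rw [hs a ha, hs b hb, h]
  set T := A.image s with hT
  have hTc : T.card = A.card := Finset.card_image_of_injOn hsinj
  obtain ⟨Z, w, hZc, hZ, hw⟩ := one_dim K T (by rw [hTc]; exact hAc)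
  have hNp : N.1 (p1 - p0) ≠ 0 := fun h => hp (N.2 _ h)
  have hwk : w ≤ (dists N P).card := by
    have h1 : (T.offDiag.image (fun x => |x.1 - x.2|)).card ≤ (dists N P).card := by
      apply Finset.card_le_card_of_injOn (fun r => r * N.1 (p1 - p0))
      · intro r hr
        obtain ⟨⟨t, t'⟩, htt, rfl⟩ := Finset.mem_image.mp hr
        rw [Finset.mem_offDiag] at htt
        obtain ⟨a, ha, hat⟩ := Finset.mem_image.mp htt.1
        obtain ⟨b, hb, hbt⟩ := Finset.mem_image.mp htt.2.1
        simp only at hat hbt htt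
        have hne : a ≠ b := by
          rintro rfl
          exact htt.2.2 (hat.symm.trans hbt)
        refine Finset.mem_coe.mpr (Finset.mem_image.mpr ⟨(a, b), Finset.mem_offDiag.mpr ⟨hAP ha, hAP hb, hne⟩, ?_⟩)
        have : a - b = (s a - s b) • (p1 - p0) := by
          conv_lhs => rw [hs a ha, hs b hb]
          rw [sub_smul]; abel
        simp only
        rw [this, map_smul_eq_mul, Real.norm_eq_abs, hat, hbt]
      · intro r _ r' _ h
        exact mul_right_cancel₀ hNp h
    calc w = w * 1 := (mul_one w).symm
      _ ≤ w * K := Nat.mul_le_mul_left _ hK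
      _ ≤ _ := hw.trans h1
  set W : Submodule ℝ (EuclideanSpace ℝ (Fin d) × ℝ) := Submodule.span ℝ (({liftPt p0, liftPt p1} : Finset _) : Set _) with hW
  have hWdim : Module.finrank ℝ W ≤ 2 := (finrank_span_finset_le_card _).trans Finset.card_le_two
  have hAW : ∀ a ∈ A, liftPt a ∈ W := by
    intro a ha
    have m0 : liftPt p0 ∈ W := Submodule.subset_span (by simp)
    have m1 : liftPt p1 ∈ W := Submodule.subset_span (by simp)
    have e : liftPt a = liftPt p0 + s a • (liftPt p1 - liftPt p0) := by
      conv_lhs => rw [hs a ha]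
      simp [liftPt]
    rw [e]
    exact W.add_mem m0 (W.smul_mem _ (W.sub_mem m1 m0))
  obtain ⟨B, hBP, hBc, hBW, hB⟩ := W_lemma P hP W
  refine ⟨B.card, by omega, ?_⟩
  set X := (B ×ˢ A).image (fun x => x.1 - x.2) with hX
  have hXc : X.card = B.card * A.card := by
    rw [← Finset.card_product]
    apply Finset.card_image_of_injOn
    rintro ⟨b, a⟩ hba ⟨b', a'⟩ hba' h
    simp only [Finset.coe_product, Set.mem_prod, Finset.mem_coe] at hba hba'
    obtain ⟨h1, h2⟩ := hB b hba.1 b' hba'.1 a a' (hAW a hba.2) (hAW a' hba'.2) 1 (by rw [one_smul]; exact h)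
    rw [h1, h2]
  set Z' := Z ∪ coords {p0, p1} ∪ coords B with hZ'
  have hF : ∀ t ∈ Z', t ∈ IntermediateField.adjoin ℚ (Z' : Set ℝ) :=
    fun t ht => IntermediateField.subset_adjoin ℚ _ ht
  have hgood := good_use hN X Z' (dists N P) ?_ ?_ ?_ ?_
  · have c1 : Z'.card ≤ (2 * K + w) + 2 * d + B.card * d := by
      refine (Finset.card_union_le _ _).trans (add_le_add ((Finset.card_union_le _ _).trans (add_le_add hZc ?_)) (coords_card B))
      exact (coords_card _).trans (Nat.mul_le_mul_right _ Finset.card_le_two)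
    rw [hXc] at hgood
    omega
  · intro x hx
    obtain ⟨⟨b, a⟩, hba, rfl⟩ := Finset.mem_image.mp hx
    rw [Finset.mem_product] at hba
    intro h
    have h : b = a := sub_eq_zero.mp h
    exact hBW b hba.1 (h ▸ hAW a hba.2)
  · intro x hx c
    obtain ⟨⟨b, a⟩, hba, rfl⟩ := Finset.mem_image.mp hx
    rw [Finset.mem_product] at hba
    simp only at hba ⊢
    have f0 : p0 c ∈ IntermediateField.adjoin ℚ (Z' : Set ℝ) := hF _ (by
      simp only [hZ', Finset.mem_union]; exact Or.inl (Or.inr (coords_mem (by simp) c)))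
    have f1 : p1 c ∈ IntermediateField.adjoin ℚ (Z' : Set ℝ) := hF _ (by
      simp only [hZ', Finset.mem_union]; exact Or.inl (Or.inr (coords_mem (by simp) c)))
    have f2 : b c ∈ IntermediateField.adjoin ℚ (Z' : Set ℝ) := hF _ (by
      simp only [hZ', Finset.mem_union]; exact Or.inr (coords_mem hba.1 c))
    have f3 : s a ∈ IntermediateField.adjoin ℚ (Z' : Set ℝ) :=
      IntermediateField.adjoin.mono ℚ _ _ (by
        intro t ht; simp only [hZ', Finset.coe_union]; exact Or.inl (Or.inl ht)) (hZ _ (Finset.mem_image_of_mem s hba.2))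
    have e : (b - a) c = b c - (p0 c + s a * (p1 c - p0 c)) := by
      conv_lhs => rw [hs a hba.2]
      simp
    rw [e]
    exact sub_mem f2 (add_mem f0 (mul_mem f3 (sub_mem f1 f0)))
  · intro x hx y hy hxy c h
    obtain ⟨⟨b, a⟩, hba, rfl⟩ := Finset.mem_image.mp hx
    obtain ⟨⟨b', a'⟩, hba', rfl⟩ := Finset.mem_image.mp hy
    rw [Finset.mem_product] at hba hba'
    obtain ⟨h1, h2⟩ := hB b' hba'.1 b hba.1 a' a (hAW _ hba'.2) (hAW _ hba.2) c h
    simp only at h1 h2 hxy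
    exact hxy (by rw [h1, h2])
  · intro x hx
    obtain ⟨⟨b, a⟩, hba, rfl⟩ := Finset.mem_image.mp hx
    rw [Finset.mem_product] at hba
    refine Finset.mem_image.mpr ⟨(b, a), Finset.mem_offDiag.mpr ⟨hBP hba.1, hAP hba.2, ?_⟩, rfl⟩
    intro h
    have h : b = a := h
    exact hBW b hba.1 (h ▸ hAW a hba.2)

end PartP7b

section PartP7c

lemma not_par_of_span_ne {E : Type*} [AddCommGroup E] [Module ℝ E] {x y : E} (hy : y ≠ 0)
    (h : Submodule.span ℝ {x} ≠ Submodule.span ℝ {y}) : ∀ c : ℝ, y ≠ c • x := by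
  intro c hc
  apply h
  apply Eq.symm
  apply span_single_eq hy
  rw [hc]
  exact Submodule.smul_mem _ _ (Submodule.mem_span_singleton_self _)

lemma econ {d : ℕ} (m : ℕ) (P : Finset (EuclideanSpace ℝ (Fin d))) (hP : m ^ 2 + m + 1 ≤ P.card) :
    (∃ (Z : Finset ℝ) (w : ℕ), Z.card ≤ d * (m ^ 2 + m + 1 + w + 1) ∧
      (∀ p ∈ P, ∀ c, p c ∈ IntermediateField.adjoin ℚ (Z : Set ℝ)) ∧ w * m ≤ (dirs P).card) ∨
    (∃ p0 p1 : EuclideanSpace ℝ (Fin d), p1 - p0 ≠ 0 ∧ ∃ A ⊆ P,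
      (∀ a ∈ A, a - p0 ∈ Submodule.span ℝ {p1 - p0}) ∧ P.card ≤ A.card + m ^ 2) := by
  classical
  obtain ⟨S, hSP, hSc⟩ := Finset.exists_subset_card_eq hP
  let Pr : Finset (EuclideanSpace ℝ (Fin d)) → Prop := fun Q => S ⊆ Q ∧ ∃ (Z : Finset ℝ) (w : ℕ),
    Z.card ≤ d * (m ^ 2 + m + 1 + w) ∧
    (∀ p ∈ Q, ∀ c, p c ∈ IntermediateField.adjoin ℚ (Z : Set ℝ)) ∧ w * m ≤ (dirs Q).card
  have hPr0 : Pr S := ⟨subset_rfl, coords S, 0, by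
      rw [add_zero, ← hSc, mul_comm]; exact coords_card S,
    fun p hp c => IntermediateField.subset_adjoin ℚ _ (coords_mem hp c), by simp⟩
  obtain ⟨Q, hQ, hmax⟩ := Finset.exists_max_image (P.powerset.filter Pr) Finset.card
    ⟨S, Finset.mem_filter.mpr ⟨Finset.mem_powerset.mpr hSP, hPr0⟩⟩
  rw [Finset.mem_filter, Finset.mem_powerset] at hQ
  obtain ⟨hQP, hSQ, Z, w, hZc, hZ, hw⟩ := hQ
  have hins : ∀ p ∈ P, p ∉ Q → ¬ Pr (insert p Q) := by
    intro p hp hpQ hPr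
    have := hmax (insert p Q) (Finset.mem_filter.mpr ⟨Finset.mem_powerset.mpr
      (Finset.insert_subset hp hQP), hPr⟩)
    rw [Finset.card_insert_of_notMem hpQ] at this
    omega
  let Θ : EuclideanSpace ℝ (Fin d) → Finset (Submodule ℝ (EuclideanSpace ℝ (Fin d))) :=
    fun p => Q.image (fun q => Submodule.span ℝ {p - q})
  have hpq0 : ∀ p, p ∉ Q → ∀ q ∈ Q, p - q ≠ 0 := by
    intro p hp q hq h
    exact hp ((sub_eq_zero.mp h) ▸ hq)
  have hfew : ∀ p ∈ P, p ∉ Q → (Θ p).card ≤ m := by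
    intro p hp hpQ
    by_contra hlt
    push Not at hlt
    have hsub : dirs Q ∪ Θ p ⊆ dirs (insert p Q) := by
      apply Finset.union_subset (dirs_mono (Finset.subset_insert _ _))
      intro θ hθ
      obtain ⟨q, hq, rfl⟩ := Finset.mem_image.mp hθ
      refine Finset.mem_image.mpr ⟨(p, q), Finset.mem_offDiag.mpr
        ⟨Finset.mem_insert_self _ _, Finset.mem_insert_of_mem hq, ?_⟩, rfl⟩
      exact sub_ne_zero.mp (hpq0 p hpQ q hq)
    by_cases hold : (Θ p ∩ dirs Q).card ≤ 1
    · apply hins p hp hpQ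
      refine ⟨hSQ.trans (Finset.subset_insert _ _), Z ∪ coords {p}, w + 1, ?_, ?_, ?_⟩
      · have h1 := coords_card ({p} : Finset (EuclideanSpace ℝ (Fin d)))
        have h2 := Finset.card_union_le Z (coords {p})
        rw [Finset.card_singleton, one_mul] at h1
        have h3 : d * (m ^ 2 + m + 1 + (w + 1)) = d * (m ^ 2 + m + 1 + w) + d := by ring
        omega
      · intro r hr c
        rcases Finset.mem_insert.mp hr with rfl | hr
        · exact IntermediateField.subset_adjoin ℚ _ (by
            rw [Finset.mem_coe, Finset.mem_union]; exact Or.inr (coords_mem (by simp) c))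
        · exact IntermediateField.adjoin.mono ℚ _ _ (by simp) (hZ r hr c)
      · have h1 := Finset.card_le_card hsub
        have h2 := Finset.card_union_add_card_inter (dirs Q) (Θ p)
        rw [Finset.inter_comm] at h2
        rw [add_mul, one_mul]
        omega
    · push Not at hold
      obtain ⟨θ1, hθ1, θ2, hθ2, hne⟩ := Finset.one_lt_card.mp hold
      rw [Finset.mem_inter] at hθ1 hθ2
      obtain ⟨u, hu, hu1⟩ := Finset.mem_image.mp hθ1.1
      obtain ⟨v, hv, hv1⟩ := Finset.mem_image.mp hθ2.1
      obtain ⟨⟨r1, r2⟩, hr, hr1⟩ := Finset.mem_image.mp hθ1.2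
      obtain ⟨⟨s1, s2⟩, hs, hs1⟩ := Finset.mem_image.mp hθ2.2
      rw [Finset.mem_offDiag] at hr hs
      simp only at hr hs hr1 hs1 hu1 hv1
      have hx : p - u ∈ Submodule.span ℝ {r1 - r2} := by
        rw [hr1, ← hu1]; exact Submodule.mem_span_singleton_self _
      have hy : p - v ∈ Submodule.span ℝ {s1 - s2} := by
        rw [hs1, ← hv1]; exact Submodule.mem_span_singleton_self _
      obtain ⟨s, hs'⟩ := Submodule.mem_span_singleton.mp hx
      obtain ⟨t, ht'⟩ := Submodule.mem_span_singleton.mp hy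
      have hpF := inter_mem (IntermediateField.adjoin ℚ (Z : Set ℝ)) (r1 - r2) (s1 - s2) u v p s t
        (fun c => by rw [PiLp.sub_apply]; exact sub_mem (hZ r1 hr.1 c) (hZ r2 hr.2.1 c))
        (fun c => by rw [PiLp.sub_apply]; exact sub_mem (hZ s1 hs.1 c) (hZ s2 hs.2.1 c))
        (hZ u hu) (hZ v hv) (sub_ne_zero.mpr hr.2.2)
        (not_par_of_span_ne (sub_ne_zero.mpr hs.2.2) (by rw [hr1, hs1]; exact hne)) hs'.symm ht'.symm
      apply hins p hp hpQ
      refine ⟨hSQ.trans (Finset.subset_insert _ _), Z, w, hZc, ?_, ?_⟩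
      · intro r hr c
        rcases Finset.mem_insert.mp hr with rfl | hr
        · exact hpF c
        · exact hZ r hr c
      · exact hw.trans (Finset.card_le_card (Finset.subset_union_left.trans hsub))
  by_cases hone : (P \ Q).card ≤ 1
  · left
    refine ⟨Z ∪ coords (P \ Q), w, ?_, ?_, hw.trans (Finset.card_le_card (dirs_mono hQP))⟩
    · have h1 := coords_card (P \ Q)
      have h2 := Finset.card_union_le Z (coords (P \ Q))
      have h3 : d * (m ^ 2 + m + 1 + w + 1) = d * (m ^ 2 + m + 1 + w) + d := by ring
      have h4 : (P \ Q).card * d ≤ 1 * d := Nat.mul_le_mul_right _ hone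
      omega
    · intro p hp c
      by_cases hpQ : p ∈ Q
      · exact IntermediateField.adjoin.mono ℚ _ _ (by simp) (hZ p hpQ c)
      · exact IntermediateField.subset_adjoin ℚ _ (by
          rw [Finset.mem_coe, Finset.mem_union]
          exact Or.inr (coords_mem (Finset.mem_sdiff.mpr ⟨hp, hpQ⟩) c))
  · right
    push Not at hone
    obtain ⟨p0, hp0, p1, hp1, hne⟩ := Finset.one_lt_card.mp hone
    rw [Finset.mem_sdiff] at hp0 hp1
    have hp10 : p1 - p0 ≠ 0 := sub_ne_zero.mpr hne.symm
    set L := Submodule.span ℝ {p1 - p0} with hL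
    have hoff : (Q.filter (fun q => q - p0 ∉ L)).card ≤ m ^ 2 := by
      have h1 : (Q.filter (fun q => q - p0 ∉ L)).card ≤ (Θ p0 ×ˢ Θ p1).card := by
        apply Finset.card_le_card_of_injOn (fun q => (Submodule.span ℝ {p0 - q}, Submodule.span ℝ {p1 - q}))
        · intro q hq
          have hq := (Finset.mem_filter.mp hq).1
          exact Finset.mem_coe.mpr (Finset.mem_product.mpr
            ⟨Finset.mem_image_of_mem _ hq, Finset.mem_image_of_mem _ hq⟩)
        · intro q hq q' hq' h
          rw [Finset.mem_coe, Finset.mem_filter] at hq hq'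
          have h0 : Submodule.span ℝ {p0 - q} = Submodule.span ℝ {p0 - q'} := (Prod.ext_iff.mp h).1
          have h1 : Submodule.span ℝ {p1 - q} = Submodule.span ℝ {p1 - q'} := (Prod.ext_iff.mp h).2
          by_contra hqq
          have m0 : q' - q ∈ Submodule.span ℝ {p0 - q} := by
            have a1 := Submodule.mem_span_singleton_self (R := ℝ) (p0 - q)
            have a2 := Submodule.mem_span_singleton_self (R := ℝ) (p0 - q')
            rw [← h0] at a2
            have := Submodule.sub_mem _ a1 a2
            have e : p0 - q - (p0 - q') = q' - q := by abel
            rwa [e] at this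
          have m1 : q' - q ∈ Submodule.span ℝ {p1 - q} := by
            have a1 := Submodule.mem_span_singleton_self (R := ℝ) (p1 - q)
            have a2 := Submodule.mem_span_singleton_self (R := ℝ) (p1 - q')
            rw [← h1] at a2
            have := Submodule.sub_mem _ a1 a2
            have e : p1 - q - (p1 - q') = q' - q := by abel
            rwa [e] at this
          have hqq0 : q' - q ≠ 0 := sub_ne_zero.mpr (Ne.symm hqq)
          have e01 : Submodule.span ℝ {p0 - q} = Submodule.span ℝ {p1 - q} :=
            (span_single_eq hqq0 m0).symm.trans (span_single_eq hqq0 m1)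
          have mL : p1 - p0 ∈ Submodule.span ℝ {p0 - q} := by
            have a1 := Submodule.mem_span_singleton_self (R := ℝ) (p0 - q)
            have a2 := Submodule.mem_span_singleton_self (R := ℝ) (p1 - q)
            rw [← e01] at a2
            have := Submodule.sub_mem _ a2 a1
            have e : p1 - q - (p0 - q) = p1 - p0 := by abel
            rwa [e] at this
          apply hq.2
          rw [hL, span_single_eq hp10 mL, show q - p0 = -(p0 - q) by abel]
          exact Submodule.neg_mem _ (Submodule.mem_span_singleton_self (R := ℝ) (p0 - q))
      rw [Finset.card_product] at h1
      have h2 := hfew p0 hp0.1 hp0.2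
      have h3 := hfew p1 hp1.1 hp1.2
      calc _ ≤ _ := h1
        _ ≤ m * m := Nat.mul_le_mul h2 h3
        _ = m ^ 2 := by ring
    have hon : m + 1 ≤ (Q.filter (fun q => q - p0 ∈ L)).card := by
      have h1 := Finset.card_filter_add_card_filter_not (s := Q) (fun q => q - p0 ∈ L)
      have h2 := Finset.card_le_card hSQ
      omega
    have hallL : ∀ p ∈ P, p ∉ Q → p - p0 ∈ L := by
      intro p hp hpQ
      by_contra hpL
      have h1 : (Q.filter (fun q => q - p0 ∈ L)).card ≤ (Θ p).card := by
        apply Finset.card_le_card_of_injOn (fun q => Submodule.span ℝ {p - q})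
        · intro q hq
          exact Finset.mem_coe.mpr (Finset.mem_image_of_mem _ (Finset.mem_filter.mp hq).1)
        · intro q hq q' hq' h
          rw [Finset.mem_coe, Finset.mem_filter] at hq hq'
          simp only at h
          by_contra hqq
          have hqq0 : q' - q ≠ 0 := sub_ne_zero.mpr (Ne.symm hqq)
          have m0 : q' - q ∈ Submodule.span ℝ {p - q} := by
            have a1 := Submodule.mem_span_singleton_self (R := ℝ) (p - q)
            have a2 := Submodule.mem_span_singleton_self (R := ℝ) (p - q')
            rw [← h] at a2
            have := Submodule.sub_mem _ a1 a2
            have e : p - q - (p - q') = q' - q := by abel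
            rwa [e] at this
          have m1 : q' - q ∈ L := by
            have := Submodule.sub_mem _ hq'.2 hq.2
            have e : q' - p0 - (q - p0) = q' - q := by abel
            rwa [e] at this
          have e1 : Submodule.span ℝ {p - q} = L := (span_single_eq hqq0 m0).symm.trans (span_single_eq hqq0 m1)
          have m2 : p - q ∈ L := by rw [← e1]; exact Submodule.mem_span_singleton_self _
          apply hpL
          have := Submodule.add_mem _ m2 hq.2
          have e : p - q + (q - p0) = p - p0 := by abel
          rwa [e] at this
      have := hfew p hp hpQ
      omega
    refine ⟨p0, p1, hp10, P.filter (fun q => q - p0 ∈ L), Finset.filter_subset _ _,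
      fun a ha => (Finset.mem_filter.mp ha).2, ?_⟩
    have h1 := Finset.card_filter_add_card_filter_not (s := P) (fun q => q - p0 ∈ L)
    have h2 : P.filter (fun q => q - p0 ∉ L) ⊆ Q.filter (fun q => q - p0 ∉ L) := by
      intro q hq
      rw [Finset.mem_filter] at hq ⊢
      refine ⟨?_, hq.2⟩
      by_contra hqQ
      exact hq.2 (hallL q hq.1 hqQ)
    have h3 := Finset.card_le_card h2
    omega

lemma good_dirs {d : ℕ} {N : NormOn d} (hN : GoodNorm N) (P : Finset (EuclideanSpace ℝ (Fin d)))
    (Z : Finset ℝ) (hZ : ∀ p ∈ P, ∀ c, p c ∈ IntermediateField.adjoin ℚ (Z : Set ℝ)) :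
    (dirs P).card ≤ Z.card + (dists N P).card := by
  classical
  have hrep : ∀ θ : Submodule ℝ (EuclideanSpace ℝ (Fin d)), ∃ x : EuclideanSpace ℝ (Fin d) × EuclideanSpace ℝ (Fin d),
      θ ∈ dirs P → x ∈ P.offDiag ∧ Submodule.span ℝ {x.1 - x.2} = θ := by
    intro θ
    by_cases h : θ ∈ dirs P
    · obtain ⟨x, hx, hxθ⟩ := Finset.mem_image.mp h
      exact ⟨x, fun _ => ⟨hx, hxθ⟩⟩
    · exact ⟨(0, 0), fun h' => absurd h' h⟩
  choose x hx using hrep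
  have hinj : Set.InjOn (fun θ => (x θ).1 - (x θ).2) (dirs P : Set _) := by
    intro θ hθ θ' hθ' h
    simp only at h
    rw [← (hx θ hθ).2, ← (hx θ' hθ').2, h]
  rw [← Finset.card_image_of_injOn hinj]
  apply good_use hN
  · intro v hv
    obtain ⟨θ, hθ, rfl⟩ := Finset.mem_image.mp hv
    exact sub_ne_zero.mpr (Finset.mem_offDiag.mp (hx θ hθ).1).2.2
  · intro v hv c
    obtain ⟨θ, hθ, rfl⟩ := Finset.mem_image.mp hv
    have h := Finset.mem_offDiag.mp (hx θ hθ).1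
    rw [PiLp.sub_apply]
    exact sub_mem (hZ _ h.1 c) (hZ _ h.2.1 c)
  · intro v hv v' hv' hne
    obtain ⟨θ, hθ, rfl⟩ := Finset.mem_image.mp hv
    obtain ⟨θ', hθ', rfl⟩ := Finset.mem_image.mp hv'
    apply not_par_of_span_ne (sub_ne_zero.mpr (Finset.mem_offDiag.mp (hx θ' hθ').1).2.2)
    rw [(hx θ hθ).2, (hx θ' hθ').2]
    rintro rfl
    exact hne rfl
  · intro v hv
    obtain ⟨θ, hθ, rfl⟩ := Finset.mem_image.mp hv
    exact Finset.mem_image.mpr ⟨x θ, (hx θ hθ).1, rfl⟩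

lemma good_many {d : ℕ} (hd : 2 ≤ d) {N : NormOn d} (hN : GoodNorm N) (ε : ℝ) (hε : 0 < ε) :
    ∃ n₀ : ℕ, ∀ P : Finset (EuclideanSpace ℝ (Fin d)), n₀ < P.card →
      affineSpan ℝ (P : Set (EuclideanSpace ℝ (Fin d))) = ⊤ →
      ((1 / 48 : ℝ) * d - ε) * P.card ≤ (dists N P).card := by
  have hd' : (2 : ℝ) ≤ d := by exact_mod_cast hd
  obtain ⟨m0, hm0⟩ := exists_nat_gt ((d : ℝ) ^ 2 / ε)
  set m := m0 + d + 1 with hm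
  obtain ⟨n1, hn1⟩ := exists_nat_gt (2 * (d * ((m : ℝ) ^ 2 + m + 2)) / ε)
  refine ⟨n1 + 100 * (m ^ 2 + m + 1 + d), ?_⟩
  intro P hP hsp
  have hmR : (d : ℝ) ^ 2 ≤ m * ε := by
    rw [div_lt_iff₀ hε] at hm0
    have : (m0 : ℝ) ≤ m := by rw [hm]; push_cast; linarith
    nlinarith
  have hmd : (d : ℝ) + 1 ≤ m := by rw [hm]; push_cast; linarith [(Nat.cast_nonneg m0 : (0 : ℝ) ≤ m0)]
  have hmpos : (0 : ℝ) < m := by linarith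
  have hPR : (n1 : ℝ) + 100 * ((m : ℝ) ^ 2 + m + 1 + d) ≤ P.card := by exact_mod_cast hP.le
  have hnbig : 2 * (d * ((m : ℝ) ^ 2 + m + 2)) ≤ P.card * ε := by
    rw [div_lt_iff₀ hε] at hn1
    have : (n1 : ℝ) * ε ≤ P.card * ε := by
      apply mul_le_mul_of_nonneg_right _ hε.le
      have : (0 : ℝ) ≤ 100 * ((m : ℝ) ^ 2 + m + 1 + d) := by positivity
      linarith
    linarith
  have hdir := directions hd P hsp
  rcases econ m P (by omega) with ⟨Z, w, hZc, hZ, hw⟩ | ⟨p0, p1, hp, A, hAP, hA, hAc⟩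
  · have h1 := good_dirs hN P Z hZ
    have h1' : ((dirs P).card : ℝ) ≤ Z.card + (dists N P).card := by exact_mod_cast h1
    have hZ' : (Z.card : ℝ) ≤ d * ((m : ℝ) ^ 2 + m + 1 + w + 1) := by exact_mod_cast hZc
    have hw' : (w : ℝ) * m ≤ (dirs P).card := by exact_mod_cast hw
    generalize ((dirs P).card : ℝ) = l at *
    generalize ((dists N P).card : ℝ) = k at *
    generalize (P.card : ℝ) = n at *
    generalize (Z.card : ℝ) = zc at *
    generalize (w : ℝ) = w at *
    generalize (m : ℝ) = m at *
    generalize (d : ℝ) = d at *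
    have hn0 : 0 ≤ n := by nlinarith
    -- m k ≥ m l - d m (..) - d l
    have a1 : m * l - d * l - m * (d * (m ^ 2 + m + 2)) ≤ m * k := by
      have b1 : m * l ≤ m * (d * (m ^ 2 + m + 1 + w + 1) + k) := by
        apply mul_le_mul_of_nonneg_left _ hmpos.le; linarith
      have b2 : d * (w * m) ≤ d * l := by apply mul_le_mul_of_nonneg_left hw'; linarith
      nlinarith
    have a2 : (m - d) * (d * n / 48) ≤ (m - d) * l := by
      apply mul_le_mul_of_nonneg_left hdir; linarith
    have a3 : m * (2 * (d * (m ^ 2 + m + 2))) ≤ m * (n * ε) := mul_le_mul_of_nonneg_left hnbig hmpos.le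
    have a4 : n * d ^ 2 ≤ n * (m * ε) := mul_le_mul_of_nonneg_left hmR hn0
    have a5 : m * ((1 / 48 * d - ε) * n) ≤ m * k := by
      have a6 : 0 ≤ n * (m * ε) := by positivity
      nlinarith
    exact le_of_mul_le_mul_left a5 hmpos
  · obtain ⟨B, hB1, hB2⟩ := line_case hN m (by omega) P hsp p0 p1 hp A hAP hA (by omega)
    have hB1' : (d : ℝ) ≤ B + 1 := by exact_mod_cast hB1
    have hB2' : (B : ℝ) * A.card ≤ 2 * d + B * d + 2 * m + 2 * (dists N P).card := by exact_mod_cast hB2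
    have hAc' : (P.card : ℝ) ≤ A.card + (m : ℝ) ^ 2 := by exact_mod_cast hAc
    have hn1' : (0 : ℝ) ≤ n1 := Nat.cast_nonneg _
    generalize ((dists N P).card : ℝ) = k at *
    generalize (P.card : ℝ) = n at *
    generalize (A.card : ℝ) = a at *
    generalize (B : ℝ) = B at *
    generalize (m : ℝ) = m at *
    generalize (d : ℝ) = d at *
    have hm2 : 0 ≤ m ^ 2 := sq_nonneg m
    have hn0 : 0 ≤ n := by nlinarith
    have b1 : 99 / 100 * n ≤ a - d := by linarith
    have b2 : (d - 1) * (99 / 100 * n) ≤ B * (a - d) := by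
      apply mul_le_mul _ b1 (by linarith) (by linarith)
      linarith
    have b3 : 2 * n ≤ d * n := by nlinarith
    have b4 : 0 ≤ ε * n := by positivity
    nlinarith

end PartP7c

/-- **Theorem 1.5** (with `b = 1/48`). For each fixed `d ≥ 2`, for all norms on
`ℝ^d` but a meagre set (in the topology of the Hausdorff distance between unit
balls) the following holds: for every `ε > 0` there is `n₀` such that every set
of `n > n₀` points affinely spanning `ℝ^d` determines at least `(d/48 − ε)·n`
distinct distances. -/
theorem typical_norms_many_distances (d : ℕ) (hd : 2 ≤ d) :
    IsMeagre {N : NormOn d |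
      ¬ (∀ ε : ℝ, 0 < ε → ∃ n₀ : ℕ, ∀ n : ℕ, n₀ < n →
          ∀ P : Finset (EuclideanSpace ℝ (Fin d)),
            P.card = n →
            affineSpan ℝ (P : Set (EuclideanSpace ℝ (Fin d))) = ⊤ →
            ((1 / 48 : ℝ) * d - ε) * n ≤
              ({r : ℝ | ∃ p ∈ P, ∃ q ∈ P, p ≠ q ∧ N.1 (p - q) = r}).ncard)} := by
  refine IsMeagre.mono ?_ (meagre_notGood (d := d) (by omega))
  intro N hN hgood
  apply hN
  intro ε hε
  obtain ⟨n₀, h⟩ := good_many hd hgood ε hε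
  refine ⟨n₀, ?_⟩
  intro n hn P hP hsp
  have hset : {r : ℝ | ∃ p ∈ P, ∃ q ∈ P, p ≠ q ∧ N.1 (p - q) = r} = (dists N P : Set ℝ) := by
    ext r
    simp only [Set.mem_ofPred_eq, dists, Finset.coe_image, Set.mem_image, Finset.mem_coe, Finset.mem_offDiag,
      Prod.exists]
    constructor
    · rintro ⟨p, hp, q, hq, hne, hr⟩
      exact ⟨p, q, ⟨hp, hq, hne⟩, hr⟩
    · rintro ⟨p, q, ⟨hp, hq, hne⟩, hr⟩
      exact ⟨p, hp, q, hq, hne, hr⟩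
  rw [hset, Set.ncard_coe_finset, ← hP]
  exact h P (by omega) hsp
end

section
/- For every integer d ≥ 2, every set P of n points in ℝ^d whose affine span is all of ℝ^d determines at least n − 1 lines with pairwise distinct directions; that is, there exist at least n − 1 pairs (p_i, q_i) of distinct points of P such that the difference vectors q_i − p_i are pairwise non-parallel. -/
set_option linter.unusedSectionVars false

namespace Ungar
open Finset

variable {ι : Type*} [Fintype ι] [DecidableEq ι]

/-- number of points strictly below level `c` -/
noncomputable def lo (h : ι → ℝ) (c : ℝ) : ℕ := by
  classical exact (Finset.univ.filter (fun i => h i < c)).card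

/-- number of points weakly below level `c` -/
noncomputable def le (h : ι → ℝ) (c : ℝ) : ℕ := by
  classical exact (Finset.univ.filter (fun i => h i ≤ c)).card

/-- the functional `h` ties positions `m` and `m+1`, at level `c` -/
def Cr (m : ℕ) (h : ι → ℝ) (c : ℝ) : Prop := lo h c < m ∧ m < le h c

theorem le_le_lo (h : ι → ℝ) {c c' : ℝ} (hc : c < c') : le h c ≤ lo h c' := by
  classical
  unfold le lo
  apply Finset.card_le_card
  intro i hi
  simp only [mem_filter, mem_univ, true_and] at *
  linarith

theorem Cr_unique {m : ℕ} {h : ι → ℝ} {c c' : ℝ} (h1 : Cr m h c) (h2 : Cr m h c') : c = c' := by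
  unfold Cr at *
  rcases lt_trichotomy c c' with hc | hc | hc
  · have := le_le_lo h hc; omega
  · exact hc
  · have := le_le_lo h hc; omega

theorem sep_exists {m : ℕ} (hm : 1 ≤ m) (hn : m ≤ Fintype.card ι) (h : ι → ℝ)
    (hcr : ∀ c, ¬ Cr m h c) :
    ∃ A : Finset ι, A.card = m ∧ ∀ p ∈ A, ∀ q ∉ A, h p < h q := by
  classical
  have hne : (univ : Finset ι).Nonempty := by
    rw [← Finset.card_pos, Finset.card_univ]; omega
  obtain ⟨M, -, hM⟩ := Finset.exists_max_image univ h hne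
  have hne2 : (univ.filter (fun i => m ≤ le h (h i))).Nonempty := by
    refine ⟨M, ?_⟩
    simp only [mem_filter, mem_univ, true_and]
    unfold le
    rw [Finset.filter_true_of_mem (fun i hi => hM i hi), Finset.card_univ]
    exact hn
  obtain ⟨i, hi, hmin⟩ := Finset.exists_min_image _ h hne2
  simp only [mem_filter, mem_univ, true_and] at hi hmin
  have hlo : lo h (h i) < m := by
    by_contra hcon
    push Not at hcon
    have hne3 : (univ.filter (fun j => h j < h i)).Nonempty := by
      rw [← Finset.card_pos]
      have : lo h (h i) = (univ.filter (fun j => h j < h i)).card := by unfold lo; congr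
      omega
    obtain ⟨j, hj, hmax⟩ := Finset.exists_max_image _ h hne3
    simp only [mem_filter, mem_univ, true_and] at hj hmax
    have : lo h (h i) ≤ le h (h j) := by
      unfold le lo
      apply Finset.card_le_card
      intro k hk
      simp only [mem_filter, mem_univ, true_and] at *
      exact hmax k hk
    have := hmin j (by omega)
    linarith
  have hle : le h (h i) = m := by
    have := hcr (h i)
    unfold Cr at this
    omega
  refine ⟨univ.filter (fun j => h j ≤ h i), ?_, ?_⟩
  · rw [← hle]; unfold le; congr
  · intro p hp q hq
    simp only [mem_filter, mem_univ, true_and] at *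
    linarith

theorem sep_unique {h : ι → ℝ} {A B : Finset ι} (hAB : A.card = B.card)
    (hA : ∀ p ∈ A, ∀ q ∉ A, h p < h q) (hB : ∀ p ∈ B, ∀ q ∉ B, h p < h q) : A = B := by
  by_contra hne
  have h1 : ¬ A ⊆ B := fun hs => hne (Finset.eq_of_subset_of_card_le hs hAB.ge)
  have h2 : ¬ B ⊆ A := fun hs => hne (Finset.eq_of_subset_of_card_le hs hAB.le).symm
  rw [Finset.not_subset] at h1 h2
  obtain ⟨a, ha, ha'⟩ := h1
  obtain ⟨b, hb, hb'⟩ := h2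
  have := hA a ha b hb'
  have := hB b hb a ha'
  linarith

theorem const_sep {m : ℕ} (hm : 1 ≤ m) (hn : m ≤ Fintype.card ι) (f g : ι → ℝ)
    (hcr : ∀ β : ℝ, 0 < β → ∀ c, ¬ Cr m (fun i => f i + β * g i) c) :
    ∃ A : Finset ι, A.card = m ∧ ∀ β : ℝ, 0 < β → ∀ p ∈ A, ∀ q ∉ A,
      f p + β * g p < f q + β * g q := by
  classical
  let O : Finset ι → Set ℝ := fun A => {β | ∀ p ∈ A, ∀ q ∉ A, f p + β * g p < f q + β * g q}
  have hO : ∀ A, IsOpen (O A) := by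
    intro A
    have : O A = ⋂ p ∈ A, ⋂ q ∈ Aᶜ, {β | f p + β * g p < f q + β * g q} := by
      ext β; simp [O]
    rw [this]
    refine isOpen_biInter_finset fun p _ => isOpen_biInter_finset fun q _ => ?_
    exact isOpen_lt (by fun_prop) (by fun_prop)
  obtain ⟨A, hAm, hA⟩ := sep_exists hm hn _ (hcr 1 one_pos)
  refine ⟨A, hAm, ?_⟩
  have key : Set.Ioi (0:ℝ) ⊆ O A := by
    refine IsPreconnected.subset_left_of_subset_union (hO A)
      (v := ⋃ B ∈ {B : Finset ι | B.card = m ∧ B ≠ A}, O B)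
      (isOpen_biUnion fun B _ => hO B) ?_ ?_ ?_ isPreconnected_Ioi
    · rw [Set.disjoint_left]
      intro β h1 h2
      simp only [Set.mem_iUnion] at h2
      obtain ⟨B, ⟨hB1, hB2⟩, hB⟩ := h2
      exact hB2 (sep_unique (h := fun i => f i + β * g i) (by omega) hB h1)
    · intro β hβ
      obtain ⟨B, hBm, hB⟩ := sep_exists hm hn _ (hcr β hβ)
      by_cases hBA : B = A
      · left; subst hBA; exact hB
      · right
        simp only [Set.mem_iUnion]
        exact ⟨B, ⟨hBm, hBA⟩, hB⟩
    · exact ⟨1, by simp, hA⟩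
  intro β hβ
  exact key hβ

/-- the planar fan argument -/
theorem fan (f g : ι → ℝ) (hinj : ∀ i j, f i = f j → g i = g j → i = j)
    (U U' : Finset ι) (c c' : ℝ) (hU : ∀ i ∈ U, f i = c)
    (hU' : ∀ i ∈ U', g i = c') (u u' : ι) (hu : u ∈ U) (hu' : u' ∈ U')
    (hmax : ∀ i ∈ U, g i ≤ g u) (hmax' : ∀ i ∈ U', f i ≤ f u')
    (h1 : f u' < c) (h2 : g u < c') :
    ∃ D : Finset ℝ, (∀ β ∈ D, 0 < β ∧ ∃ i j, i ≠ j ∧ f i + β * g i = f j + β * g j) ∧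
      U.card + U'.card ≤ D.card + 1 := by
  classical
  have hb : ∀ b ∈ U, 0 < c' - g b := fun b hb => by have := hmax b hb; linarith
  have hb' : ∀ b ∈ U', 0 < c - f b := fun b hb => by have := hmax' b hb; linarith
  have h1' : 0 < c - f u' := by linarith
  have h2' : 0 < c' - g u := by linarith
  let D1 := U.image (fun b => (c - f u') / (c' - g b))
  let D2 := U'.image (fun b => (c - f b) / (c' - g u))
  have c1 : D1.card = U.card := by
    apply Finset.card_image_of_injOn
    intro b hbU b2 hbU2 he
    simp only at he
    have e1 := hb b hbU
    have e2 := hb b2 hbU2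
    rw [div_eq_div_iff e1.ne' e2.ne'] at he
    have := mul_left_cancel₀ h1'.ne' he
    exact hinj _ _ (by rw [hU b hbU, hU b2 hbU2]) (by linarith)
  have c2 : D2.card = U'.card := by
    apply Finset.card_image_of_injOn
    intro b hbU b2 hbU2 he
    simp only at he
    rw [div_eq_div_iff h2'.ne' h2'.ne'] at he
    have := mul_right_cancel₀ h2'.ne' he
    exact hinj _ _ (by linarith) (by rw [hU' b hbU, hU' b2 hbU2])
  have c3 : (D1 ∩ D2).card ≤ 1 := by
    have : D1 ∩ D2 ⊆ {(c - f u') / (c' - g u)} := by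
      intro β hβ
      simp only [D1, D2, Finset.mem_inter, Finset.mem_image] at hβ
      obtain ⟨⟨b, hbU, e1⟩, ⟨b', hbU', e2⟩⟩ := hβ
      rw [Finset.mem_singleton]
      apply le_antisymm
      · rw [← e1]
        apply div_le_div_of_nonneg_left h1'.le h2'
        have := hmax b hbU; linarith
      · rw [← e2]
        apply div_le_div_of_nonneg_right _ h2'.le
        have := hmax' b' hbU'; linarith
    simpa using Finset.card_le_card this
  refine ⟨D1 ∪ D2, ?_, ?_⟩
  · intro β hβ
    simp only [D1, D2, Finset.mem_union, Finset.mem_image] at hβ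
    rcases hβ with ⟨b, hbU, rfl⟩ | ⟨b, hbU, rfl⟩
    · have e := hb b hbU
      refine ⟨div_pos h1' e, u', b, ?_, ?_⟩
      · rintro rfl; have := hU _ hbU; linarith
      · rw [hU b hbU, hU' u' hu']
        field_simp
        ring
    · have e := hb' b hbU
      refine ⟨div_pos e h2', b, u, ?_, ?_⟩
      · rintro rfl; have := hU' _ hbU; linarith
      · rw [hU u hu, hU' b hbU]
        field_simp
        ring
  · have := Finset.card_union_add_card_inter D1 D2
    omega

theorem fan2 (f g : ι → ℝ) (hinj : ∀ i j, f i = f j → g i = g j → i = j)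
    (U U' : Finset ι) (c c' : ℝ) (hU : ∀ i ∈ U, f i = c ∧ g i ≤ c')
    (hU' : ∀ i ∈ U', g i = c' ∧ f i ≤ c)
    (hUU : ∀ i ∈ U, g i = c' → i ∈ U') (hUU' : ∀ i ∈ U', f i = c → i ∈ U)
    (u u' : ι) (hu : u ∈ U) (hu' : u' ∈ U')
    (hmax : ∀ i ∈ U, g i ≤ g u) (hmax' : ∀ i ∈ U', f i ≤ f u') (hne : u ≠ u') :
    ∃ D : Finset ℝ, (∀ β ∈ D, 0 < β ∧ ∃ i j, i ≠ j ∧ f i + β * g i = f j + β * g j) ∧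
      U.card + U'.card ≤ D.card + 1 := by
  obtain ⟨hu1, hu2⟩ := hU u hu
  obtain ⟨hu'1, hu'2⟩ := hU' u' hu'
  refine fan f g hinj U U' c c' (fun i hi => (hU i hi).1) (fun i hi => (hU' i hi).1)
    u u' hu hu' hmax hmax' ?_ ?_
  · refine lt_of_le_of_ne hu'2 fun h => hne ?_
    have := hmax u' (hUU' u' hu' h)
    exact hinj _ _ (by linarith) (by linarith)
  · refine lt_of_le_of_ne hu2 fun h => hne ?_
    have := hmax' u (hUU u hu h)
    exact hinj _ _ (by linarith) (by linarith)

theorem split_facts {m : ℕ} {f : ι → ℝ} {c : ℝ} {A : Finset ι} (hA : A.card = m)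
    (hsep : ∀ p ∈ A, ∀ q ∉ A, f p ≤ f q) (hc : Cr m f c) :
    (∀ p ∈ A, f p ≤ c) ∧ (∀ q ∉ A, c ≤ f q) ∧
      (A.filter (fun i => f i = c)).card = m - lo f c ∧
      (Aᶜ.filter (fun i => f i = c)).card = le f c - m := by
  classical
  obtain ⟨h1, h2⟩ := hc
  have a1 : ∀ p ∈ A, f p ≤ c := by
    intro p hp
    by_contra hcon
    push Not at hcon
    have : le f c ≤ A.card := by
      unfold le
      apply Finset.card_le_card
      intro i hi
      simp only [mem_filter, mem_univ, true_and] at hi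
      by_contra hiA
      have := hsep p hp i hiA
      linarith
    omega
  have a2 : ∀ q ∉ A, c ≤ f q := by
    intro q hq
    by_contra hcon
    push Not at hcon
    have : A.card ≤ lo f c := by
      unfold lo
      apply Finset.card_le_card
      intro i hi
      simp only [mem_filter, mem_univ, true_and]
      have := hsep i hi q hq
      linarith
    omega
  refine ⟨a1, a2, ?_, ?_⟩
  · have e1 : A.filter (fun i => ¬ f i = c) = univ.filter (fun i => f i < c) := by
      ext i
      simp only [mem_filter, mem_univ, true_and]
      constructor
      · rintro ⟨hi, hi'⟩
        exact lt_of_le_of_ne (a1 i hi) hi'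
      · intro hi
        refine ⟨?_, hi.ne⟩
        by_contra hiA
        have := a2 i hiA
        linarith
    have e2 := Finset.card_filter_add_card_filter_not (s := A) (fun i => f i = c)
    have e3 : lo f c = (univ.filter (fun i => f i < c)).card := by unfold lo; congr
    rw [e1] at e2
    omega
  · have e1 : univ.filter (fun i => f i ≤ c) = A ∪ Aᶜ.filter (fun i => f i = c) := by
      ext i
      simp only [mem_filter, mem_univ, true_and, mem_union, mem_compl]
      constructor
      · intro hi
        by_cases hiA : i ∈ A
        · exact Or.inl hiA
        · exact Or.inr ⟨hiA, le_antisymm hi (a2 i hiA)⟩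
      · rintro (hi | ⟨-, hi⟩)
        · exact a1 i hi
        · exact hi.le
    have e3 : le f c = (univ.filter (fun i => f i ≤ c)).card := by unfold le; congr
    rw [e1, Finset.card_union_of_disjoint] at e3
    · omega
    · rw [Finset.disjoint_left]
      intro i hi hi'
      simp only [mem_filter, mem_compl] at hi'
      exact hi'.1 hi

theorem gap {m : ℕ} (hm : 1 ≤ m) (hn : m ≤ Fintype.card ι) (f g : ι → ℝ)
    (hinj : ∀ i j, f i = f j → g i = g j → i = j)
    (hcr : ∀ β : ℝ, 0 < β → ∀ c, ¬ Cr m (fun i => f i + β * g i) c)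
    {c c' : ℝ} (hf : Cr m f c) (hg : Cr m g c') :
    ∃ D : Finset ℝ, (∀ β ∈ D, 0 < β ∧ ∃ i j, i ≠ j ∧ f i + β * g i = f j + β * g j) ∧
      min (m - lo f c) (le f c - m) + min (m - lo g c') (le g c' - m) ≤ D.card + 1 := by
  classical
  obtain ⟨A, hAm, hA⟩ := const_sep hm hn f g hcr
  have hAf : ∀ p ∈ A, ∀ q ∉ A, f p ≤ f q := by
    intro p hp q hq
    by_contra hcon
    push Not at hcon
    have h0 := hA 1 one_pos p hp q hq
    have hg : 0 < g q - g p := by linarith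
    have h1 := hA ((f p - f q) / (g q - g p)) (div_pos (by linarith) hg) p hp q hq
    have : (f p - f q) / (g q - g p) * (g q - g p) = f p - f q := by field_simp
    nlinarith
  have hAg : ∀ p ∈ A, ∀ q ∉ A, g p ≤ g q := by
    intro p hp q hq
    by_contra hcon
    push Not at hcon
    have h0 := hA 1 one_pos p hp q hq
    have hg : 0 < g p - g q := by linarith
    have h1 := hA ((f q - f p) / (g p - g q)) (div_pos (by linarith) hg) p hp q hq
    have : (f q - f p) / (g p - g q) * (g p - g q) = f q - f p := by field_simp
    nlinarith
  obtain ⟨f1, f2, f3, f4⟩ := split_facts hAm hAf hf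
  obtain ⟨g1, g2, g3, g4⟩ := split_facts hAm hAg hg
  obtain ⟨hf1, hf2⟩ := hf
  obtain ⟨hg1, hg2⟩ := hg
  obtain ⟨u, hu, humax⟩ := Finset.exists_max_image (A.filter (fun i => f i = c)) g
    (by rw [← Finset.card_pos]; omega)
  obtain ⟨u', hu', humax'⟩ := Finset.exists_max_image (A.filter (fun i => g i = c')) f
    (by rw [← Finset.card_pos]; omega)
  obtain ⟨v, hv, hvmin⟩ := Finset.exists_min_image (Aᶜ.filter (fun i => f i = c)) g
    (by rw [← Finset.card_pos]; omega)
  obtain ⟨v', hv', hvmin'⟩ := Finset.exists_min_image (Aᶜ.filter (fun i => g i = c')) f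
    (by rw [← Finset.card_pos]; omega)
  by_cases huu : u = u'
  · by_cases hvv : v = v'
    · exfalso
      subst huu hvv
      simp only [mem_filter, mem_compl] at hu hu' hv hv'
      have := hA 1 one_pos u hu.1 v hv.1
      linarith [hu.2, hv.2, hu'.2, hv'.2]
    · obtain ⟨D, hD, hDc⟩ := fan2 (fun i => - f i) (fun i => - g i)
        (fun i j h1 h2 => hinj i j (neg_injective h1) (neg_injective h2))
        (Aᶜ.filter (fun i => f i = c)) (Aᶜ.filter (fun i => g i = c')) (-c) (-c')
        (by
          intro i hi
          simp only [mem_filter, mem_compl] at hi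
          exact ⟨by rw [hi.2], neg_le_neg (g2 i hi.1)⟩)
        (by
          intro i hi
          simp only [mem_filter, mem_compl] at hi
          exact ⟨by rw [hi.2], neg_le_neg (f2 i hi.1)⟩)
        (by
          intro i hi h
          simp only [mem_filter, mem_compl] at hi ⊢
          exact ⟨hi.1, neg_injective h⟩)
        (by
          intro i hi h
          simp only [mem_filter, mem_compl] at hi ⊢
          exact ⟨hi.1, neg_injective h⟩)
        v v' hv hv' (fun i hi => neg_le_neg (hvmin i hi)) (fun i hi => neg_le_neg (hvmin' i hi)) hvv
      refine ⟨D, ?_, by omega⟩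
      intro β hβ
      obtain ⟨hb, i, j, hij, he⟩ := hD β hβ
      exact ⟨hb, i, j, hij, by linarith⟩
  · obtain ⟨D, hD, hDc⟩ := fan2 f g hinj
        (A.filter (fun i => f i = c)) (A.filter (fun i => g i = c')) c c'
        (by
          intro i hi
          simp only [mem_filter] at hi
          exact ⟨by rw [hi.2], g1 i hi.1⟩)
        (by
          intro i hi
          simp only [mem_filter] at hi
          exact ⟨by rw [hi.2], f1 i hi.1⟩)
        (by
          intro i hi h
          simp only [mem_filter] at hi ⊢
          exact ⟨hi.1, h⟩)
        (by
          intro i hi h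
          simp only [mem_filter] at hi ⊢
          exact ⟨hi.1, h⟩)
        u u' hu hu' humax humax' huu
    exact ⟨D, hD, by omega⟩

theorem sum_gaps (S : Finset ℝ) (d : ℝ → ℕ) (C : Finset ℝ) (hCS : C ⊆ S) (hC : C.Nonempty)
    (hgap : ∀ s ∈ C, ∀ s' ∈ C, s < s' → (∀ r ∈ C, ¬ (s < r ∧ r < s')) →
      d s + d s' ≤ (S.filter (fun r => s < r ∧ r < s')).card + 1) :
    2 * ∑ s ∈ C, d s + 1 ≤ (S.filter (fun r => C.min' hC ≤ r ∧ r ≤ C.max' hC)).card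
      + d (C.min' hC) + d (C.max' hC) := by
  classical
  induction C using Finset.induction_on_max with
  | empty => simp at hC
  | insert M C hM ih =>
    rcases C.eq_empty_or_nonempty with rfl | hne
    · simp only [insert_empty_eq, sum_singleton, min'_singleton, max'_singleton]
      have : 0 < (S.filter (fun r => M ≤ r ∧ r ≤ M)).card := by
        rw [Finset.card_pos]
        exact ⟨M, by simp only [mem_filter, le_refl, and_self, and_true]; exact hCS (by simp)⟩
      omega
    · have hMC : M ∉ C := fun h => lt_irrefl _ (hM M h)
      have ih' := ih (fun x hx => hCS (mem_insert_of_mem hx)) hne (by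
        intro s hs s' hs' hss hno
        refine hgap s (mem_insert_of_mem hs) s' (mem_insert_of_mem hs') hss ?_
        intro r hr hr2
        rcases mem_insert.1 hr with rfl | hr
        · have := hM s' hs'; linarith [hr2.2]
        · exact hno r hr hr2)
      have emin : (insert M C).min' hC = C.min' hne := by
        apply le_antisymm
        · exact Finset.min'_le _ _ (mem_insert_of_mem (Finset.min'_mem _ _))
        · apply Finset.le_min'
          intro y hy
          rcases mem_insert.1 hy with rfl | hy
          · exact (hM _ (Finset.min'_mem _ hne)).le
          · exact Finset.min'_le _ _ hy
      have emax : (insert M C).max' hC = M := by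
        apply le_antisymm
        · apply Finset.max'_le
          intro y hy
          rcases mem_insert.1 hy with rfl | hy
          · exact le_rfl
          · exact (hM _ hy).le
        · exact Finset.le_max' _ _ (mem_insert_self _ _)
      rw [emin, emax, Finset.sum_insert hMC]
      set N := C.max' hne with hN
      have hNC : N ∈ C := Finset.max'_mem _ _
      have hNM := hM N hNC
      have hg := hgap N (mem_insert_of_mem hNC) M (mem_insert_self _ _) hNM (by
        intro r hr hr2
        rcases mem_insert.1 hr with rfl | hr
        · linarith [hr2.2]
        · have := Finset.le_max' C r hr; linarith [hr2.1])
      have hsub : insert M (S.filter (fun r => C.min' hne ≤ r ∧ r ≤ N) ∪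
          S.filter (fun r => N < r ∧ r < M)) ⊆ S.filter (fun r => C.min' hne ≤ r ∧ r ≤ M) := by
        have hmN : C.min' hne ≤ N := Finset.min'_le _ _ hNC
        intro r hr
        simp only [mem_insert, mem_union, mem_filter] at hr ⊢
        rcases hr with rfl | ⟨h1, h2, h3⟩ | ⟨h1, h2, h3⟩
        · exact ⟨hCS (mem_insert_self _ _), by linarith, le_rfl⟩
        · exact ⟨h1, h2, by linarith⟩
        · exact ⟨h1, by linarith, by linarith⟩
      have hcard := Finset.card_le_card hsub
      rw [Finset.card_insert_of_notMem, Finset.card_union_of_disjoint] at hcard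
      · omega
      · rw [Finset.disjoint_left]
        intro r h1 h2
        simp only [mem_filter] at h1 h2
        linarith [h1.2.2, h2.2.1]
      · simp only [mem_union, mem_filter, not_or, not_and]
        exact ⟨fun _ _ => by linarith, fun _ _ => by linarith⟩

/-- a point leaving the lower half does so at some slope -/
theorem leave {m : ℕ} (hm : 1 ≤ m) (x y : ι → ℝ) (hx : Function.Injective x) (p : ι)
    (h1 : (univ.filter (fun q => x q < x p)).card < m)
    (h2 : m ≤ (univ.filter (fun q => x p < x q)).card) :
    ∃ s : ℝ, (univ.filter (fun q => y q - s * x q < y p - s * x p ∨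
        (y q - s * x q = y p - s * x p ∧ x q < x p))).card < m ∧
      m ≤ (univ.filter (fun q => y q - s * x q < y p - s * x p ∨
        (y q - s * x q = y p - s * x p ∧ x p < x q))).card := by
  classical
  let sl : ι → ℝ := fun q => (y p - y q) / (x p - x q)
  have hsl : ∀ q, x q ≠ x p → ∀ s, (y p - s * x p) - (y q - s * x q) = (x p - x q) * (sl q - s) := by
    intro q hq s
    have : x p - x q ≠ 0 := sub_ne_zero.2 (Ne.symm hq)
    simp only [sl]
    field_simp
    ring
  let N : ℝ → Finset ι := fun s => univ.filter (fun q => y q - s * x q < y p - s * x p ∨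
        (y q - s * x q = y p - s * x p ∧ x q < x p))
  let M : ℝ → Finset ι := fun s => univ.filter (fun q => y q - s * x q < y p - s * x p ∨
        (y q - s * x q = y p - s * x p ∧ x p < x q))
  have hN : ∀ s q, q ∈ N s ↔ (x q < x p ∧ s ≤ sl q) ∨ (x p < x q ∧ sl q < s) := by
    intro s q
    simp only [N, mem_filter, mem_univ, true_and]
    rcases lt_trichotomy (x q) (x p) with h | h | h
    · have e := hsl q h.ne s
      constructor
      · intro hq
        refine Or.inl ⟨h, ?_⟩
        by_contra hcon
        push Not at hcon
        rcases hq with hq | ⟨hq, -⟩ <;> nlinarith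
      · rintro (⟨-, hq⟩ | ⟨hq, -⟩)
        · rcases lt_or_eq_of_le hq with hq | hq
          · left; nlinarith
          · right; refine ⟨?_, h⟩; rw [← hq, sub_self, mul_zero] at e; linarith
        · linarith
    · have := hx h
      subst this
      simp
    · have e := hsl q h.ne' s
      constructor
      · intro hq
        refine Or.inr ⟨h, ?_⟩
        by_contra hcon
        push Not at hcon
        rcases hq with hq | ⟨hq, hq'⟩ <;> nlinarith
      · rintro (⟨hq, -⟩ | ⟨-, hq⟩)
        · linarith
        · left; nlinarith
  have hM : ∀ s q, q ∈ M s ↔ (x q < x p ∧ s < sl q) ∨ (x p < x q ∧ sl q ≤ s) := by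
    intro s q
    simp only [M, mem_filter, mem_univ, true_and]
    rcases lt_trichotomy (x q) (x p) with h | h | h
    · have e := hsl q h.ne s
      constructor
      · intro hq
        refine Or.inl ⟨h, ?_⟩
        by_contra hcon
        push Not at hcon
        rcases hq with hq | ⟨hq, hq'⟩ <;> nlinarith
      · rintro (⟨-, hq⟩ | ⟨hq, -⟩)
        · left; nlinarith
        · linarith
    · have := hx h
      subst this
      simp
    · have e := hsl q h.ne' s
      constructor
      · intro hq
        refine Or.inr ⟨h, ?_⟩
        by_contra hcon
        push Not at hcon
        rcases hq with hq | ⟨hq, hq'⟩ <;> nlinarith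
      · rintro (⟨hq, -⟩ | ⟨-, hq⟩)
        · linarith
        · rcases lt_or_eq_of_le hq with hq | hq
          · left; nlinarith
          · right; refine ⟨?_, h⟩; rw [hq, sub_self, mul_zero] at e; linarith
  let T : Finset ℝ := (univ.filter (fun q => q ≠ p)).image sl
  have hTne : T.Nonempty := by
    have : (univ.filter (fun q => x p < x q)).Nonempty := by rw [← Finset.card_pos]; omega
    obtain ⟨q, hq⟩ := this
    simp only [mem_filter, mem_univ, true_and] at hq
    refine ⟨sl q, mem_image_of_mem _ ?_⟩
    simp only [mem_filter, mem_univ, true_and]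
    rintro rfl; linarith
  have hT : ∀ q, x q ≠ x p → sl q ∈ T := by
    intro q hq
    refine mem_image_of_mem _ ?_
    simp only [mem_filter, mem_univ, true_and]
    rintro rfl; exact hq rfl
  have hne : (T.filter (fun s => m ≤ (M s).card)).Nonempty := by
    refine ⟨T.max' hTne, ?_⟩
    simp only [mem_filter]
    refine ⟨Finset.max'_mem _ _, h2.trans (Finset.card_le_card ?_)⟩
    intro q hq
    simp only [mem_filter, mem_univ, true_and] at hq
    rw [hM]
    exact Or.inr ⟨hq, Finset.le_max' _ _ (hT q hq.ne')⟩
  obtain ⟨s, hs, hmin⟩ := Finset.exists_min_image _ id hne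
  simp only [mem_filter, id] at hs hmin
  refine ⟨s, ?_, hs.2⟩
  change (N s).card < m
  by_contra hcon
  push Not at hcon
  rcases (T.filter (fun r => r < s)).eq_empty_or_nonempty with he | hne'
  · have : (N s).card ≤ (univ.filter (fun q => x q < x p)).card := by
      apply Finset.card_le_card
      intro q hq
      rw [hN] at hq
      simp only [mem_filter, mem_univ, true_and]
      rcases hq with hq | hq
      · exact hq.1
      · exfalso
        have : sl q ∈ T.filter (fun r => r < s) := mem_filter.2 ⟨hT q hq.1.ne', hq.2⟩
        rw [he] at this
        simp at this
    omega
  · obtain ⟨r, hr, hrmax⟩ := Finset.exists_max_image _ id hne'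
    simp only [mem_filter, id] at hr hrmax
    have : (N s).card ≤ (M r).card := by
      apply Finset.card_le_card
      intro q hq
      rw [hN] at hq
      rw [hM]
      rcases hq with hq | hq
      · exact Or.inl ⟨hq.1, by linarith [hr.2, hq.2]⟩
      · exact Or.inr ⟨hq.1, hrmax _ ⟨hT q hq.1.ne', hq.2⟩⟩
    have := hmin r ⟨hr.1, by omega⟩
    linarith [hr.2]

theorem Cr_tie {m : ℕ} {h : ι → ℝ} {c : ℝ} (hc : Cr m h c) : ∃ i j, i ≠ j ∧ h i = h j := by
  classical
  obtain ⟨h1, h2⟩ := hc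
  by_contra hcon
  push Not at hcon
  have hinj : Function.Injective h := by
    intro i j hij
    by_contra hne
    exact hcon i j hne hij
  have e : le h c ≤ lo h c + 1 := by
    have hs : univ.filter (fun i => h i ≤ c) =
        univ.filter (fun i => h i < c) ∪ univ.filter (fun i => h i = c) := by
      ext i
      simp only [mem_filter, mem_univ, true_and, mem_union]
      exact le_iff_lt_or_eq
    have h3 : (univ.filter (fun i => h i = c)).card ≤ 1 := by
      rw [Finset.card_le_one]
      intro a ha b hb
      simp only [mem_filter, mem_univ, true_and] at ha hb
      exact hinj (by rw [ha, hb])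
    have h4 := Finset.card_union_le (univ.filter (fun i => h i < c)) (univ.filter (fun i => h i = c))
    rw [← hs] at h4
    unfold le lo
    convert h4.trans (Nat.add_le_add_left h3 _) using 1
  omega

theorem lo_scale (h : ι → ℝ) (c k : ℝ) (hk : 0 < k) : lo (fun i => k * h i) (k * c) = lo h c := by
  classical
  unfold lo
  congr 1
  ext i
  simp only [mem_filter, mem_univ, true_and]
  exact mul_lt_mul_iff_right₀ hk

theorem le_scale (h : ι → ℝ) (c k : ℝ) (hk : 0 < k) : le (fun i => k * h i) (k * c) = le h c := by
  classical
  unfold le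
  congr 1
  ext i
  simp only [mem_filter, mem_univ, true_and]
  exact mul_le_mul_iff_right₀ hk

theorem lo_neg (h : ι → ℝ) (c : ℝ) : lo (fun i => - h i) (-c) + le h c = Fintype.card ι := by
  classical
  rw [← Finset.card_univ, ← Finset.card_filter_add_card_filter_not (s := univ) (fun i => h i ≤ c), add_comm]
  unfold le lo
  congr 2
  ext i
  simp

theorem le_neg (h : ι → ℝ) (c : ℝ) : le (fun i => - h i) (-c) + lo h c = Fintype.card ι := by
  classical
  rw [← Finset.card_univ, ← Finset.card_filter_add_card_filter_not (s := univ) (fun i => h i < c), add_comm]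
  unfold le lo
  congr 2
  ext i
  simp

theorem Cr_scale {m : ℕ} {h : ι → ℝ} {k : ℝ} (hk : 0 < k) (hc : ∃ c, Cr m (fun i => k * h i) c) :
    ∃ c, Cr m h c := by
  obtain ⟨c, hc⟩ := hc
  refine ⟨c / k, ?_⟩
  have e : c = k * (c / k) := by field_simp
  rw [e] at hc
  unfold Cr at hc ⊢
  rwa [lo_scale h _ k hk, le_scale h _ k hk] at hc

theorem Cr_neg {m : ℕ} (hn : Fintype.card ι = 2 * m) {h : ι → ℝ} {c : ℝ} (hc : Cr m h c) :
    Cr m (fun i => - h i) (-c) := by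
  have h1 := lo_neg h c
  have h2 := le_neg h c
  unfold Cr at *
  omega

theorem core {m : ℕ} (hm : 1 ≤ m) (hn : Fintype.card ι = 2 * m) (x y : ι → ℝ)
    (hx : Function.Injective x) (hncol : ¬ ∃ s c, ∀ i, y i - s * x i = c) :
    ∃ S : Finset ℝ, 2 * m ≤ S.card ∧ ∀ s ∈ S, ∃ i j, i ≠ j ∧ y i - s * x i = y j - s * x j := by
  classical
  let H : ℝ → ι → ℝ := fun s i => y i - s * x i
  let S : Finset ℝ := (univ : Finset ι).offDiag.image (fun e => (y e.1 - y e.2) / (x e.1 - x e.2))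
  have hS : ∀ s, s ∈ S ↔ ∃ i j, i ≠ j ∧ H s i = H s j := by
    intro s
    simp only [S, mem_image, mem_offDiag, mem_univ, true_and, Prod.exists, H]
    constructor
    · rintro ⟨i, j, hij, rfl⟩
      refine ⟨i, j, hij, ?_⟩
      have : x i - x j ≠ 0 := sub_ne_zero.2 (fun h => hij (hx h))
      field_simp
      ring
    · rintro ⟨i, j, hij, he⟩
      refine ⟨i, j, hij, ?_⟩
      have : x i - x j ≠ 0 := sub_ne_zero.2 (fun h => hij (hx h))
      rw [div_eq_iff this]
      linarith
  refine ⟨S, ?_, fun s hs => (hS s).1 hs⟩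
  have hlev : ∀ s, ∃ c, (∃ c', Cr m (H s) c') → Cr m (H s) c := by
    intro s
    by_cases h : ∃ c', Cr m (H s) c'
    · obtain ⟨c, hc⟩ := h; exact ⟨c, fun _ => hc⟩
    · exact ⟨0, fun h' => absurd h' h⟩
  choose lev hlev using hlev
  let d : ℝ → ℕ := fun s => min (m - lo (H s) (lev s)) (le (H s) (lev s) - m)
  let C := S.filter (fun s => ∃ c, Cr m (H s) c)
  have hCmem : ∀ s, (∃ c, Cr m (H s) c) → s ∈ C := by
    intro s hs
    refine mem_filter.2 ⟨?_, hs⟩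
    obtain ⟨c, hc⟩ := hs
    exact (hS s).2 (Cr_tie hc)
  have hClev : ∀ s ∈ C, Cr m (H s) (lev s) := fun s hs => hlev s (mem_filter.1 hs).2
  have hxnc : ∀ k : ℝ, k ≠ 0 → ∀ c, ¬ Cr m (fun i => k * x i) c := by
    intro k hk c hc
    obtain ⟨i, j, hij, he⟩ := Cr_tie hc
    exact hij (hx (mul_left_cancel₀ hk he))
  have hxnc1 : ∀ c, ¬ Cr m x c := by
    intro c hc
    obtain ⟨i, j, hij, he⟩ := Cr_tie hc
    exact hij (hx he)
  -- every point crosses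
  have hsum : m ≤ ∑ s ∈ C, d s := by
    obtain ⟨A, hAm, hA⟩ := sep_exists hm (by omega) x hxnc1
    have hlv : ∀ p : ι, ∃ s : ℝ, p ∈ A → (univ.filter (fun q => y q - s * x q < y p - s * x p ∨
        (y q - s * x q = y p - s * x p ∧ x q < x p))).card < m ∧
      m ≤ (univ.filter (fun q => y q - s * x q < y p - s * x p ∨
        (y q - s * x q = y p - s * x p ∧ x p < x q))).card := by
      intro p
      by_cases hp : p ∈ A
      · obtain ⟨s, hs⟩ := leave hm x y hx p (by
          rw [← hAm]
          apply Finset.card_lt_card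
          rw [Finset.ssubset_iff_of_subset]
          · exact ⟨p, hp, by simp⟩
          · intro q hq
            simp only [mem_filter, mem_univ, true_and] at hq
            by_contra hqA
            have := hA p hp q hqA
            linarith) (by
          have : Aᶜ.card = m := by rw [Finset.card_compl]; omega
          rw [← this]
          apply Finset.card_le_card
          intro q hq
          simp only [mem_filter, mem_univ, true_and, mem_compl] at hq ⊢
          exact hA p hp q hq)
        exact ⟨s, fun _ => hs⟩
      · exact ⟨0, fun h => absurd h hp⟩
    choose σ hσ using hlv
    -- facts about the level
    have hcrs : ∀ p ∈ A, Cr m (H (σ p)) (H (σ p) p) := by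
      intro p hp
      obtain ⟨h1, h2⟩ := hσ p hp
      constructor
      · refine lt_of_le_of_lt ?_ h1
        unfold lo
        apply Finset.card_le_card
        intro q hq
        simp only [mem_filter, mem_univ, true_and, H] at hq ⊢
        exact Or.inl hq
      · refine lt_of_le_of_lt h2 ?_
        unfold le
        apply Finset.card_lt_card
        rw [Finset.ssubset_iff_of_subset]
        · exact ⟨p, by simp, by simp⟩
        · intro q hq
          simp only [mem_filter, mem_univ, true_and, H] at hq ⊢
          rcases hq with hq | hq
          · exact hq.le
          · exact hq.1.le
    have hmaps : ∀ p ∈ A, σ p ∈ C := fun p hp => hCmem _ ⟨_, hcrs p hp⟩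
    have hAlev : ∀ p ∈ A, H (σ p) p = lev (σ p) := fun p hp =>
      Cr_unique (hcrs p hp) (hClev _ (hmaps p hp))
    rw [← hAm, Finset.card_eq_sum_card_fiberwise hmaps]
    apply Finset.sum_le_sum
    intro s hs
    have hcs := hClev s hs
    set F := A.filter (fun p => σ p = s) with hF
    rcases F.eq_empty_or_nonempty with hFe | hFne
    · rw [hFe]; simp
    apply le_min
    · -- largest x in the fiber
      obtain ⟨p, hp, hpmax⟩ := Finset.exists_max_image F x hFne
      have hp' := mem_filter.1 hp
      obtain ⟨h1, h2⟩ := hσ p hp'.1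
      rw [hp'.2] at h1
      have hlp := hAlev p hp'.1
      rw [hp'.2] at hlp
      have hsub : univ.filter (fun q => H s q < lev s) ∪ F.erase p ⊆
          univ.filter (fun q => y q - s * x q < y p - s * x p ∨
            (y q - s * x q = y p - s * x p ∧ x q < x p)) := by
        intro q hq
        simp only [mem_union, mem_filter, mem_univ, true_and, mem_erase] at hq ⊢
        rcases hq with hq | ⟨hqp, hqF⟩
        · left; rw [← hlp] at hq; exact hq
        · right
          have hq' := mem_filter.1 hqF
          have hlq := hAlev q hq'.1
          rw [hq'.2] at hlq
          refine ⟨hlq.trans hlp.symm, lt_of_le_of_ne (hpmax q hqF) fun h => hqp (hx h)⟩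
      have hc := Finset.card_le_card hsub
      rw [Finset.card_union_of_disjoint, Finset.card_erase_of_mem hp] at hc
      · have hlo : lo (H s) (lev s) = (univ.filter (fun q => H s q < lev s)).card := by
          unfold lo; congr
        have : 0 < F.card := Finset.card_pos.2 hFne
        omega
      · rw [Finset.disjoint_left]
        intro q hq hq2
        simp only [mem_filter, mem_univ, true_and] at hq
        have hq' := mem_filter.1 (mem_of_mem_erase hq2)
        have hlq := hAlev q hq'.1
        rw [hq'.2] at hlq
        linarith
    · -- smallest bound from above
      obtain ⟨p, hp, hpmax⟩ := Finset.exists_max_image F x hFne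
      have hp' := mem_filter.1 hp
      obtain ⟨h1, h2⟩ := hσ p hp'.1
      rw [hp'.2] at h2
      have hlp := hAlev p hp'.1
      rw [hp'.2] at hlp
      have hsub : univ.filter (fun q => y q - s * x q < y p - s * x p ∨
            (y q - s * x q = y p - s * x p ∧ x p < x q)) ∪ F ⊆
            univ.filter (fun q => H s q ≤ lev s) := by
        intro q hq
        simp only [mem_union, mem_filter, mem_univ, true_and] at hq ⊢
        rw [← hlp]
        rcases hq with (hq | hq) | hqF
        · exact le_of_lt hq
        · exact le_of_eq hq.1
        · have hq' := mem_filter.1 hqF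
          have hlq := hAlev q hq'.1
          rw [hq'.2] at hlq
          exact (hlq.trans hlp.symm).le
      have hc := Finset.card_le_card hsub
      rw [Finset.card_union_of_disjoint] at hc
      · have hle : le (H s) (lev s) = (univ.filter (fun q => H s q ≤ lev s)).card := by
          unfold le; congr
        omega
      · rw [Finset.disjoint_left]
        intro q hq hqF
        simp only [mem_filter, mem_univ, true_and] at hq
        have hq' := mem_filter.1 hqF
        have hlq := hAlev q hq'.1
        rw [hq'.2] at hlq
        have hqx := hpmax q hqF
        have e : y q - s * x q = y p - s * x p := hlq.trans hlp.symm
        rcases hq with hq | hq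
        · linarith
        · linarith [hq.2]
  have hCne : C.Nonempty := by
    rw [Finset.nonempty_iff_ne_empty]
    intro h
    rw [h] at hsum
    simp at hsum
    omega
  have hHinj : ∀ s s', s ≠ s' → ∀ i j, H s i = H s j → H s' i = H s' j → i = j := by
    intro s s' hss i j h1 h2
    apply hx
    simp only [H] at h1 h2
    have : (s - s') * (x i - x j) = 0 := by linarith
    rcases mul_eq_zero.1 this with h | h
    · exact absurd (sub_eq_zero.1 h) hss
    · exact sub_eq_zero.1 h
  -- interior gaps
  have hgap : ∀ s ∈ C, ∀ s' ∈ C, s < s' → (∀ r ∈ C, ¬ (s < r ∧ r < s')) →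
      d s + d s' ≤ (S.filter (fun r => s < r ∧ r < s')).card + 1 := by
    intro s hs s' hs' hss hno
    have hcomb : ∀ β : ℝ, 0 < β → ∀ i, H s i + β * H s' i =
        (1 + β) * H ((s + β * s') / (1 + β)) i := by
      intro β hβ i
      simp only [H]
      field_simp
      ring
    have hbetw : ∀ β : ℝ, 0 < β → s < (s + β * s') / (1 + β) ∧ (s + β * s') / (1 + β) < s' := by
      intro β hβ
      have h1 : 0 < 1 + β := by linarith
      constructor
      · rw [lt_div_iff₀ h1]; nlinarith
      · rw [div_lt_iff₀ h1]; nlinarith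
    obtain ⟨D, hD, hDc⟩ := gap hm (by omega) (H s) (H s') (hHinj s s' hss.ne) (by
      intro β hβ c hc
      have e : (fun i => H s i + β * H s' i) =
        fun i => (1 + β) * H ((s + β * s') / (1 + β)) i := funext (hcomb β hβ)
      rw [e] at hc
      exact hno _ (hCmem _ (Cr_scale (by linarith) ⟨c, hc⟩)) (hbetw β hβ)) (hClev s hs) (hClev s' hs')
    refine hDc.trans (Nat.add_le_add_right ?_ 1)
    apply Finset.card_le_card_of_injOn (fun β => (s + β * s') / (1 + β))
    · intro β hβ
      obtain ⟨hβ0, i, j, hij, he⟩ := hD β hβ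
      simp only [coe_filter, Set.mem_ofPred_eq]
      refine ⟨(hS _).2 ⟨i, j, hij, ?_⟩, hbetw β hβ0⟩
      rw [hcomb β hβ0, hcomb β hβ0] at he
      exact mul_left_cancel₀ (by linarith) he
    · intro β hβ γ hγ he
      have h1 := (hD β hβ).1
      have h2 := (hD γ hγ).1
      simp only at he
      rw [div_eq_div_iff (by linarith) (by linarith)] at he
      have : (β - γ) * (s' - s) = 0 := by linarith
      rcases mul_eq_zero.1 this with h | h <;> linarith
  have htot := sum_gaps S d C (filter_subset _ _) hCne hgap
  set a := C.min' hCne with ha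
  set b := C.max' hCne with hb
  have haC : a ∈ C := Finset.min'_mem _ _
  have hbC : b ∈ C := Finset.max'_mem _ _
  have hab : a < b := by
    rcases lt_or_eq_of_le (Finset.min'_le C b hbC) with h | h
    · exact h
    · exfalso
      have hCs : C = {a} := by
        apply Finset.eq_singleton_iff_unique_mem.2
        refine ⟨haC, fun r hr => le_antisymm ?_ (Finset.min'_le _ _ hr)⟩
        have := Finset.le_max' C r hr
        rw [← hb, ← h] at this
        exact this
      rw [hCs, Finset.sum_singleton] at hsum
      have hd1 : d a ≤ m - lo (H a) (lev a) := min_le_left _ _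
      have hd2 : d a ≤ le (H a) (lev a) - m := min_le_right _ _
      have hl : lo (H a) (lev a) = 0 := by omega
      have hl2 : Fintype.card ι ≤ le (H a) (lev a) := by omega
      apply hncol
      refine ⟨a, lev a, fun i => le_antisymm ?_ ?_⟩
      · unfold le at hl2
        have := Finset.eq_univ_of_card _ (le_antisymm (Finset.card_le_univ _) hl2)
        have hi := Finset.mem_univ i
        rw [← this] at hi
        exact (Finset.mem_filter.1 hi).2
      · unfold lo at hl
        rw [Finset.card_eq_zero, Finset.filter_eq_empty_iff] at hl
        exact not_lt.1 (hl (Finset.mem_univ i))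
  -- wrap around
  have hwrap : d b + d a ≤ (S.filter (fun r => ¬ (a ≤ r ∧ r ≤ b))).card + 1 := by
    have hcomb : ∀ β : ℝ, β ≠ 1 → ∀ i, H b i + β * (- H a i) =
        (1 - β) * H ((b - β * a) / (1 - β)) i := by
      intro β hβ i
      have : 1 - β ≠ 0 := sub_ne_zero.2 (Ne.symm hβ)
      simp only [H]
      field_simp
      ring
    have hcomb1 : ∀ i, H b i + 1 * (- H a i) = (a - b) * x i := by
      intro i
      simp only [H]
      ring
    have hbetw : ∀ β : ℝ, 0 < β → β ≠ 1 → ¬ (a ≤ (b - β * a) / (1 - β) ∧ (b - β * a) / (1 - β) ≤ b) := by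
      rintro β hβ hβ1 ⟨h1, h2⟩
      rcases lt_or_gt_of_ne hβ1 with h | h
      · rw [div_le_iff₀ (by linarith)] at h2; nlinarith
      · rw [le_div_iff_of_neg (by linarith)] at h1; nlinarith
    obtain ⟨D, hD, hDc⟩ := gap hm (by omega) (H b) (fun i => - H a i)
      (fun i j h1 h2 => hHinj b a hab.ne' i j h1 (neg_injective h2)) (by
      intro β hβ c hc
      by_cases hβ1 : β = 1
      · subst hβ1
        have e : (fun i => H b i + 1 * (- H a i)) = fun i => (a - b) * x i := funext hcomb1
        rw [e] at hc
        exact hxnc _ (by linarith) c hc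
      · have hmemC : (b - β * a) / (1 - β) ∈ C := by
          have e : (fun i => H b i + β * (- H a i)) =
            fun i => (1 - β) * H ((b - β * a) / (1 - β)) i := funext (hcomb β hβ1)
          rw [e] at hc
          apply hCmem
          rcases lt_or_gt_of_ne hβ1 with h | h
          · exact Cr_scale (by linarith) ⟨c, hc⟩
          · have hc2 := Cr_neg hn hc
            refine Cr_scale (k := β - 1) (by linarith) ⟨-c, ?_⟩
            convert hc2 using 2
            ring
        exact hbetw β hβ hβ1 ⟨Finset.min'_le _ _ hmemC, Finset.le_max' _ _ hmemC⟩)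
      (hClev b hbC) (Cr_neg hn (hClev a haC))
    have hda : d a ≤ min (m - lo (fun i => - H a i) (- lev a)) (le (fun i => - H a i) (- lev a) - m) := by
      have h1 := lo_neg (H a) (lev a)
      have h2 := le_neg (H a) (lev a)
      simp only [d]
      omega
    refine (Nat.add_le_add_left hda _).trans (hDc.trans (Nat.add_le_add_right ?_ 1))
    have hD1 : ∀ β ∈ D, β ≠ 1 := by
      rintro β hβ rfl
      obtain ⟨-, i, j, hij, he⟩ := hD 1 hβ
      rw [hcomb1, hcomb1] at he
      exact hij (hx (mul_left_cancel₀ (by linarith) he))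
    apply Finset.card_le_card_of_injOn (fun β => (b - β * a) / (1 - β))
    · intro β hβ
      obtain ⟨hβ0, i, j, hij, he⟩ := hD β hβ
      have hβ1 := hD1 β hβ
      simp only [coe_filter, Set.mem_ofPred_eq]
      refine ⟨(hS _).2 ⟨i, j, hij, ?_⟩, hbetw β hβ0 hβ1⟩
      rw [hcomb β hβ1, hcomb β hβ1] at he
      exact mul_left_cancel₀ (sub_ne_zero.2 (Ne.symm hβ1)) he
    · intro β hβ γ hγ he
      have h1 := sub_ne_zero.2 (Ne.symm (hD1 β hβ))
      have h2 := sub_ne_zero.2 (Ne.symm (hD1 γ hγ))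
      simp only at he
      rw [div_eq_div_iff h1 h2] at he
      have : (β - γ) * (b - a) = 0 := by linarith
      rcases mul_eq_zero.1 this with h | h <;> linarith
  have hsplit := Finset.card_filter_add_card_filter_not (s := S) (fun r => a ≤ r ∧ r ≤ b)
  omega

/-- pairs of distinct points of `P` with pairwise non-parallel differences -/
def Good {d : ℕ} (P : Finset (Fin d → ℝ)) (S : Finset ((Fin d → ℝ) × (Fin d → ℝ))) : Prop :=
  (∀ e ∈ S, e.1 ∈ P ∧ e.2 ∈ P ∧ e.1 ≠ e.2) ∧
      (∀ e₁ ∈ S, ∀ e₂ ∈ S, e₁ ≠ e₂ →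
        ∀ c : ℝ, e₂.2 - e₂.1 ≠ c • (e₁.2 - e₁.1))

theorem even_case {d m : ℕ} (P : Finset (Fin d → ℝ)) (hP : P.card = 2 * m)
    (hcol : ¬ Collinear ℝ (P : Set (Fin d → ℝ))) : ∃ S, 2 * m ≤ S.card ∧ Good P S := by
  classical
  have hm : 1 ≤ m := by
    by_contra h
    have : P = ∅ := by rw [← Finset.card_eq_zero]; omega
    subst this
    exact hcol (by simpa using collinear_empty ℝ (Fin d → ℝ))
  obtain ⟨X, hX⟩ := Module.exists_dual_forall_apply_ne_zero (K := ℝ)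
    (fun e : {e : P × P // e.1 ≠ e.2} => (e.1.1 : Fin d → ℝ) - e.1.2)
    (fun e => sub_ne_zero.2 (fun h => e.2 (Subtype.ext h)))
  have hXinj : Function.Injective (fun p : P => X p) := by
    intro p q hpq
    by_contra hne
    apply hX ⟨(p, q), hne⟩
    simp only [map_sub]
    exact sub_eq_zero.2 hpq
  have hy : ∃ k : Fin d, ¬ ∃ s c, ∀ p : P, (p : Fin d → ℝ) k - s * X p = c := by
    by_contra hcon
    push Not at hcon
    choose s c hsc using hcon
    apply hcol
    rw [collinear_iff_exists_forall_eq_smul_vadd]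
    refine ⟨c, s, fun p hp => ⟨X p, ?_⟩⟩
    ext k
    have := hsc k ⟨p, hp⟩
    simp only [vadd_eq_add, Pi.add_apply, Pi.smul_apply, smul_eq_mul]
    simp only at this
    linarith
  obtain ⟨k, hk⟩ := hy
  obtain ⟨S, hSc, hS⟩ := core (ι := P) hm (by simpa using hP) (fun p => X p) (fun p => p.1 k) hXinj hk
  have : Nonempty P := by
    obtain ⟨p, hp⟩ : P.Nonempty := by rw [← Finset.card_pos]; omega
    exact ⟨⟨p, hp⟩⟩
  choose! i j hij using hS
  have hpar : ∀ s ∈ S, ∀ t ∈ S, ∀ c : ℝ,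
      ((j t : Fin d → ℝ) - i t) = c • ((j s : Fin d → ℝ) - i s) → s = t := by
    intro s hs t ht c he
    obtain ⟨n1, e1⟩ := hij s hs
    obtain ⟨n2, e2⟩ := hij t ht
    have hk := congrFun he k
    have hXe := congrArg X he
    simp only [map_sub, map_smul, smul_eq_mul, Pi.sub_apply, Pi.smul_apply] at hk hXe
    have hne : X (j t) - X (i t) ≠ 0 := sub_ne_zero.2 fun h => n2 (hXinj h.symm)
    apply mul_right_cancel₀ hne
    have : s * (X (j t) - X (i t)) = c * (s * (X (j s) - X (i s))) := by rw [hXe]; ring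
    rw [this, show s * (X (j s) - X (i s)) = (j s).1 k - (i s).1 k by linarith, ← hk]
    linarith
  refine ⟨S.image (fun s => ((i s : Fin d → ℝ), (j s : Fin d → ℝ))), ?_, ?_, ?_⟩
  · rw [Finset.card_image_of_injOn]
    · exact hSc
    · intro s hs t ht he
      simp only [Prod.mk.injEq] at he
      exact hpar s hs t ht 1 (by rw [he.1, he.2, one_smul])
  · intro e he
    obtain ⟨s, hs, rfl⟩ := Finset.mem_image.1 he
    exact ⟨(i s).2, (j s).2, fun h => (hij s hs).1 (Subtype.ext h)⟩
  · intro e he e' he' hne c hc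
    obtain ⟨s, hs, rfl⟩ := Finset.mem_image.1 he
    obtain ⟨t, ht, rfl⟩ := Finset.mem_image.1 he'
    have := hpar s hs t ht c hc
    subst this
    exact hne rfl

theorem near_pencil {d : ℕ} (P : Finset (Fin d → ℝ)) (q : Fin d → ℝ) (hq : q ∈ P)
    (hcol : ¬ Collinear ℝ (P : Set (Fin d → ℝ)))
    (hcol' : Collinear ℝ ((P.erase q : Finset (Fin d → ℝ)) : Set (Fin d → ℝ))) :
    ∃ S, P.card - 1 ≤ S.card ∧ Good P S := by
  classical
  refine ⟨(P.erase q).image (fun p => (q, p)), ?_, ?_, ?_⟩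
  · rw [Finset.card_image_of_injective _ (Prod.mk_right_injective q), Finset.card_erase_of_mem hq]
  · intro e he
    obtain ⟨p, hp, rfl⟩ := Finset.mem_image.1 he
    exact ⟨hq, Finset.mem_of_mem_erase hp, (Finset.ne_of_mem_erase hp).symm⟩
  · intro e he e' he' hne c hc
    obtain ⟨p, hp, rfl⟩ := Finset.mem_image.1 he
    obtain ⟨r, hr, rfl⟩ := Finset.mem_image.1 he'
    simp only at hc
    have hc1 : c ≠ 1 := by
      rintro rfl
      rw [one_smul] at hc
      exact hne (by rw [sub_left_injective hc])
    have hc1' : 1 - c ≠ 0 := sub_ne_zero.2 (Ne.symm hc1)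
    apply hcol
    have hqs : q ∈ affineSpan ℝ ((P.erase q : Finset (Fin d → ℝ)) : Set (Fin d → ℝ)) := by
      have e : q = AffineMap.lineMap p r (1 / (1 - c)) := by
        ext k
        have := congrFun hc k
        simp only [Pi.sub_apply, Pi.smul_apply, smul_eq_mul] at this
        simp only [AffineMap.lineMap_apply, vsub_eq_sub, vadd_eq_add, Pi.add_apply, Pi.smul_apply,
          Pi.sub_apply, smul_eq_mul]
        field_simp
        linarith
      have hmem := AffineMap.lineMap_mem (1 / (1 - c))
        (subset_affineSpan ℝ ((P.erase q : Finset (Fin d → ℝ)) : Set (Fin d → ℝ)) hp)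
        (subset_affineSpan ℝ ((P.erase q : Finset (Fin d → ℝ)) : Set (Fin d → ℝ)) hr)
      rwa [← e] at hmem
    have := (collinear_insert_iff_of_mem_affineSpan hqs).2 hcol'
    rwa [← Finset.coe_insert, Finset.insert_erase hq] at this

theorem all_cases {d : ℕ} (P : Finset (Fin d → ℝ))
    (hcol : ¬ Collinear ℝ (P : Set (Fin d → ℝ))) : ∃ S, P.card - 1 ≤ S.card ∧ Good P S := by
  classical
  rcases Nat.even_or_odd' P.card with ⟨m, hm | hm⟩
  · obtain ⟨S, h1, h2⟩ := even_case P hm hcol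
    exact ⟨S, by omega, h2⟩
  · obtain ⟨q, hq⟩ : P.Nonempty := by rw [← Finset.card_pos]; omega
    by_cases hc : Collinear ℝ ((P.erase q : Finset (Fin d → ℝ)) : Set (Fin d → ℝ))
    · exact near_pencil P q hq hcol hc
    · obtain ⟨S, h1, h2, h3⟩ := even_case (m := m) (P.erase q)
        (by rw [Finset.card_erase_of_mem hq]; omega) hc
      exact ⟨S, by omega, fun e he => ⟨Finset.mem_of_mem_erase (h2 e he).1,
        Finset.mem_of_mem_erase (h2 e he).2.1, (h2 e he).2.2⟩, h3⟩

theorem not_collinear_of_span {d : ℕ} (hd : 2 ≤ d) (P : Set (Fin d → ℝ))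
    (hspan : affineSpan ℝ P = ⊤) : ¬ Collinear ℝ P := by
  intro h
  have h1 := h.finrank_le_one
  rw [← direction_affineSpan, hspan, AffineSubspace.direction_top, finrank_top] at h1
  simp at h1
  omega

end Ungar

/-- For every integer `d ≥ 2`, any finite set `P` of `n` points in `ℝ^d` whose
affine span is all of `ℝ^d` determines at least `n − 1` lines with pairwise
distinct directions: there is a finite set `S` of at least `n − 1` ordered pairs
of distinct points of `P` whose difference vectors are pairwise non-parallel.
(This follows from Ungar's theorem by projection.) -/
theorem distinct_directions_at_least_n_sub_one (d n : ℕ) (hd : 2 ≤ d)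
    (P : Finset (Fin d → ℝ)) (hcard : P.card = n)
    (hspan : affineSpan ℝ (P : Set (Fin d → ℝ)) = ⊤) :
    ∃ S : Finset ((Fin d → ℝ) × (Fin d → ℝ)),
      n - 1 ≤ S.card ∧
      (∀ e ∈ S, e.1 ∈ P ∧ e.2 ∈ P ∧ e.1 ≠ e.2) ∧
      (∀ e₁ ∈ S, ∀ e₂ ∈ S, e₁ ≠ e₂ →
        ∀ c : ℝ, e₂.2 - e₂.1 ≠ c • (e₁.2 - e₁.1)) := by
  subst hcard
  obtain ⟨S, h1, h2, h3⟩ := Ungar.all_cases P (Ungar.not_collinear_of_span hd _ hspan)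
  exact ⟨S, h1, h2, h3⟩
end
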